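/- An integer c has at least two representations of the form F_n - T_m with integers n ≥ 2 and m ≥ 2 (i.e., there exist pairs (n,m) ≠ (n₁,m₁) with n, n₁, m, m₁ ≥ 2 and c = F_n - T_m = F_{n₁} - T_{m₁}) if and only if c belongs to the set {0, 1, -1, -2, -3, 4, -5, 6, 8, -10, 11, -11, -22, -23, -41, -60, -271}. -/

import Mathlib

/-- The Tribonacci sequence: T 0 = 0, T 1 = T 2 = 1,
    T (k+3) = T (k+2) + T (k+1) + T k. -/
def trib : ℕ → ℤ
  | 0 => 0
  | 1 => 1
  | 2 => 1
  | n + 3 => trib (n + 2) + trib (n + 1) + trib n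


section
open MeasureTheory

def IsJet (F : ℕ → ℝ → ℝ) : Prop := ∀ i x, HasDerivAt (F i) (F (i+1) x) x

noncomputable def DJ (a : ℝ) (F : ℕ → ℝ → ℝ) : ℕ → ℝ → ℝ :=
  fun i x => ∫ t in (0:ℝ)..1, t^i * F (i+1) (a + t*(x-a))

theorem IsJet.cont {F} (hF : IsJet F) (i : ℕ) : Continuous (F i) :=
  continuous_iff_continuousAt.2 fun x => (hF i x).continuousAt

theorem IsJet.DJ {F} (hF : IsJet F) (a : ℝ) : IsJet (DJ a F) := by
  intro i x
  have hc : ∀ j x, Continuous (fun t : ℝ => t^j * F (j+1) (a + t*(x-a))) := by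
    intro j x
    have := hF.cont (j+1)
    fun_prop
  have hc2 : Continuous (fun z : ℝ × ℝ => z.2^(i+1) * F (i+2) (a + z.2*(z.1-a))) := by
    have := hF.cont (i+2)
    fun_prop
  obtain ⟨C, hC⟩ := ((isCompact_Icc (a := x-1) (b := x+1)).prod
    (isCompact_Icc (a := (0:ℝ)) (b := 1))).exists_bound_of_continuousOn hc2.continuousOn
  refine (intervalIntegral.hasDerivAt_integral_of_dominated_loc_of_deriv_le (μ := volume)
    (F := fun x t => t^i * F (i+1) (a + t*(x-a)))
    (F' := fun x t => t^(i+1) * F (i+2) (a + t*(x-a)))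
    (s := Set.Ioo (x-1) (x+1)) (bound := fun _ => C) ?_ ?_ ?_ ?_ ?_ ?_ ?_).2
  · exact Ioo_mem_nhds (by linarith) (by linarith)
  · exact Filter.Eventually.of_forall fun y => (hc i y).aestronglyMeasurable
  · exact (hc i x).intervalIntegrable _ _
  · exact (hc (i+1) x).aestronglyMeasurable
  · refine Filter.Eventually.of_forall fun t ht y hy => ?_
    rw [Set.uIoc_of_le zero_le_one] at ht
    exact hC (y, t) ⟨⟨hy.1.le, hy.2.le⟩, ⟨ht.1.le, ht.2⟩⟩
  · simp
  · refine Filter.Eventually.of_forall fun t ht y hy => ?_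
    have h1 : HasDerivAt (fun y => a + t*(y-a)) t y := by
      simpa using (((hasDerivAt_id y).sub_const a).const_mul t).const_add a
    have := ((hF (i+1) (a + t*(y-a))).comp y h1).const_mul (t^i)
    have h2 : t^(i+1) * F (i+2) (a + t*(y-a)) = t^i * (F (i+1+1) (a + t*(y-a)) * t) := by ring
    rw [h2]
    exact this

theorem DJ_bound {F} (hF : IsJet F) {a R M : ℝ} (i : ℕ) (ha : 0 ≤ a ∧ a ≤ R)
    (hM : ∀ x, 0 ≤ x → x ≤ R → |F (i+1) x| ≤ M) (x : ℝ) (hx : 0 ≤ x) (hx' : x ≤ R) :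
    |DJ a F i x| ≤ M / (i+1) := by
  have hc : Continuous (fun t : ℝ => t^i * F (i+1) (a + t*(x-a))) := by
    have := hF.cont (i+1)
    fun_prop
  have h1 : ‖∫ t in (0:ℝ)..1, t^i * F (i+1) (a + t*(x-a))‖ ≤ ∫ t in (0:ℝ)..1, t^i * M := by
    refine intervalIntegral.norm_integral_le_of_norm_le zero_le_one ?_ ?_
    · refine Filter.Eventually.of_forall fun t ht => ?_
      rw [norm_mul, Real.norm_eq_abs, Real.norm_eq_abs, abs_of_nonneg (pow_nonneg ht.1.le _)]
      refine mul_le_mul_of_nonneg_left (hM _ ?_ ?_) (pow_nonneg ht.1.le _)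
      · nlinarith [ht.1, ht.2]
      · nlinarith [ht.1, ht.2]
    · exact (by fun_prop : Continuous (fun t : ℝ => t^i * M)).intervalIntegrable _ _
  rw [Real.norm_eq_abs] at h1
  refine h1.trans (le_of_eq ?_)
  rw [intervalIntegral.integral_mul_const, integral_pow]
  simp
  ring

theorem DJ_zero {F} (hF : IsJet F) (a x : ℝ) : F 0 x = F 0 a + (x-a) * DJ a F 0 x := by
  have h : ∀ t ∈ Set.uIcc (0:ℝ) 1, HasDerivAt (fun t => F 0 (a + t*(x-a)))
      (F 1 (a + t*(x-a)) * (x-a)) t := by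
    intro t _
    have h1 : HasDerivAt (fun t => a + t*(x-a)) (x-a) t := by
      simpa using (((hasDerivAt_id t).mul_const (x-a))).const_add a
    exact (hF 0 (a + t*(x-a))).comp t h1
  have := intervalIntegral.integral_eq_sub_of_hasDerivAt h (by
    apply Continuous.intervalIntegrable
    have := hF.cont 1
    fun_prop)
  simp only [intervalIntegral.integral_mul_const] at this
  simp only [DJ, pow_zero, one_mul, zero_add]
  simp at this
  linarith

theorem DJ_succ {F} (hF : IsJet F) (a x : ℝ) (t : ℕ) :
    F (t+1) x = (x-a) * DJ a F (t+1) x + (t+1) * DJ a F t x := by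
  induction t generalizing x with
  | zero =>
    have h1 : HasDerivAt (fun x => F 0 a + (x-a) * DJ a F 0 x)
        (1 * DJ a F 0 x + (x-a) * DJ a F 1 x) x := by
      exact (((hasDerivAt_id x).sub_const a).mul (hF.DJ a 0 x)).const_add _
    have h2 : (fun x => F 0 a + (x-a) * DJ a F 0 x) = F 0 := by
      funext y; exact (DJ_zero hF a y).symm
    rw [h2] at h1
    have := (hF 0 x).unique h1
    simp at this ⊢
    linarith
  | succ t ih =>
    have h1 : HasDerivAt (fun x => (x-a) * DJ a F (t+1) x + (t+1) * DJ a F t x)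
        ((1 * DJ a F (t+1) x + (x-a) * DJ a F (t+2) x) + (t+1) * DJ a F (t+1) x) x := by
      exact ((((hasDerivAt_id x).sub_const a).mul (hF.DJ a (t+1) x))).add
        ((hF.DJ a t x).const_mul _)
    have h2 : (fun x => (x-a) * DJ a F (t+1) x + (t+1) * DJ a F t x) = F (t+1) := by
      funext y; exact (ih y).symm
    rw [h2] at h1
    have := (hF (t+1) x).unique h1
    push_cast
    linarith

theorem hermite_bound (S h : ℕ) (R : ℝ) (hR : 1 ≤ R) (hhR : (h:ℝ) ≤ R) :
    ∀ (N : ℕ) (c : ℕ → ℕ) (F : ℕ → ℝ → ℝ) (M δ : ℝ), IsJet F →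
    (∑ l ∈ Finset.range h, c l = N) → (∀ l, c l ≤ S) →
    (∀ x, 0 ≤ x → x ≤ R → |F N x| ≤ M) → 0 ≤ δ →
    (∀ l < h, ∀ t < c l, |F t l| ≤ δ * t.factorial) →
    ∀ x, 0 ≤ x → x ≤ R → |F 0 x| ≤ M * (R^N / N.factorial) + δ * (2*R*(S+1))^N := by
  intro N
  induction N with
  | zero =>
    intro c F M δ hF hc hS hM hδ hv x hx hx'
    simpa using (hM x hx hx').trans (by linarith)
  | succ N ih =>
    intro c F M δ hF hc hS hM hδ hv x hx hx'
    obtain ⟨a, ha, hca⟩ : ∃ a ∈ Finset.range h, c a ≠ 0 := by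
      by_contra! hcon
      rw [Finset.sum_eq_zero hcon] at hc
      omega
    rw [Finset.mem_range] at ha
    have haR : (0:ℝ) ≤ a ∧ (a:ℝ) ≤ R := ⟨by positivity, by
      have : (a:ℝ) ≤ h := by exact_mod_cast ha.le
      linarith⟩
    have hFa : |F 0 a| ≤ δ := by simpa using hv a ha 0 (by omega)
    have hS1 : 1 ≤ S := by have := hS a; omega
    have hS1' : (1:ℝ) ≤ S := by exact_mod_cast hS1
    have key := ih (Function.update c a (c a - 1)) (DJ a F) (M/(N+1)) (δ*(S+1)) (hF.DJ a)
      (by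
        rw [Finset.sum_update_of_mem (Finset.mem_range.2 ha)]
        rw [← Finset.add_sum_erase _ _ (Finset.mem_range.2 ha)] at hc
        rw [Finset.sdiff_singleton_eq_erase]
        omega)
      (by
        intro l
        by_cases hl : l = a
        · subst hl; simp; have := hS l; omega
        · simp [hl, hS l])
      (by
        intro y hy hy'
        exact DJ_bound hF N haR hM y hy hy')
      (by positivity)
      (by
        intro l hl t ht
        by_cases hla : l = a
        · subst hla
          simp at ht
          have h1 := hv l hl (t+1) (by omega)
          have h2 := DJ_succ hF l l t
          rw [h2] at h1
          rw [sub_self, zero_mul, zero_add, abs_mul, abs_of_pos (by positivity : (0:ℝ) < t+1),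
            Nat.factorial_succ] at h1
          push_cast at h1
          have h3 : |DJ l F t l| ≤ δ * t.factorial := by
            have hp : (0:ℝ) < t+1 := by positivity
            by_contra! hcon
            nlinarith
          have : (0:ℝ) ≤ t.factorial := by positivity
          nlinarith [mul_nonneg hδ this]
        · simp [hla] at ht
          have hd : (1:ℝ) ≤ |(l:ℝ) - a| := by
            have : (1:ℤ) ≤ |(l:ℤ) - a| := Int.one_le_abs (by omega)
            exact_mod_cast this
          have main : ∀ t < c l, |DJ a F t l| ≤ δ * (t+2) * t.factorial := by
            intro t
            induction t with
            | zero =>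
              intro h0
              have h1 := hv l hl 0 h0
              have h2 := DJ_zero hF a l
              have h3 : |((l:ℝ)-a) * DJ a F 0 l| ≤ 2 * δ := by
                have : ((l:ℝ)-a) * DJ a F 0 l = F 0 l - F 0 a := by linarith
                rw [this]
                simp at h1
                exact (abs_sub _ _).trans (by linarith)
              rw [abs_mul] at h3
              have := abs_nonneg (DJ a F 0 l)
              simp
              nlinarith
            | succ t iht =>
              intro h0
              have h1 := hv l hl (t+1) h0
              have h2 := DJ_succ hF a l t
              have h4 := iht (by omega)
              have h3 : |((l:ℝ)-a) * DJ a F (t+1) l| ≤ δ * (t+1).factorial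
                  + (t+1) * (δ * (t+2) * t.factorial) := by
                have : ((l:ℝ)-a) * DJ a F (t+1) l = F (t+1) l - (t+1) * DJ a F t l := by linarith
                rw [this]
                refine (abs_sub _ _).trans ?_
                rw [abs_mul, abs_of_pos (by positivity : (0:ℝ) < t+1)]
                have : ((t:ℝ)+1) * |DJ a F t l| ≤ (t+1) * (δ * (t+2) * t.factorial) := by gcongr
                linarith
              rw [abs_mul] at h3
              have := abs_nonneg (DJ a F (t+1) l)
              have h5 : |DJ a F (t+1) l| ≤ δ * (t+1).factorial
                  + (t+1) * (δ * (t+2) * t.factorial) := by nlinarith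
              refine h5.trans (le_of_eq ?_)
              rw [Nat.factorial_succ]
              push_cast
              ring
          refine (main t ht).trans ?_
          have : (t:ℝ) + 2 ≤ S + 1 := by
            have h6 := hS l
            have : t + 1 ≤ S := by omega
            have : (t:ℝ) + 1 ≤ S := by exact_mod_cast this
            linarith
          gcongr)
      x hx hx'
    rw [DJ_zero hF a x]
    refine (abs_add_le _ _).trans ?_
    rw [abs_mul]
    have hxa : |x - a| ≤ R := by
      rw [abs_le]; constructor <;> linarith [haR.1, haR.2]
    have h7 : |x - a| * |DJ a F 0 x| ≤ R * (M / (N+1) * (R^N / N.factorial) +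
        δ * (S+1) * (2*R*(S+1))^N) := by
      gcongr
    have h8 : R * (M / (N+1) * (R^N / N.factorial)) = M * (R^(N+1) / (N+1).factorial) := by
      rw [Nat.factorial_succ]
      push_cast
      field_simp
      ring
    have h9 : (1:ℝ) ≤ (2*R*(S+1))^N := by
      apply one_le_pow₀
      nlinarith
    have h10 : (1:ℝ) ≤ R*(S+1) := by nlinarith
    have h11 : δ ≤ δ * (R*(S+1)*(2*R*(S+1))^N) := by
      apply le_mul_of_one_le_right hδ
      nlinarith
    have h12 : (2*R*((S:ℝ)+1))^(N+1) = 2*(R*(S+1)*(2*R*(S+1))^N) := by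
      rw [pow_succ]; ring
    rw [h12]
    nlinarith

end

section
open Polynomial IntermediateField

theorem exists_al : ∃ x : ℝ, (1.839 < x ∧ x < 1.84) ∧ x^3 = x^2 + x + 1 := by
  have hc : ContinuousOn (fun x : ℝ => x^3 - x^2 - x - 1) (Set.Icc 1.839 1.84) := by fun_prop
  have := intermediate_value_Ioo (by norm_num : (1.839:ℝ) ≤ 1.84) hc
  have h0 : (0:ℝ) ∈ Set.Ioo ((fun x : ℝ => x^3 - x^2 - x - 1) 1.839)
      ((fun x : ℝ => x^3 - x^2 - x - 1) 1.84) := by norm_num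
  obtain ⟨x, hx, hx0⟩ := this h0
  exact ⟨x, hx, by simp only at hx0; linarith⟩

noncomputable def al : ℝ := exists_al.choose
theorem al_gt : 1.839 < al := exists_al.choose_spec.1.1
theorem al_lt : al < 1.84 := exists_al.choose_spec.1.2
theorem al_cube : al^3 = al^2 + al + 1 := exists_al.choose_spec.2
theorem al_pos : 0 < al := by linarith [al_gt]

noncomputable def ph : ℝ := Real.goldenRatio
theorem ph_sq : ph^2 = ph + 1 := Real.goldenRatio_sq
theorem ph_irr : Irrational ph := Real.goldenRatio_irrational
theorem ph_pos : 0 < ph := Real.goldenRatio_pos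
theorem ph_gt : 1.618 < ph := by
  by_contra! h
  nlinarith [ph_sq, ph_pos]
theorem ph_lt : ph < 1.6181 := by
  by_contra! h
  nlinarith [ph_sq, ph_pos]

theorem minpoly_ph : (minpoly ℚ ph).natDegree = 2 := by
  have hirr : Irreducible (X^2 - X - 1 : ℚ[X]) := by
    have hd : (X^2 - X - 1 : ℚ[X]).natDegree = 2 := by compute_degree!
    have hm : (X^2 - X - 1 : ℚ[X]).Monic := by monicity!
    rw [hm.irreducible_iff_roots_eq_zero_of_degree_le_three (by omega) (by omega)]
    rw [Multiset.eq_zero_iff_forall_notMem]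
    intro q hq
    rw [mem_roots hm.ne_zero, IsRoot.def] at hq
    simp at hq
    have h2 : (q:ℝ)^2 - q - 1 = 0 := by exact_mod_cast hq
    have h3 : ((q:ℝ) - ph) * (q - (1 - ph)) = 0 := by nlinarith [ph_sq]
    rcases mul_eq_zero.1 h3 with h | h
    · exact ph_irr ⟨q, by linarith⟩
    · exact ph_irr ⟨1 - q, by push_cast; linarith⟩
  have hm : (X^2 - X - 1 : ℚ[X]).Monic := by monicity!
  have : X^2 - X - 1 = minpoly ℚ ph := by
    refine minpoly.eq_of_irreducible_of_monic hirr ?_ hm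
    simp [ph_sq]
  rw [← this]
  compute_degree!

theorem minpoly_al : (minpoly ℚ al).natDegree = 3 := by
  have hm : (X^3 - X^2 - X - 1 : ℚ[X]).Monic := by monicity!
  have hirr : Irreducible (X^3 - X^2 - X - 1 : ℚ[X]) := by
    have hd : (X^3 - X^2 - X - 1 : ℚ[X]).natDegree = 3 := by compute_degree!
    rw [hm.irreducible_iff_roots_eq_zero_of_degree_le_three (by omega) (by omega)]
    rw [Multiset.eq_zero_iff_forall_notMem]
    intro q hq
    rw [mem_roots hm.ne_zero, IsRoot.def] at hq
    simp at hq
    have hmZ : (X^3 - X^2 - X - 1 : ℤ[X]).Monic := by monicity!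
    have h1 : aeval q (X^3 - X^2 - X - 1 : ℤ[X]) = 0 := by simpa using hq
    obtain ⟨z, hz⟩ := isInteger_of_is_root_of_monic hmZ h1
    have hz' : (z:ℚ) = q := by simpa using hz
    rw [← hz'] at hq
    have hz2 : z^3 - z^2 - z - 1 = 0 := by exact_mod_cast hq
    have h4 : z * (z^2 - z - 1) = 1 := by linarith
    rcases Int.isUnit_iff.1 (IsUnit.of_mul_eq_one _ h4) with h | h <;> subst h <;> norm_num at hz2
  have : X^3 - X^2 - X - 1 = minpoly ℚ al := by
    refine minpoly.eq_of_irreducible_of_monic hirr ?_ hm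
    simp [al_cube]; ring
  rw [← this]
  compute_degree!

theorem indep_aux (u v w : ℚ⟮ph⟯) (h : (u:ℝ) + v * al + w * al^2 = 0) : u = 0 ∧ v = 0 ∧ w = 0 := by
  have hiα : IsIntegral ℚ al := by
    by_contra hc
    have := minpoly_al
    rw [minpoly.eq_zero hc] at this
    simp at this
  have hiφ : IsIntegral ℚ ph := by
    by_contra hc
    have := minpoly_ph
    rw [minpoly.eq_zero hc] at this
    simp at this
  have hd : (ℚ⟮ph⟯).LinearDisjoint ℚ⟮al⟯ := by
    apply LinearDisjoint.of_finrank_coprime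
    rw [adjoin.finrank hiφ, adjoin.finrank hiα, minpoly_ph, minpoly_al]
    norm_num
  have hg := minpoly_gen ℚ al
  have hli := @linearIndependent_pow _ _ ℚ _ (IntermediateField.algebra' ℚ⟮al⟯)
    (AdjoinSimple.gen ℚ al)
  rw [hg, minpoly_al] at hli
  have h3 := hd.linearIndependent_right hli
  rw [Fintype.linearIndependent_iff] at h3
  have h4 := h3 ![u, v, w] (by
    simp [Fin.sum_univ_three, Algebra.smul_def, AdjoinSimple.coe_gen]
    exact h)
  exact ⟨h4 0, h4 1, h4 2⟩

theorem indep_ph (a b : ℤ) (h : (a:ℝ) + b * ph = 0) : a = 0 ∧ b = 0 := by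
  by_cases hb : b = 0
  · subst hb; simp at h; exact ⟨by exact_mod_cast h, rfl⟩
  · exfalso
    have hb' : (b:ℝ) ≠ 0 := by exact_mod_cast hb
    exact ph_irr ⟨-a/b, by push_cast; field_simp; linarith⟩

theorem indep (a0 a1 b0 b1 c0 c1 : ℤ)
    (h : ((a0:ℝ) + a1 * ph) + (b0 + b1 * ph) * al + (c0 + c1 * ph) * al^2 = 0) :
    a0 = 0 ∧ a1 = 0 ∧ b0 = 0 ∧ b1 = 0 ∧ c0 = 0 ∧ c1 = 0 := by
  let g := AdjoinSimple.gen ℚ ph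
  have hg : (g:ℝ) = ph := AdjoinSimple.coe_gen ℚ ph
  obtain ⟨h1, h2, h3⟩ := indep_aux (a0 + a1 * g) (b0 + b1 * g) (c0 + c1 * g) (by
    push_cast; rw [hg]; exact h)
  have h1' := congrArg (fun z : ℚ⟮ph⟯ => (z:ℝ)) h1
  have h2' := congrArg (fun z : ℚ⟮ph⟯ => (z:ℝ)) h2
  have h3' := congrArg (fun z : ℚ⟮ph⟯ => (z:ℝ)) h3
  push_cast at h1' h2' h3'
  rw [hg] at h1' h2' h3'
  obtain ⟨r1, r2⟩ := indep_ph _ _ h1'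
  obtain ⟨r3, r4⟩ := indep_ph _ _ h2'
  obtain ⟨r5, r6⟩ := indep_ph _ _ h3'
  exact ⟨r1, r2, r3, r4, r5, r6⟩

end

section
noncomputable def ev : Fin 6 → ℝ := ![1, ph, al, ph*al, al^2, ph*al^2]

abbrev M6 := Matrix (Fin 6) (Fin 6) ℤ

def Good (M : M6) (r c : ℝ) : Prop :=
  (∀ i, ∑ j, (M i j : ℝ) * ev j = r * ev i) ∧ (∀ i, ∑ j, |(M i j : ℝ)| ≤ c)

theorem Good.nonneg {M r c} (h : Good M r c) : 0 ≤ c :=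
  (Finset.sum_nonneg fun _ _ => abs_nonneg _).trans (h.2 0)

theorem Good.mono {M r c d} (h : Good M r c) (hcd : c ≤ d) : Good M r d :=
  ⟨h.1, fun i => (h.2 i).trans hcd⟩

theorem Good.one : Good 1 1 1 := by
  constructor
  · intro i
    simp [Matrix.one_apply]
  · intro i
    have : ∀ j : Fin 6, |(((1 : M6) i j : ℤ) : ℝ)| = if i = j then 1 else 0 := by
      intro j; by_cases h : i = j <;> simp [Matrix.one_apply, h]
    simp [this]

theorem Good.mul {M r c N r' c'} (h : Good M r c) (h' : Good N r' c') :
    Good (M * N) (r * r') (c * c') := by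
  constructor
  · intro i
    simp only [Matrix.mul_apply, Int.cast_sum, Int.cast_mul, Finset.sum_mul]
    rw [Finset.sum_comm]
    simp only [mul_assoc, ← Finset.mul_sum, h'.1]
    have := h.1 i
    calc ∑ x, (M i x : ℝ) * (r' * ev x) = r' * ∑ x, (M i x : ℝ) * ev x := by
          rw [Finset.mul_sum]; exact Finset.sum_congr rfl fun _ _ => by ring
      _ = _ := by rw [this]; ring
  · intro i
    calc ∑ j, |((M * N) i j : ℝ)| ≤ ∑ j, ∑ k, |(M i k : ℝ)| * |(N k j : ℝ)| := by
          refine Finset.sum_le_sum fun j _ => ?_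
          simp only [Matrix.mul_apply, Int.cast_sum, Int.cast_mul]
          refine (Finset.abs_sum_le_sum_abs _ _).trans ?_
          simp [abs_mul]
      _ = ∑ k, |(M i k : ℝ)| * ∑ j, |(N k j : ℝ)| := by
          rw [Finset.sum_comm]; simp [Finset.mul_sum]
      _ ≤ ∑ k, |(M i k : ℝ)| * c' := by
          refine Finset.sum_le_sum fun k _ => ?_
          exact mul_le_mul_of_nonneg_left (h'.2 k) (abs_nonneg _)
      _ = (∑ k, |(M i k : ℝ)|) * c' := by rw [Finset.sum_mul]
      _ ≤ c * c' := mul_le_mul_of_nonneg_right (h.2 i) h'.nonneg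

theorem Good.pow {M r c} (h : Good M r c) (n : ℕ) : Good (M^n) (r^n) (c^n) := by
  induction n with
  | zero => simpa using Good.one
  | succ n ih => rw [pow_succ, pow_succ, pow_succ]; exact ih.mul h

theorem Good.add {M r c N r' c'} (h : Good M r c) (h' : Good N r' c') :
    Good (M + N) (r + r') (c + c') := by
  constructor
  · intro i
    simp only [Matrix.add_apply, Int.cast_add, add_mul, Finset.sum_add_distrib, h.1, h'.1]
  · intro i
    refine le_trans ?_ (add_le_add (h.2 i) (h'.2 i))
    rw [← Finset.sum_add_distrib]
    refine Finset.sum_le_sum fun j _ => ?_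
    simp only [Matrix.add_apply, Int.cast_add]
    exact abs_add_le _ _

theorem Good.smul {M r c} (h : Good M r c) (z : ℤ) : Good (z • M) (z * r) (|(z:ℝ)| * c) := by
  constructor
  · intro i
    simp only [Matrix.smul_apply, smul_eq_mul, Int.cast_mul, mul_assoc, ← Finset.mul_sum, h.1]
  · intro i
    simp only [Matrix.smul_apply, smul_eq_mul, Int.cast_mul, abs_mul, ← Finset.mul_sum]
    exact mul_le_mul_of_nonneg_left (h.2 i) (abs_nonneg _)

theorem Good.sum {ι : Type*} (s : Finset ι) (M : ι → M6) (r c : ι → ℝ)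
    (h : ∀ i ∈ s, Good (M i) (r i) (c i)) :
    Good (∑ i ∈ s, M i) (∑ i ∈ s, r i) (∑ i ∈ s, c i) := by
  classical
  induction s using Finset.induction_on with
  | empty => simp [Good]
  | insert a s ha ih =>
    rw [Finset.sum_insert ha, Finset.sum_insert ha, Finset.sum_insert ha]
    exact (h a (by simp)).add (ih fun i hi => h i (by simp [hi]))

/-- row zero gives the value -/
theorem Good.row {M r c} (h : Good M r c) (h0 : ∀ j, M 0 j = 0) : r = 0 := by
  have := h.1 0
  simpa [h0, ev] using this.symm

theorem ev_pos (i : Fin 6) : 0 < ev i := by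
  have := al_pos; have := ph_pos
  fin_cases i <;> simp [ev] <;> positivity

theorem ev_sum : ∑ i, ev i ≤ 16.5 := by
  simp [ev, Fin.sum_univ_succ]
  have h1 := al_lt; have h2 := ph_lt; have := al_pos; have := ph_pos
  have h3 : ph * al ≤ 1.6181 * 1.84 := by gcongr
  have h4 : ph * al^2 ≤ 1.6181 * 1.84^2 := by gcongr
  have h5 : al^2 ≤ 1.84^2 := by gcongr
  norm_num at *
  linarith

theorem ev_indep (w : Fin 6 → ℤ) (h : ∑ i, (w i : ℝ) * ev i = 0) : w = 0 := by
  have := indep (w 0) (w 1) (w 2) (w 3) (w 4) (w 5) (by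
    simp [ev, Fin.sum_univ_succ] at h
    rw [← h]
    ring_nf)
  funext i
  fin_cases i <;> simp [this]

theorem Good.det {M r c} (h : Good M r c) (hr : r ≠ 0) : M.det ≠ 0 := by
  intro hd
  obtain ⟨w, hw, hw0⟩ := Matrix.exists_vecMul_eq_zero_iff.2 hd
  apply hw
  apply ev_indep
  have h1 : ∑ j, ((∑ i, (w i : ℝ) * (M i j : ℝ))) * ev j = 0 := by
    apply Finset.sum_eq_zero
    intro j _
    have := congrFun hw0 j
    simp [Matrix.vecMul, dotProduct] at this
    have h2 : ∑ i, (w i : ℝ) * (M i j : ℝ) = 0 := by exact_mod_cast this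
    rw [h2, zero_mul]
  simp only [Finset.sum_mul] at h1
  rw [Finset.sum_comm] at h1
  simp only [mul_assoc, ← Finset.mul_sum, h.1] at h1
  have h3 : r * ∑ i, (w i : ℝ) * ev i = 0 := by
    rw [Finset.mul_sum, ← h1]
    exact Finset.sum_congr rfl fun _ _ => by ring
  exact (mul_eq_zero.1 h3).resolve_left hr

theorem Good.liouville {M r c} (h : Good M r c) (hr : r ≠ 0) (hc : 1 ≤ c) :
    1 ≤ |r| * (12000 * c^6) := by
  have hd := h.det hr
  have hd1 : (1:ℝ) ≤ |(M.det : ℝ)| := by exact_mod_cast Int.one_le_abs hd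
  have hadj : ∀ i j, |((M.adjugate i j : ℤ) : ℝ)| ≤ 720 * c^6 := by
    intro i j
    rw [Matrix.adjugate_apply]
    have key := Matrix.det_le (A := (M.updateRow j (Pi.single i 1)).map (Int.cast : ℤ → ℝ))
      (abv := AbsoluteValue.abs) (x := c) (by
        intro a b
        simp only [Matrix.map_apply, AbsoluteValue.abs_apply]
        by_cases haj : a = j
        · subst haj
          rw [Matrix.updateRow_self]
          by_cases hb : b = i
          · subst hb; simpa using hc
          · simp [hb]; linarith
        · rw [Matrix.updateRow_ne haj]
          exact (Finset.single_le_sum (f := fun b => |(M a b : ℝ)|)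
            (fun _ _ => abs_nonneg _) (Finset.mem_univ b)).trans (h.2 a))
    have h2 : ((M.updateRow j (Pi.single i 1)).map (Int.cast : ℤ → ℝ)).det =
        (((M.updateRow j (Pi.single i 1)).det : ℤ) : ℝ) := by
      exact (RingHom.map_det (Int.castRingHom ℝ) _).symm
    rw [h2] at key
    simpa [Nat.factorial] using key
  have h3 : ∀ i, (∑ j, (M.adjugate i j : ℝ) * ev j) * r = M.det * ev i := by
    intro i
    have h4 := congrFun (congrFun (Matrix.adjugate_mul M) i)
    have h5 : ∀ k, ∑ j, (M.adjugate i j : ℝ) * (M j k : ℝ) = (M.det : ℝ) * (if i = k then 1 else 0) := by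
      intro k
      have := h4 k
      simp [Matrix.mul_apply, Matrix.one_apply] at this
      by_cases hik : i = k
      · simp [hik] at this ⊢; exact_mod_cast this
      · simp [hik] at this ⊢; exact_mod_cast this
    calc (∑ j, (M.adjugate i j : ℝ) * ev j) * r
        = ∑ j, (M.adjugate i j : ℝ) * (r * ev j) := by
          rw [Finset.sum_mul]; exact Finset.sum_congr rfl fun _ _ => by ring
      _ = ∑ j, (M.adjugate i j : ℝ) * ∑ k, (M j k : ℝ) * ev k := by simp only [h.1]
      _ = ∑ k, (∑ j, (M.adjugate i j : ℝ) * (M j k : ℝ)) * ev k := by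
          simp only [Finset.mul_sum, Finset.sum_mul]
          rw [Finset.sum_comm]
          exact Finset.sum_congr rfl fun _ _ => Finset.sum_congr rfl fun _ _ => by ring
      _ = M.det * ev i := by simp [h5]
  have h4 := h3 0
  have hev0 : ev 0 = 1 := rfl
  rw [hev0, mul_one] at h4
  rw [← h4, abs_mul] at hd1
  have h6 : |∑ j, (M.adjugate 0 j : ℝ) * ev j| ≤ 720 * c^6 * 16.5 := by
    refine (Finset.abs_sum_le_sum_abs _ _).trans ?_
    calc ∑ j, |(M.adjugate 0 j : ℝ) * ev j| ≤ ∑ j, 720 * c^6 * ev j := by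
          refine Finset.sum_le_sum fun j _ => ?_
          rw [abs_mul, abs_of_pos (ev_pos j)]
          exact mul_le_mul_of_nonneg_right (hadj 0 j) (ev_pos j).le
      _ = 720 * c^6 * ∑ j, ev j := by rw [Finset.mul_sum]
      _ ≤ _ := by
          apply mul_le_mul_of_nonneg_left ev_sum; positivity
  have hc6 : 0 ≤ c^6 := by positivity
  have h7 : |∑ j, (M.adjugate 0 j : ℝ) * ev j| * |r| ≤ 720 * c^6 * 16.5 * |r| :=
    mul_le_mul_of_nonneg_right h6 (abs_nonneg _)
  nlinarith [abs_nonneg r, mul_nonneg hc6 (abs_nonneg r)]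

def mP : M6 := !![0,1,0,0,0,0; 1,1,0,0,0,0; 0,0,0,1,0,0; 0,0,1,1,0,0; 0,0,0,0,0,1; 0,0,0,0,1,1]
def mQ : M6 := !![0,0,1,0,0,0; 0,0,0,1,0,0; 0,0,0,0,1,0; 0,0,0,0,0,1; 1,0,1,0,1,0; 0,1,0,1,0,1]
def mP' : M6 := !![-1,1,0,0,0,0; 1,0,0,0,0,0; 0,0,-1,1,0,0; 0,0,1,0,0,0; 0,0,0,0,-1,1; 0,0,0,0,1,0]
def mQ' : M6 := !![-1,0,-1,0,1,0; 0,-1,0,-1,0,1; 1,0,0,0,0,0; 0,1,0,0,0,0; 0,0,1,0,0,0; 0,0,0,1,0,0]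

theorem ph_inv : ph⁻¹ = ph - 1 := by
  have := ph_pos
  field_simp
  nlinarith [ph_sq]

theorem al_inv : al⁻¹ = al^2 - al - 1 := by
  have := al_pos
  field_simp
  nlinarith [al_cube]

theorem good_P : Good mP ph 3 := by
  have h := ph_sq
  constructor
  · intro i
    fin_cases i <;> simp [Fin.sum_univ_succ, mP, ev] <;> ring_nf <;> try rw [h] <;> try ring
  · intro i
    fin_cases i <;> simp [Fin.sum_univ_succ, mP] <;> norm_num

theorem good_Q : Good mQ al 3 := by
  have h := al_cube
  constructor
  · intro i
    fin_cases i <;> simp [Fin.sum_univ_succ, mQ, ev] <;> ring_nf <;> try rw [h] <;> try ring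
  · intro i
    fin_cases i <;> simp [Fin.sum_univ_succ, mQ] <;> norm_num

theorem good_P' : Good mP' ph⁻¹ 3 := by
  have h := ph_sq
  rw [ph_inv]
  constructor
  · intro i
    fin_cases i <;> simp [Fin.sum_univ_succ, mP', ev] <;> ring_nf <;> try rw [h] <;> try ring
  · intro i
    fin_cases i <;> simp [Fin.sum_univ_succ, mP'] <;> norm_num

theorem good_Q' : Good mQ' al⁻¹ 3 := by
  have h := al_cube
  rw [al_inv]
  have h4 : al^4 = 2*al^2+2*al+1 := by
    have : al^4 = al * al^3 := by ring
    rw [this, h]; linarith [h, (by ring : al*(al^2+al+1) = al^3+al^2+al)]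
  constructor
  · intro i
    fin_cases i <;> simp [Fin.sum_univ_succ, mQ', ev] <;> ring_nf <;> try (simp only [h, h4]) <;> try ring
  · intro i
    fin_cases i <;> simp [Fin.sum_univ_succ, mQ'] <;> norm_num

end

section
open Finset

theorem moment {ι : Type*} (S : Finset ι) (c v : ι → ℝ)
    (h : ∀ l < S.card, ∑ i ∈ S, c i * v i ^ l = 0) (i0 : ι) (hi0 : i0 ∈ S) :
    ∑ i ∈ S with v i = v i0, c i = 0 := by
  classical
  have hP : ∀ P : Polynomial ℝ, P.natDegree < S.card → ∑ i ∈ S, c i * P.eval (v i) = 0 := by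
    intro P hP
    simp only [Polynomial.eval_eq_sum_range, Finset.mul_sum]
    rw [Finset.sum_comm]
    apply Finset.sum_eq_zero
    intro l hl
    have := h l (by simp at hl; omega)
    calc ∑ i ∈ S, c i * (P.coeff l * v i ^ l) = P.coeff l * ∑ i ∈ S, c i * v i ^ l := by
          rw [Finset.mul_sum]; exact Finset.sum_congr rfl fun _ _ => by ring
      _ = 0 := by rw [this, mul_zero]
  have hmem : v i0 ∈ S.image v := Finset.mem_image_of_mem _ hi0
  have hinj : Set.InjOn (id : ℝ → ℝ) (S.image v) := Function.injective_id.injOn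
  have h1 := hP (Lagrange.basis (S.image v) id (v i0)) (by
    have hd := Lagrange.degree_basis hinj hmem
    have h2 : (S.image v).card ≤ S.card := Finset.card_image_le
    have h3 : 0 < (S.image v).card := Finset.card_pos.2 ⟨_, hmem⟩
    rw [Polynomial.natDegree_eq_of_degree_eq_some hd]
    omega)
  rw [Finset.sum_filter]
  refine Eq.trans ?_ h1
  refine Finset.sum_congr rfl fun i hi => ?_
  by_cases hv : v i = v i0
  · simp only [hv, if_true]
    have := Lagrange.eval_basis_self hinj hmem
    simp only [id] at this
    rw [this, mul_one]
  · simp only [hv, if_false]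
    have := Lagrange.eval_basis_of_ne (s := S.image v) (v := (id : ℝ → ℝ)) (i := v i0) (j := v i)
      (fun h => hv h.symm) (Finset.mem_image_of_mem _ hi)
    simp only [id] at this
    rw [this, mul_zero]

theorem ph_pow_rep (i : ℕ) : ∃ a b : ℕ, ph ^ i = a + b * ph := by
  induction i with
  | zero => exact ⟨1, 0, by simp⟩
  | succ i ih =>
    obtain ⟨a, b, h⟩ := ih
    refine ⟨b, a + b, ?_⟩
    rw [pow_succ, h]; push_cast
    linear_combination (b:ℝ) * ph_sq

theorem al_pow_rep (j : ℕ) : ∃ a b c : ℕ, (1 ≤ j → 1 ≤ b + c) ∧ al ^ j = a + b * al + c * al^2 := by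
  induction j with
  | zero => exact ⟨1, 0, 0, by simp, by simp⟩
  | succ j ih =>
    obtain ⟨a, b, c, h0, h⟩ := ih
    refine ⟨c, a + c, b + c, ?_, ?_⟩
    · intro _
      rcases Nat.eq_zero_or_pos j with rfl | hj
      · simp at h
        by_contra hh
        have hb : b = 0 := by omega
        have hc : c = 0 := by omega
        have ha : a = 0 := by omega
        subst hb hc ha
        norm_num at h
      · have := h0 hj; omega
    · rw [pow_succ, h]; push_cast
      linear_combination (c:ℝ) * al_cube

theorem ph_al_pow {i j : ℕ} (h : ph ^ i = al ^ j) : i = 0 ∧ j = 0 := by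
  obtain ⟨a, b, h1⟩ := ph_pow_rep i
  obtain ⟨u, v, w, h2, h3⟩ := al_pow_rep j
  have := indep ((a:ℤ) - u) b (-v) 0 (-w) 0 (by
    push_cast
    rw [h1, h3] at h
    linear_combination h)
  have hj : j = 0 := by
    by_contra hj
    have := h2 (by omega)
    omega
  subst hj
  refine ⟨?_, rfl⟩
  by_contra hi
  have : 1 < ph ^ i := one_lt_pow₀ (by linarith [ph_gt]) hi
  simp at h; linarith

theorem ph_al_inj {i j i' j' : ℕ} (h : ph ^ i * al ^ j = ph ^ i' * al ^ j') : i = i' ∧ j = j' := by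
  have h1 : ∀ k, 1 ≤ ph ^ k := fun k => one_le_pow₀ (by linarith [ph_gt])
  have h2 : ∀ k, 1 ≤ al ^ k := fun k => one_le_pow₀ (by linarith [al_gt])
  have key : ∀ i j i' j' : ℕ, i ≤ i' → ph ^ i * al ^ j = ph ^ i' * al ^ j' → i = i' ∧ j = j' := by
    intro i j i' j' hii h
    obtain ⟨k, rfl⟩ := Nat.exists_eq_add_of_le hii
    have e1 : al ^ j = ph ^ k * al ^ j' := by
      have : ph ^ i ≠ 0 := pow_ne_zero _ ph_pos.ne'
      rw [pow_add, mul_assoc] at h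
      exact mul_left_cancel₀ this h
    rcases le_total j' j with hj | hj
    · obtain ⟨l, rfl⟩ := Nat.exists_eq_add_of_le hj
      have : al ^ l = ph ^ k := by
        have : al ^ j' ≠ 0 := pow_ne_zero _ al_pos.ne'
        rw [pow_add, mul_comm] at e1
        exact mul_right_cancel₀ this e1
      have := ph_al_pow this.symm
      omega
    · obtain ⟨l, rfl⟩ := Nat.exists_eq_add_of_le hj
      have : ph ^ k * al ^ l = 1 := by
        have : al ^ j ≠ 0 := pow_ne_zero _ al_pos.ne'
        rw [pow_add] at e1
        apply mul_left_cancel₀ this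
        linear_combination -e1
      have e3 : ph ^ k = al ^ 0 := by
        simp
        nlinarith [h1 k, h2 l]
      have e4 : ph ^ 0 = al ^ l := by
        simp
        nlinarith [h1 k, h2 l]
      have := ph_al_pow e3
      have := ph_al_pow e4
      omega
  rcases le_total i i' with hii | hii
  · exact key _ _ _ _ hii h
  · have := key _ _ _ _ hii h.symm
    omega

theorem Good.abs_le {M r c} (h : Good M r c) : |r| ≤ c := by
  have hmax : ∀ j, ev j ≤ ev 5 := by
    intro j
    have h1 := al_gt; have h2 := ph_gt
    have e2 : 1 ≤ al^2 := by nlinarith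
    have e3 : al ≤ al^2 := by nlinarith
    have e4 : ph * al ≤ ph * al^2 := by nlinarith
    fin_cases j <;> simp [ev] <;> nlinarith
  have h1 := h.1 5
  have h5 := ev_pos 5
  have h2 : |r * ev 5| ≤ c * ev 5 := by
    rw [← h1]
    refine (Finset.abs_sum_le_sum_abs _ _).trans ?_
    calc ∑ j, |(M 5 j : ℝ) * ev j| ≤ ∑ j, |(M 5 j : ℝ)| * ev 5 := by
          refine Finset.sum_le_sum fun j _ => ?_
          rw [abs_mul, abs_of_pos (ev_pos j)]
          exact mul_le_mul_of_nonneg_left (hmax j) (abs_nonneg _)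
      _ = (∑ j, |(M 5 j : ℝ)|) * ev 5 := by rw [Finset.sum_mul]
      _ ≤ _ := mul_le_mul_of_nonneg_right (h.2 5) h5.le
  rw [abs_mul, abs_of_pos h5] at h2
  exact le_of_mul_le_mul_right h2 h5

theorem siegel' {α β : Type*} [Fintype α] [Fintype β] (A : Matrix α β ℤ) (B : ℝ) (hB : 1 ≤ B)
    (hA : ∀ i j, |(A i j : ℝ)| ≤ B) (hc : Fintype.card β = 2 * Fintype.card α)
    (h0 : 0 < Fintype.card α) :
    ∃ p : β → ℤ, p ≠ 0 ∧ A.mulVec p = 0 ∧ ∀ j, |(p j : ℝ)| ≤ Fintype.card β * B := by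
  letI := Matrix.seminormedAddCommGroup (m := α) (n := β) (α := ℤ)
  obtain ⟨p, hp, hp0, hn⟩ := Int.Matrix.exists_ne_zero_int_vec_norm_le A (by omega) h0
  refine ⟨p, hp, hp0, fun j => ?_⟩
  have e : ((Fintype.card α : ℝ) / (Fintype.card β - Fintype.card α)) = 1 := by
    rw [hc]; push_cast
    have : (Fintype.card α : ℝ) ≠ 0 := by positivity
    field_simp; ring
  rw [e, Real.rpow_one] at hn
  have h1 := (norm_le_pi_norm p j).trans hn
  rw [Int.norm_eq_abs] at h1
  refine h1.trans ?_
  gcongr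
  refine max_le hB ?_
  refine (Matrix.norm_le_iff (by linarith)).2 fun i j => ?_
  rw [Int.norm_eq_abs]
  exact hA i j

end

section
open Finset

structure BP where
  (n m t G r : ℕ)
  (x y : ℝ)
  (MX MY : M6)

namespace BP
variable (b : BP)

def h : ℕ := 756 * b.t
def L3 : ℕ := 12 * b.h * 27^2 * 100^2 * b.r^2
def L : ℕ := b.G * b.L3
def s : ℕ := 100 * b.L * b.r
def K : ℕ := 27 * b.s
def Nu : ℕ := b.L * b.L * b.L3
abbrev I := Fin b.L × Fin b.L × Fin b.L3
variable {b}
def q1 (i : b.I) : ℤ := (i.1 : ℕ) - b.n * (i.2.2 : ℕ)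
def q2 (i : b.I) : ℤ := (i.2.1 : ℕ) + b.m * (i.2.2 : ℕ)
variable (b)
noncomputable def rho : ℝ := Real.log (b.x / b.y)
noncomputable def Lam : ℝ := b.n * Real.log ph - b.m * Real.log al + b.rho
def eP : ℕ := 3 * b.t + 2 * b.K * b.t + 3 * b.L * b.h
def E : ℕ := 1400 * b.t * b.r * b.L^3 * b.L3
variable {b}
noncomputable def vv (i : b.I) : ℝ :=
  (i.1 : ℕ) * Real.log ph + (i.2.1 : ℕ) * Real.log al + (i.2.2 : ℕ) * b.rho
noncomputable def ww (i : b.I) : ℝ := q1 i * Real.log ph + q2 i * Real.log al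

noncomputable def F (p : b.I → ℤ) (μ ν i : ℕ) (z : ℝ) : ℝ :=
  ∑ k, p k * q1 k ^ μ * q2 k ^ ν * (ww k) ^ i * Real.exp (ww k * z)
noncomputable def A (p : b.I → ℤ) (μ ν : ℕ) (l : ℕ) : ℝ :=
  ∑ k, p k * q1 k ^ μ * q2 k ^ ν * Real.exp (vv k * l)

structure OK (b : BP) : Prop where
  ht : 1 ≤ b.t
  hG : 1 ≤ b.G
  hr : 1 ≤ b.r
  hx : 0 < b.x
  hy : 0 < b.y
  gx : Good b.MX b.x (3^b.G)
  gy : Good b.MY b.y (3^b.G)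
  hlog : |b.rho| ≤ b.G
  hn : b.L + b.n * b.L3 ≤ 3 ^ b.t
  hm : b.L + b.m * b.L3 ≤ 3 ^ b.t
  hLn : b.L ≤ b.n
  hJ : b.Nu ≤ b.h * b.r^26

theorem lph : 0 < Real.log ph ∧ Real.log ph ≤ 1 := by
  have h := Real.log_le_sub_one_of_pos ph_pos
  have := ph_lt
  exact ⟨Real.log_pos (by linarith [ph_gt]), by linarith⟩
theorem lal : 0 < Real.log al ∧ Real.log al ≤ 1 := by
  have h := Real.log_le_sub_one_of_pos al_pos
  have := al_lt
  exact ⟨Real.log_pos (by linarith [al_gt]), by linarith⟩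

theorem F_jet (p : b.I → ℤ) (μ ν : ℕ) : IsJet (F p μ ν) := by
  intro i z
  unfold F
  apply HasDerivAt.fun_sum
  intro k _
  have h1 : HasDerivAt (fun z => Real.exp (ww k * z)) (Real.exp (ww k * z) * (ww k * 1)) z :=
    ((hasDerivAt_id z).const_mul (ww k)).exp
  have h2 := h1.const_mul (p k * q1 k ^ μ * q2 k ^ ν * (ww k) ^ i)
  refine h2.congr_deriv ?_
  rw [pow_succ]; ring

theorem F_add (p : b.I → ℤ) (μ ν i : ℕ) (z : ℝ) :
    F p μ ν i z = ∑ j ∈ range (i+1), (i.choose j) * Real.log ph ^ j * Real.log al ^ (i-j) *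
      F p (μ+j) (ν+(i-j)) 0 z := by
  unfold F
  simp only [Finset.mul_sum]
  rw [Finset.sum_comm]
  refine Finset.sum_congr rfl fun k _ => ?_
  rw [show (ww k)^i = ∑ j ∈ range (i+1), (q1 k * Real.log ph)^j * (q2 k * Real.log al)^(i-j) * (i.choose j) from by
    rw [ww, add_pow]]
  rw [Finset.mul_sum, Finset.sum_mul]
  refine Finset.sum_congr rfl fun j _ => ?_
  rw [mul_pow, mul_pow, pow_add, pow_add]
  ring

namespace OK
variable (o : OK b)
include o

theorem h1 : 1 ≤ b.h := by have := o.ht; unfold h; omega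
theorem L31 : 1 ≤ b.L3 := by
  have h1 := o.h1; have h2 := o.hr; unfold L3
  have : 0 < 12 * b.h * 27^2 * 100^2 * b.r^2 := by positivity
  omega
theorem L3L : b.L3 ≤ b.L := Nat.le_mul_of_pos_left _ o.hG
theorem L1 : 1 ≤ b.L := o.L31.trans o.L3L
theorem Lt : b.L ≤ 3^b.t := by have := o.hn; omega
theorem L3t : b.L3 ≤ 3^b.t := o.L3L.trans o.Lt
theorem Nut : b.Nu ≤ 3^(3*b.t) := by
  calc b.Nu ≤ 3^b.t * 3^b.t * 3^b.t := Nat.mul_le_mul (Nat.mul_le_mul o.Lt o.Lt) o.L3t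
    _ = _ := by ring
theorem hNu : b.h ≤ b.Nu := by
  have h1 := o.L1
  have h2 : b.h ≤ b.L3 := by
    have := o.hr
    unfold L3
    calc b.h = 1 * b.h * 1 * 1 * 1 := by ring
      _ ≤ 12 * b.h * 27^2 * 100^2 * b.r^2 := by
        have : 1 ≤ b.r^2 := Nat.one_le_pow _ _ this
        gcongr <;> norm_num
  calc b.h = 1 * 1 * b.h := by ring
    _ ≤ b.L * b.L * b.L3 := by gcongr
theorem st : b.s ≤ 3^(2*b.t) := by
  have h1 : 100 * b.r ≤ b.L3 := by
    have := o.hr; have := o.h1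
    unfold L3
    calc 100 * b.r = 1 * 1 * 1 * 100^1 * b.r^1 := by ring
      _ ≤ 12 * b.h * 27^2 * 100^2 * b.r^2 := by gcongr <;> norm_num
  calc b.s = (100 * b.r) * b.L := by unfold s; ring
    _ ≤ 3^b.t * 3^b.t := Nat.mul_le_mul (h1.trans o.L3t) o.Lt
    _ = _ := by ring
theorem NuEq : b.Nu = 12 * b.h * b.K^2 := by
  have : b.K^2 = 27^2*100^2*b.L^2*b.r^2 := by unfold K s; ring
  rw [this]; unfold Nu
  conv_lhs => rw [L3]
  ring

theorem q1b (k : b.I) : |(q1 k : ℝ)| ≤ 3^b.t := by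
  have h1 := k.1.2; have h2 := k.2.2.2
  have h3 : b.n * (k.2.2 : ℕ) ≤ b.n * b.L3 := Nat.mul_le_mul_left _ h2.le
  have h4 : ((b.L:ℝ) + b.n * b.L3) ≤ 3^b.t := by exact_mod_cast o.hn
  have h5 : ((k.1:ℕ) : ℝ) ≤ b.L := by exact_mod_cast h1.le
  have h6 : (b.n:ℝ) * ((k.2.2:ℕ) : ℝ) ≤ b.n * b.L3 := by exact_mod_cast h3
  have h7 : (0:ℝ) ≤ b.n * ((k.2.2:ℕ) : ℝ) := by positivity
  have h8 : (0:ℝ) ≤ ((k.1:ℕ) : ℝ) := by positivity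
  unfold q1
  push_cast
  rw [abs_le]
  constructor <;> linarith
theorem q2b (k : b.I) : |(q2 k : ℝ)| ≤ 3^b.t := by
  have h1 := k.2.1.2; have h2 := k.2.2.2
  have h3 : b.m * (k.2.2 : ℕ) ≤ b.m * b.L3 := Nat.mul_le_mul_left _ h2.le
  have h4 : ((b.L:ℝ) + b.m * b.L3) ≤ 3^b.t := by exact_mod_cast o.hm
  have h5 : ((k.2.1:ℕ) : ℝ) ≤ b.L := by exact_mod_cast h1.le
  have h6 : (b.m:ℝ) * ((k.2.2:ℕ) : ℝ) ≤ b.m * b.L3 := by exact_mod_cast h3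
  have h7 : (0:ℝ) ≤ b.m * ((k.2.2:ℕ) : ℝ) := by positivity
  have h8 : (0:ℝ) ≤ ((k.2.1:ℕ) : ℝ) := by positivity
  unfold q2
  push_cast
  rw [abs_le]
  constructor <;> linarith

omit o in
theorem vw (k : b.I) : vv k - ww k = (k.2.2 : ℕ) * b.Lam := by
  unfold vv ww Lam q1 q2
  push_cast
  ring

theorem vb (k : b.I) : |vv k| ≤ 3 * b.L := by
  have h1 : ((k.1:ℕ):ℝ) ≤ b.L := by exact_mod_cast k.1.2.le
  have h2 : ((k.2.1:ℕ):ℝ) ≤ b.L := by exact_mod_cast k.2.1.2.le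
  have h3 : ((k.2.2:ℕ):ℝ) ≤ b.L3 := by exact_mod_cast k.2.2.2.le
  have hl : |((k.2.2:ℕ):ℝ) * b.rho| ≤ b.L := by
    rw [abs_mul, Nat.abs_cast]
    calc ((k.2.2:ℕ):ℝ) * |b.rho| ≤ b.L3 * b.G := by
          gcongr; exact o.hlog
      _ = b.L := by unfold L; push_cast; ring
  have e1 : |((k.1:ℕ):ℝ) * Real.log ph| ≤ b.L := by
    rw [abs_mul, Nat.abs_cast, abs_of_pos lph.1]
    nlinarith [lph.1, lph.2]
  have e2 : |((k.2.1:ℕ):ℝ) * Real.log al| ≤ b.L := by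
    rw [abs_mul, Nat.abs_cast, abs_of_pos lal.1]
    nlinarith [lal.1, lal.2]
  unfold vv
  refine (abs_add_le _ _).trans ?_
  have := abs_add_le (((k.1:ℕ):ℝ) * Real.log ph) (((k.2.1:ℕ):ℝ) * Real.log al)
  linarith

theorem wb (hl : |b.Lam| ≤ 1) (k : b.I) : |ww k| ≤ 4 * b.L := by
  have h3 : ((k.2.2:ℕ):ℝ) ≤ b.L := by exact_mod_cast k.2.2.2.le.trans o.L3L
  have h4 := o.vb k
  have h5 : ww k = vv k - (k.2.2 : ℕ) * b.Lam := by rw [← vw]; ring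
  have h6 : |((k.2.2:ℕ):ℝ) * b.Lam| ≤ b.L := by
    rw [abs_mul, Nat.abs_cast]
    nlinarith [abs_nonneg b.Lam]
  rw [h5]
  refine (abs_sub _ _).trans ?_
  linarith

omit o in
theorem exp_le_three (x : ℝ) (k : ℕ) (h : x ≤ k) : Real.exp x ≤ 3^k := by
  calc Real.exp x ≤ Real.exp k := Real.exp_le_exp.2 h
    _ = Real.exp 1 ^ k := by rw [← Real.exp_nat_mul]; simp
    _ ≤ 3^k := by gcongr; exact (Real.exp_one_lt_d9.le.trans (by norm_num))

/-- generic sum bound -/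
theorem sumb' (p : b.I → ℤ) (hp : ∀ k, |(p k : ℝ)| ≤ 3^b.eP) (μ ν : ℕ) (hμ : μ ≤ b.K) (hν : ν ≤ b.K)
    (g : b.I → ℝ) (T : ℝ) (hT : 0 ≤ T) (hg : ∀ k, |g k| ≤ T) :
    ∑ k, |(p k : ℝ) * q1 k ^ μ * q2 k ^ ν * g k| ≤ 3^(3*b.t + b.eP + 2*b.K*b.t) * T := by
  have hterm : ∀ k, |(p k : ℝ) * q1 k ^ μ * q2 k ^ ν * g k| ≤ 3^b.eP * (3^b.t)^b.K * (3^b.t)^b.K * T := by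
    intro k
    rw [abs_mul, abs_mul, abs_mul, abs_pow, abs_pow]
    have h1 : (1:ℝ) ≤ 3^b.t := one_le_pow₀ (by norm_num)
    have a1 : |(q1 k : ℝ)|^μ ≤ (3^b.t)^b.K :=
      (pow_le_pow_left₀ (abs_nonneg _) (o.q1b k) _).trans (pow_le_pow_right₀ h1 hμ)
    have a2 : |(q2 k : ℝ)|^ν ≤ (3^b.t)^b.K :=
      (pow_le_pow_left₀ (abs_nonneg _) (o.q2b k) _).trans (pow_le_pow_right₀ h1 hν)
    have := hp k
    have := hg k
    gcongr
  refine (Finset.sum_le_card_nsmul _ _ _ (fun k _ => hterm k)).trans ?_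
  have hcard : (Finset.univ : Finset b.I).card = b.Nu := by
    simp [Nu, mul_assoc]
  rw [hcard, nsmul_eq_mul]
  have hN : (b.Nu : ℝ) ≤ 3^(3*b.t) := by exact_mod_cast o.Nut
  calc (b.Nu:ℝ) * (3^b.eP * (3^b.t)^b.K * (3^b.t)^b.K * T)
      ≤ 3^(3*b.t) * (3^b.eP * (3^b.t)^b.K * (3^b.t)^b.K * T) := by gcongr
    _ = _ := by rw [pow_add, pow_add, ← pow_mul, show 2*b.K*b.t = b.t*b.K + b.t*b.K by ring, pow_add]; ring

theorem sumb (p : b.I → ℤ) (hp : ∀ k, |(p k : ℝ)| ≤ 3^b.eP) (μ ν : ℕ) (hμ : μ ≤ b.K) (hν : ν ≤ b.K)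
    (g : b.I → ℝ) (T : ℝ) (hT : 0 ≤ T) (hg : ∀ k, |g k| ≤ T) :
    |∑ k, (p k : ℝ) * q1 k ^ μ * q2 k ^ ν * g k| ≤ 3^(3*b.t + b.eP + 2*b.K*b.t) * T :=
  (Finset.abs_sum_le_sum_abs _ _).trans (o.sumb' p hp μ ν hμ hν g T hT hg)

theorem Fb (hl : |b.Lam| ≤ 1) (p : b.I → ℤ) (hp : ∀ k, |(p k : ℝ)| ≤ 3^b.eP) (μ ν : ℕ) (hμ : μ ≤ b.K) (hν : ν ≤ b.K)
    (N W : ℕ) (z : ℝ) (hz : 0 ≤ z) (hzW : z ≤ W) :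
    |F p μ ν N z| ≤ 3^(3*b.t + b.eP + 2*b.K*b.t + 4*b.L*W) * (4*b.L)^N := by
  unfold F
  have := o.sumb p hp μ ν hμ hν (fun k => ww k ^ N * Real.exp (ww k * z)) ((4*b.L)^N * 3^(4*b.L*W))
    (by positivity) (by
      intro k
      rw [abs_mul, abs_pow, abs_of_pos (Real.exp_pos _)]
      have h1 := o.wb hl k
      have h2 : Real.exp (ww k * z) ≤ 3^(4*b.L*W) := by
        apply exp_le_three
        push_cast
        have : ww k ≤ 4 * b.L := (le_abs_self _).trans h1
        calc ww k * z ≤ 4 * b.L * z := by gcongr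
          _ ≤ 4 * b.L * W := by gcongr
      gcongr)
  calc _ = |∑ k, (p k : ℝ) * q1 k ^ μ * q2 k ^ ν * (ww k ^ N * Real.exp (ww k * z))| := by
        congr 1; exact Finset.sum_congr rfl fun _ _ => by ring
    _ ≤ _ := this
    _ = _ := by rw [pow_add _ _ (4*b.L*W)]; ring

omit o in
theorem exp_sub_le (u v T : ℝ) (hu : u ≤ T) (hv : v ≤ T) : |Real.exp u - Real.exp v| ≤ |u - v| * Real.exp T := by
  have key : ∀ u v : ℝ, u ≤ T → v ≤ T → Real.exp u - Real.exp v ≤ |u - v| * Real.exp T := by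
    intro u v hu hv
    have h1 : Real.exp u - Real.exp v = Real.exp u * (1 - Real.exp (v-u)) := by
      rw [Real.exp_sub]; field_simp
    have h2 := Real.add_one_le_exp (v - u)
    have h3 : Real.exp u ≤ Real.exp T := Real.exp_le_exp.2 hu
    rw [h1]
    calc Real.exp u * (1 - Real.exp (v-u)) ≤ Real.exp u * |u - v| := by
          gcongr
          linarith [le_abs_self (u-v)]
      _ ≤ Real.exp T * |u - v| := by gcongr
      _ = _ := mul_comm _ _
  rw [abs_le]
  constructor
  · have := key v u hv hu
    rw [abs_sub_comm] at this
    linarith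
  · exact key u v hu hv

theorem FA (hl : |b.Lam| ≤ 1) (p : b.I → ℤ) (hp : ∀ k, |(p k : ℝ)| ≤ 3^b.eP) (μ ν : ℕ) (hμ : μ ≤ b.K) (hν : ν ≤ b.K)
    (l W : ℕ) (hW : l ≤ W) (hN : l ≤ b.Nu) :
    |F p μ ν 0 l - A p μ ν l| ≤ 3^(7*b.t + b.eP + 2*b.K*b.t + 4*b.L*W) * |b.Lam| := by
  have := o.sumb p hp μ ν hμ hν (fun k => Real.exp (ww k * l) - Real.exp (vv k * l))
    (3^(4*b.t) * |b.Lam| * 3^(4*b.L*W))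
    (by positivity) (by
      intro k
      have h1 := (le_abs_self _).trans (o.wb hl k)
      have h2 := (le_abs_self _).trans (o.vb k)
      have hL : (0:ℝ) ≤ b.L := by positivity
      have hlW : (l:ℝ) ≤ W := by exact_mod_cast hW
      have h3 : ww k * l ≤ (4*b.L*W : ℕ) := by
        push_cast
        calc ww k * l ≤ 4 * b.L * l := by gcongr
          _ ≤ 4 * b.L * W := by gcongr
      have h4 : vv k * l ≤ (4*b.L*W : ℕ) := by
        push_cast
        calc vv k * l ≤ 4 * b.L * l := by gcongr; linarith
          _ ≤ 4 * b.L * W := by gcongr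
      refine (exp_sub_le _ _ _ h3 h4).trans ?_
      have h5 : |ww k * l - vv k * l| = ((k.2.2 : ℕ):ℝ) * l * |b.Lam| := by
        rw [show ww k * l - vv k * l = -((vv k - ww k) * l) by ring, abs_neg, vw, abs_mul, abs_mul,
          Nat.abs_cast, Nat.abs_cast]; ring
      rw [h5]
      have h6 : ((k.2.2 : ℕ):ℝ) ≤ 3^b.t := by exact_mod_cast k.2.2.2.le.trans o.L3t
      have h7 : (l:ℝ) ≤ 3^(3*b.t) := by exact_mod_cast hN.trans o.Nut
      have h8 : ((k.2.2 : ℕ):ℝ) * l ≤ 3^(4*b.t) := by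
        calc ((k.2.2 : ℕ):ℝ) * l ≤ 3^b.t * 3^(3*b.t) := by gcongr
          _ = _ := by rw [← pow_add]; congr 1; ring
      have h9 := exp_le_three ((4*b.L*W : ℕ):ℝ) _ le_rfl
      gcongr)
  unfold F A
  rw [← Finset.sum_sub_distrib]
  calc _ = |∑ k, (p k : ℝ) * q1 k ^ μ * q2 k ^ ν * (Real.exp (ww k * l) - Real.exp (vv k * l))| := by
        congr 1; exact Finset.sum_congr rfl fun _ _ => by ring
    _ ≤ _ := this
    _ = _ := by
      rw [pow_add _ _ (4*b.L*W), show 7*b.t + b.eP + 2*b.K*b.t = (3*b.t + b.eP + 2*b.K*b.t) + 4*b.t by ring,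
        pow_add _ _ (4*b.t)]; ring

end OK
end BP

end

section
open Finset

namespace BP
variable {b : BP}

def MM (k : b.I) (l : ℕ) : M6 :=
  mP^((k.1:ℕ)*l) * mQ^((k.2.1:ℕ)*l) * b.MX^((k.2.2:ℕ)*l) * b.MY^((b.L3-1-(k.2.2:ℕ))*l)

namespace OK
variable (o : OK b)
include o

theorem MM_good (k : b.I) (l : ℕ) : Good (MM k l) (Real.exp (vv k * l) * b.y^((b.L3-1)*l)) (3^(3*b.L*l)) := by
  have h := (((good_P.pow ((k.1:ℕ)*l)).mul (good_Q.pow ((k.2.1:ℕ)*l))).mul (o.gx.pow ((k.2.2:ℕ)*l))).mul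
    (o.gy.pow ((b.L3-1-(k.2.2:ℕ))*l))
  have hv : Real.exp (vv k * l) * b.y^((b.L3-1)*l) = ph ^ ((k.1:ℕ) * l) * al ^ ((k.2.1:ℕ) * l) * b.x ^ ((k.2.2:ℕ) * l) *
      b.y ^ ((b.L3 - 1 - (k.2.2:ℕ)) * l) := by
    have hk := k.2.2.2
    have e1 : Real.exp (vv k * l) = ph ^ ((k.1:ℕ) * l) * al ^ ((k.2.1:ℕ) * l) * (b.x/b.y) ^ ((k.2.2:ℕ) * l) := by
      have hxy : 0 < b.x / b.y := div_pos o.hx o.hy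
      have : vv k * l = ((((k.1:ℕ)*l : ℕ) : ℝ) * Real.log ph + (((k.2.1:ℕ)*l : ℕ) : ℝ) * Real.log al) + (((k.2.2:ℕ)*l : ℕ) : ℝ) * Real.log (b.x/b.y) := by
        unfold vv rho; push_cast; ring
      rw [this, Real.exp_add, Real.exp_add, Real.exp_nat_mul, Real.exp_nat_mul, Real.exp_nat_mul,
        Real.exp_log ph_pos, Real.exp_log al_pos, Real.exp_log hxy]
    have e2 : (b.L3-1)*l = (k.2.2:ℕ)*l + (b.L3 - 1 - (k.2.2:ℕ)) * l := by
      rw [← add_mul]; congr 1; omega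
    have := o.hy.ne'
    rw [e1, e2, pow_add, div_pow]
    field_simp
  rw [hv]
  refine h.mono ?_
  have h1 := k.1.2; have h2 := k.2.1.2; have h3 := k.2.2.2
  rw [← pow_mul, ← pow_mul, ← pow_add, ← pow_add, ← pow_add]
  apply pow_le_pow_right₀ (by norm_num)
  calc (k.1:ℕ)*l + (k.2.1:ℕ)*l + b.G*((k.2.2:ℕ)*l) + b.G*((b.L3-1-(k.2.2:ℕ))*l)
      = ((k.1:ℕ) + (k.2.1:ℕ) + b.G*((k.2.2:ℕ) + (b.L3-1-(k.2.2:ℕ))))*l := by ring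
    _ ≤ (b.L + b.L + b.G * b.L3) * l := by gcongr; omega
    _ = _ := by rw [← L]; ring

theorem AA_good (p : b.I → ℤ) (hp : ∀ k, |(p k : ℝ)| ≤ 3^b.eP) (μ ν : ℕ) (hμ : μ ≤ b.K) (hν : ν ≤ b.K) (l : ℕ) :
    Good (∑ k, (p k * q1 k ^ μ * q2 k ^ ν) • MM k l) (A p μ ν l * b.y^((b.L3-1)*l))
      (3^(3*b.t + b.eP + 2*b.K*b.t + 3*b.L*l)) := by
  have h := Good.sum Finset.univ _ _ _ (fun k _ => (o.MM_good k l).smul (p k * q1 k ^ μ * q2 k ^ ν))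
  have hv : A p μ ν l * b.y^((b.L3-1)*l) = ∑ k, ((p k * q1 k ^ μ * q2 k ^ ν : ℤ) : ℝ) *
      (Real.exp (vv k * l) * b.y^((b.L3-1)*l)) := by
    unfold A; rw [Finset.sum_mul]
    refine Finset.sum_congr rfl fun k _ => ?_
    push_cast; ring
  rw [hv]
  refine h.mono ?_
  have := o.sumb' p hp μ ν hμ hν (fun _ => 3^(3*b.L*l)) (3^(3*b.L*l)) (by positivity) (by
    intro k; rw [abs_of_pos (by positivity)])
  rw [pow_add _ _ (3*b.L*l)]
  refine le_trans (le_of_eq ?_) this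
  refine Finset.sum_congr rfl fun k _ => ?_
  push_cast
  rw [abs_mul _ ((3:ℝ)^(3*b.L*l)), abs_of_pos (by positivity : (0:ℝ) < 3^(3*b.L*l))]

theorem siegel : ∃ p : b.I → ℤ, p ≠ 0 ∧ (∀ k, |(p k : ℝ)| ≤ 3^b.eP) ∧
    ∀ μ < b.K, ∀ ν < b.K, ∀ l < b.h, A p μ ν l = 0 := by
  let M : Matrix (Fin b.K × Fin b.K × Fin b.h × Fin 6) b.I ℤ := fun i k =>
    q1 k ^ (i.1:ℕ) * q2 k ^ (i.2.1:ℕ) * MM k (i.2.2.1:ℕ) 0 i.2.2.2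
  have hK : 0 < b.K := by
    have := o.L1; have := o.hr
    unfold K s; positivity
  have hcard : Fintype.card b.I = b.Nu := by simp [Nu, mul_assoc]
  obtain ⟨p, hp0, hp1, hp2⟩ := siegel' M (3^(2*b.K*b.t + 3*b.L*b.h)) (one_le_pow₀ (by norm_num)) (by
    rintro ⟨μ, ν, l, c⟩ k
    simp only [M]
    push_cast
    rw [abs_mul, abs_mul, abs_pow, abs_pow]
    have h1 : (1:ℝ) ≤ 3^b.t := one_le_pow₀ (by norm_num)
    have a1 : |(q1 k : ℝ)|^(μ:ℕ) ≤ (3^b.t)^b.K :=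
      (pow_le_pow_left₀ (abs_nonneg _) (o.q1b k) _).trans (pow_le_pow_right₀ h1 μ.2.le)
    have a2 : |(q2 k : ℝ)|^(ν:ℕ) ≤ (3^b.t)^b.K :=
      (pow_le_pow_left₀ (abs_nonneg _) (o.q2b k) _).trans (pow_le_pow_right₀ h1 ν.2.le)
    have a3 : |((MM k (l:ℕ) 0 c : ℤ) : ℝ)| ≤ 3^(3*b.L*b.h) := by
      have := (o.MM_good k l).2 0
      have h2 := (Finset.single_le_sum (f := fun c => |((MM k (l:ℕ) 0 c : ℤ) : ℝ)|)
            (fun _ _ => abs_nonneg _) (Finset.mem_univ c)).trans this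
      refine h2.trans (pow_le_pow_right₀ (by norm_num) ?_)
      gcongr; exact l.2.le
    calc |(q1 k : ℝ)|^(μ:ℕ) * |(q2 k : ℝ)|^(ν:ℕ) * |((MM k (l:ℕ) 0 c : ℤ) : ℝ)|
        ≤ (3^b.t)^b.K * (3^b.t)^b.K * 3^(3*b.L*b.h) := by gcongr
      _ = _ := by rw [pow_add, ← pow_mul, show 2*b.K*b.t = b.t*b.K + b.t*b.K by ring, pow_add])
    (by rw [hcard, o.NuEq]; simp; ring) (by
      have := o.h1
      simp only [Fintype.card_prod, Fintype.card_fin]; positivity)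
  have hpe : ∀ k, |(p k : ℝ)| ≤ 3^b.eP := by
    intro k
    refine (hp2 k).trans ?_
    rw [hcard]
    have hN : (b.Nu : ℝ) ≤ 3^(3*b.t) := by exact_mod_cast o.Nut
    calc (b.Nu:ℝ) * 3^(2*b.K*b.t + 3*b.L*b.h) ≤ 3^(3*b.t) * 3^(2*b.K*b.t + 3*b.L*b.h) := by gcongr
      _ = _ := by rw [← pow_add, eP]; congr 1; ring
  refine ⟨p, hp0, hpe, ?_⟩
  intro μ hμ ν hν l hl
  have hg := o.AA_good p hpe μ ν hμ.le hν.le l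
  have h0 := hg.row (by
    intro c
    have := congrFun hp1 (⟨μ, hμ⟩, ⟨ν, hν⟩, ⟨l, hl⟩, c)
    simp only [Matrix.mulVec, dotProduct, M, Pi.zero_apply] at this
    rw [Matrix.sum_apply, ← this]
    refine Finset.sum_congr rfl fun k _ => ?_
    simp only [Matrix.smul_apply, smul_eq_mul]; ring)
  exact (mul_eq_zero.1 h0).resolve_right (pow_ne_zero _ o.hy.ne')

theorem A_lower (p : b.I → ℤ) (hp : ∀ k, |(p k : ℝ)| ≤ 3^b.eP) (μ ν : ℕ) (hμ : μ ≤ b.K) (hν : ν ≤ b.K)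
    (l W : ℕ) (hW : l ≤ W) (hA : A p μ ν l ≠ 0) :
    1 ≤ |A p μ ν l| * 3^(9 + 6*(3*b.t + b.eP + 2*b.K*b.t + 3*b.L*W) + b.L*W) := by
  have hg := (o.AA_good p hp μ ν hμ hν l).mono (d := 3^(3*b.t + b.eP + 2*b.K*b.t + 3*b.L*W))
    (pow_le_pow_right₀ (by norm_num) (by gcongr))
  have h1 := hg.liouville (mul_ne_zero hA (pow_ne_zero _ o.hy.ne')) (one_le_pow₀ (by norm_num))
  refine h1.trans ?_
  have hy : |b.y^((b.L3-1)*l)| ≤ 3^(b.L*W) := by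
    rw [abs_pow]
    calc |b.y|^((b.L3-1)*l) ≤ (3^b.G)^((b.L3-1)*l) := pow_le_pow_left₀ (abs_nonneg _) o.gy.abs_le _
      _ = 3^(b.G*((b.L3-1)*l)) := (pow_mul _ _ _).symm
      _ ≤ _ := by
        apply pow_le_pow_right₀ (by norm_num)
        rw [← mul_assoc, L]
        gcongr
        omega
  rw [abs_mul, pow_add _ _ (b.L*W), pow_add _ 9, mul_comm 6, pow_mul _ _ 6]
  calc _ ≤ |A p μ ν l| * 3^(b.L*W) * (3^9 * (3^(3*b.t + b.eP + 2*b.K*b.t + 3*b.L*W))^6) := by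
        gcongr; norm_num
    _ = _ := by ring

set_option maxHeartbeats 1000000 in
/-- The key step. -/
theorem step (hl : |b.Lam| * 3^b.E < 1) (p : b.I → ℤ) (hp : ∀ k, |(p k : ℝ)| ≤ 3^b.eP)
    (k H H' : ℕ) (hk : k + b.s ≤ b.K) (hH : b.h ≤ H) (hHH : H ≤ H') (hHr : H' ≤ b.r * H) (hHN : H' ≤ b.Nu)
    (h0 : ∀ μ < k + b.s, ∀ ν < k + b.s, ∀ l < H, A p μ ν l = 0) :
    ∀ μ < k, ∀ ν < k, ∀ l < H', A p μ ν l = 0 := by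
  have hl1 : |b.Lam| ≤ 1 := by
    have : (1:ℝ) ≤ 3^b.E := one_le_pow₀ (by norm_num)
    nlinarith [abs_nonneg b.Lam]
  intro μ hμ ν hν l hl'
  by_contra hA
  set W := b.r * H with hW
  set N := b.s * H with hN
  have hNW : N = 100 * (b.L * W) := by rw [hN, hW, s]; ring
  have ht := o.ht
  have hLW1 : 756 * b.t ≤ b.L * W := by
    calc 756 * b.t = 1 * (1 * b.h) := by unfold h; ring
      _ ≤ b.L * (b.r * H) := by gcongr; exact o.L1; exact o.hr
  have hLh : b.L * b.h ≤ b.L * W := by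
    rw [hW]
    calc b.L * b.h = b.L * (1 * b.h) := by ring
      _ ≤ _ := by gcongr; exact o.hr
  have hKt : 28 * (b.K * b.t) ≤ 100 * (b.L * W) := by
    calc 28 * (b.K * b.t) = 100 * (b.L * (b.r * b.h)) := by unfold K s h; ring
      _ ≤ _ := by rw [hW]; gcongr
  set m1 := 3*b.t + b.eP + 2*b.K*b.t + 4*b.L*W with hm1
  set Q := 9 + 6*(3*b.t + b.eP + 2*b.K*b.t + 3*b.L*W) + b.L*W with hQ
  have c1 : Q + m1 + 1 ≤ 2 * N := by
    rw [hQ, hm1, hNW]; unfold eP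
    nlinarith
  set d1 := b.s + 7*b.t + b.eP + 2*b.K*b.t + 4*b.L*W with hd1
  have hsN : b.s ≤ N := by rw [hN]; exact Nat.le_mul_of_pos_right _ (lt_of_lt_of_le o.h1 hH)
  have c2 : d1 + (5*b.t+2)*N + 1 + Q + 1 ≤ b.E := by
    have e1 : d1 + Q ≤ N + 4*b.t + 2 * N := by
      have : d1 + Q + 1 ≤ b.s + 4 * b.t + (Q + m1 + 1) := by rw [hd1, hm1]; omega
      omega
    have e2 : 14 * b.t * N ≤ b.E := by
      have : H ≤ b.Nu := hHH.trans hHN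
      calc 14 * b.t * N = 1400 * b.t * b.r * b.L * H := by rw [hN, s]; ring
        _ ≤ 1400 * b.t * b.r * b.L * b.Nu := by gcongr
        _ = b.E := by unfold E Nu; ring
    have e3 : 756 * b.t ≤ N := by rw [hNW]; omega
    have e4 : N ≤ b.t * N := Nat.le_mul_of_pos_left _ ht
    nlinarith
  clear_value W N m1 Q d1
  -- hermite bound
  have hR1 : 1 ≤ H' := o.h1.trans (hH.trans hHH)
  have key := hermite_bound b.s H (H':ℝ) (by exact_mod_cast hR1) (by exact_mod_cast hHH) N (fun _ => b.s)
    (F p μ ν) (3^m1 * (4*b.L)^N) (3^d1 * |b.Lam|) (F_jet p μ ν) (by simp [hN, mul_comm]) (fun _ => le_rfl)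
    (by
      intro z hz hzR
      rw [hm1]
      exact o.Fb hl1 p hp μ ν (by omega) (by omega) N W z hz (hzR.trans (by exact_mod_cast hHr)))
    (by positivity)
    (by
      intro l0 hl0 i hi
      rw [F_add]
      have hb : ∀ j ∈ range (i+1), |(i.choose j : ℝ) * Real.log ph ^ j * Real.log al ^ (i-j) *
          F p (μ+j) (ν+(i-j)) 0 (l0:ℝ)| ≤ i.choose j * (3^(7*b.t + b.eP + 2*b.K*b.t + 4*b.L*W) * |b.Lam|) := by
        intro j hj
        have hj' : j ≤ i := by simp at hj; omega
        have f1 := o.FA hl1 p hp (μ+j) (ν+(i-j)) (by omega) (by omega) l0 W (by omega) (by omega)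
        rw [h0 (μ+j) (by omega) (ν+(i-j)) (by omega) l0 hl0, sub_zero] at f1
        rw [abs_mul, abs_mul, abs_mul, Nat.abs_cast, abs_pow, abs_pow, abs_of_pos lph.1, abs_of_pos lal.1]
        have g1 : Real.log ph ^ j ≤ 1 := pow_le_one₀ lph.1.le lph.2
        have g2 : Real.log al ^ (i-j) ≤ 1 := pow_le_one₀ lal.1.le lal.2
        have := lph.1; have := lal.1
        calc (i.choose j : ℝ) * Real.log ph ^ j * Real.log al ^ (i-j) * |F p (μ+j) (ν+(i-j)) 0 (l0:ℝ)|
            ≤ (i.choose j : ℝ) * 1 * 1 * (3^(7*b.t + b.eP + 2*b.K*b.t + 4*b.L*W) * |b.Lam|) := by gcongr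
          _ = _ := by ring
      refine (Finset.abs_sum_le_sum_abs _ _).trans ((Finset.sum_le_sum hb).trans ?_)
      rw [← Finset.sum_mul]
      have hch : (∑ j ∈ range (i+1), (i.choose j : ℝ)) = 2^i := by
        exact_mod_cast Nat.sum_range_choose i
      rw [hch]
      have hfa : (1:ℝ) ≤ i.factorial := by exact_mod_cast Nat.one_le_iff_ne_zero.2 (Nat.factorial_ne_zero i)
      have h23 : (2:ℝ)^i ≤ 3^b.s := by
        calc (2:ℝ)^i ≤ 3^i := by gcongr; norm_num
          _ ≤ 3^b.s := pow_le_pow_right₀ (by norm_num) hi.le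
      calc (2:ℝ)^i * (3^(7*b.t + b.eP + 2*b.K*b.t + 4*b.L*W) * |b.Lam|)
          ≤ 3^b.s * (3^(7*b.t + b.eP + 2*b.K*b.t + 4*b.L*W) * |b.Lam|) := by gcongr
        _ = 3^d1 * |b.Lam| * 1 := by
          rw [hd1, show b.s + 7*b.t + b.eP + 2*b.K*b.t + 4*b.L*W = b.s + (7*b.t + b.eP + 2*b.K*b.t + 4*b.L*W) by ring, pow_add _ b.s]
          ring
        _ ≤ _ := by gcongr)
    (l:ℝ) (by positivity) (by exact_mod_cast hl'.le)
  have hFA := o.FA hl1 p hp μ ν (by omega) (by omega) l W (by omega) (by omega)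
  have hlow := o.A_lower p hp μ ν (by omega) (by omega) l W (by omega) hA
  rw [← hQ] at hlow
  -- main term
  have main : (3:ℝ)^m1 * (4*b.L)^N * ((H':ℝ)^N / N.factorial) * 3^Q ≤ 1/3 := by
    have hH'W : (H':ℝ) ≤ W := by exact_mod_cast hHr
    have hNp : (0:ℝ) < N.factorial := by positivity
    have f1 : (N:ℝ)^N / N.factorial ≤ 3^N := (Real.pow_div_factorial_le_exp _ (by positivity) _).trans (exp_le_three _ _ le_rfl)
    have f1' : (N:ℝ)^N / N.factorial ≤ (2.75:ℝ)^N := by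
      refine (Real.pow_div_factorial_le_exp _ (by positivity) _).trans ?_
      rw [← mul_one (N:ℝ), Real.exp_nat_mul]
      gcongr
      exact Real.exp_one_lt_d9.le.trans (by norm_num)
    have f2 : (4*b.L:ℝ)^N * (H':ℝ)^N ≤ (1/25)^N * (N:ℝ)^N := by
      rw [← mul_pow, ← mul_pow]
      apply pow_le_pow_left₀ (by positivity)
      have e : (N:ℝ) = 100 * (b.L * W) := by rw [hNW]; push_cast; ring
      have : (b.L:ℝ) * H' ≤ b.L * W := by gcongr
      rw [e]
      linarith
    have f3 : (4*b.L:ℝ)^N * ((H':ℝ)^N / N.factorial) ≤ (1/9)^N := by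
      calc (4*b.L:ℝ)^N * ((H':ℝ)^N / N.factorial) = (4*b.L:ℝ)^N * (H':ℝ)^N / N.factorial := by ring
        _ ≤ (1/25)^N * (N:ℝ)^N / N.factorial := by gcongr
        _ = (1/25)^N * ((N:ℝ)^N / N.factorial) := by ring
        _ ≤ (1/25)^N * 2.75^N := by gcongr
        _ = (1/25*2.75)^N := by rw [mul_pow]
        _ ≤ (1/9)^N := by gcongr; norm_num
    calc (3:ℝ)^m1 * (4*b.L)^N * ((H':ℝ)^N / N.factorial) * 3^Q
        = 3^m1 * 3^Q * ((4*b.L)^N * ((H':ℝ)^N / N.factorial)) := by ring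
      _ ≤ 3^m1 * 3^Q * (1/9)^N := by gcongr
      _ = 3^(Q+m1+1) * (1/9)^N * (1/3) := by rw [pow_add, pow_add]; ring
      _ ≤ 3^(2*N) * (1/9)^N * (1/3) := by
          have := pow_le_pow_right₀ (by norm_num : (1:ℝ) ≤ 3) c1
          gcongr
      _ = 1/3 := by
          rw [pow_mul, ← mul_pow]; norm_num
  have err : ((3:ℝ)^d1 * |b.Lam| * (2*H'*(b.s+1))^N + 3^(7*b.t + b.eP + 2*b.K*b.t + 4*b.L*W) * |b.Lam|) * 3^Q ≤ 1/3 := by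
    have g1 : (2*(H':ℝ)*(b.s+1)) ≤ 3^(5*b.t+2) := by
      have a1 : (H':ℝ) ≤ 3^(3*b.t) := by exact_mod_cast hHN.trans o.Nut
      have a2 : (b.s:ℝ) ≤ 3^(2*b.t) := by exact_mod_cast o.st
      have a3 : (1:ℝ) ≤ 3^(2*b.t) := one_le_pow₀ (by norm_num)
      calc (2*(H':ℝ)*(b.s+1)) ≤ 2 * 3^(3*b.t) * (3^(2*b.t) + 3^(2*b.t)) := by gcongr
        _ = 4 * 3^(5*b.t) := by rw [show 5*b.t = 3*b.t+2*b.t by ring, pow_add]; ring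
        _ ≤ _ := by rw [pow_add]; nlinarith [pow_pos (by norm_num : (0:ℝ)<3) (5*b.t)]
    have g2 : (2*(H':ℝ)*(b.s+1))^N ≤ 3^((5*b.t+2)*N) := by
      exact (pow_le_pow_left₀ (by positivity) g1 N).trans_eq (pow_mul _ _ _).symm
    have g3 : (3:ℝ)^(7*b.t + b.eP + 2*b.K*b.t + 4*b.L*W) ≤ 3^(d1 + (5*b.t+2)*N) :=
      pow_le_pow_right₀ (by norm_num) (by rw [hd1]; omega)
    calc _ ≤ ((3:ℝ)^d1 * |b.Lam| * 3^((5*b.t+2)*N) + 3^(d1 + (5*b.t+2)*N) * |b.Lam|) * 3^Q := by gcongr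
      _ = 2 * 3^(d1 + (5*b.t+2)*N) * |b.Lam| * 3^Q := by rw [pow_add]; ring
      _ ≤ 3 * 3^(d1 + (5*b.t+2)*N) * |b.Lam| * 3^Q := by gcongr; norm_num
      _ = 3^(d1 + (5*b.t+2)*N + 1 + Q + 1) * |b.Lam| * (1/3) := by rw [pow_add _ _ 1, pow_add _ _ Q, pow_add _ _ 1]; ring
      _ ≤ 3^b.E * |b.Lam| * (1/3) := by
          have := pow_le_pow_right₀ (by norm_num : (1:ℝ) ≤ 3) c2
          gcongr
      _ ≤ 1 * (1/3) := by rw [mul_comm _ |b.Lam|]; gcongr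
      _ = 1/3 := by ring
  have hsum : |A p μ ν l| ≤ 3^m1 * (4*b.L)^N * ((H':ℝ)^N / N.factorial) + (3^d1 * |b.Lam| * (2*H'*(b.s+1))^N + 3^(7*b.t + b.eP + 2*b.K*b.t + 4*b.L*W) * |b.Lam|) := by
    have : |A p μ ν l| ≤ |F p μ ν 0 l| + |F p μ ν 0 l - A p μ ν l| := by
      have := abs_sub (F p μ ν 0 l) (F p μ ν 0 l - A p μ ν l)
      simpa using this
    linarith
  have : |A p μ ν l| * 3^Q ≤ (3^m1 * (4*b.L)^N * ((H':ℝ)^N / N.factorial) + (3^d1 * |b.Lam| * (2*H'*(b.s+1))^N + 3^(7*b.t + b.eP + 2*b.K*b.t + 4*b.L*W) * |b.Lam|)) * 3^Q := by gcongr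
  rw [add_mul] at this
  linarith

end OK
end BP

end

section
open Finset

namespace BP
variable {b : BP}
namespace OK
variable (o : OK b)
include o

theorem iter (hl : |b.Lam| * 3^b.E < 1) (p : b.I → ℤ) (hp : ∀ k, |(p k : ℝ)| ≤ 3^b.eP)
    (h0 : ∀ μ < b.K, ∀ ν < b.K, ∀ l < b.h, A p μ ν l = 0) (j : ℕ) (hj : j ≤ 26) :
    ∀ μ < (27-j)*b.s, ∀ ν < (27-j)*b.s, ∀ l < min (b.h*b.r^j) b.Nu, A p μ ν l = 0 := by
  induction j with
  | zero =>
    intro μ hμ ν hν l hl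
    apply h0 μ (by simpa [K] using hμ) ν (by simpa [K] using hν) l
    simp at hl; exact hl.1
  | succ j ih =>
    have ih := ih (by omega)
    have e : (27-j)*b.s = (27-(j+1))*b.s + b.s := by
      rw [show 27 - j = (27-(j+1)) + 1 by omega]; ring
    rw [e] at ih
    have hr := o.hr
    have hrj : 1 ≤ b.r^j := Nat.one_le_pow _ _ hr
    apply o.step hl p hp _ _ _ _ _ _ _ _ ih
    · rw [← e, K]; gcongr; omega
    · exact le_min (Nat.le_mul_of_pos_right _ hrj) o.hNu
    · apply min_le_min _ le_rfl
      gcongr <;> omega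
    · rw [← Nat.mul_min_mul_left]
      apply min_le_min
      · rw [pow_succ]; apply le_of_eq; ring
      · exact Nat.le_mul_of_pos_left _ hr
    · exact min_le_right _ _

theorem vv_inj {k k' : b.I} (h : vv k = vv k') (h3 : k.2.2 = k'.2.2) : k = k' := by
  have h1 : ((k.1:ℕ):ℝ) * Real.log ph + ((k.2.1:ℕ):ℝ) * Real.log al =
      ((k'.1:ℕ):ℝ) * Real.log ph + ((k'.2.1:ℕ):ℝ) * Real.log al := by
    unfold vv at h; rw [h3] at h; linarith
  have h2 := congrArg Real.exp h1
  rw [Real.exp_add, Real.exp_add, Real.exp_nat_mul, Real.exp_nat_mul, Real.exp_nat_mul, Real.exp_nat_mul,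
    Real.exp_log ph_pos, Real.exp_log al_pos] at h2
  obtain ⟨e1, e2⟩ := ph_al_inj h2
  ext
  · exact e1
  · exact e2
  · rw [h3]

theorem finish (p : b.I → ℤ) (h0 : ∀ μ < b.s, ∀ l < b.Nu, A p μ 0 l = 0) : p = 0 := by
  classical
  have hcard : (univ : Finset b.I).card = b.Nu := by simp [Nu, mul_assoc]
  have hsL : b.L3 ≤ b.s := by
    have := o.L3L; have := o.hr
    unfold s; nlinarith
  funext k0
  set S : Finset b.I := univ.filter (fun k => Real.exp (vv k) = Real.exp (vv k0)) with hS
  have hinjS : ∀ k ∈ S, ∀ k' ∈ S, k.2.2 = k'.2.2 → k = k' := by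
    intro k hk k' hk' h3
    simp [hS] at hk hk'
    exact o.vv_inj (hk.trans hk'.symm) h3
  have hScard : S.card ≤ b.L3 := by
    have := Finset.card_le_card_of_injOn (s := S) (t := (univ : Finset (Fin b.L3))) (fun k => k.2.2) (by simp)
      (fun k hk k' hk' h => hinjS k hk k' hk' h)
    simpa using this
  have m1 : ∀ μ < b.s, ∑ k ∈ S, (p k : ℝ) * (q1 k : ℝ)^μ = 0 := by
    intro μ hμ
    apply moment (univ : Finset b.I) (fun k => (p k : ℝ) * (q1 k : ℝ)^μ) (fun k => Real.exp (vv k)) _ k0 (mem_univ _)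
    intro l hl
    rw [hcard] at hl
    rw [← h0 μ hμ l hl, A]
    refine Finset.sum_congr rfl fun k _ => ?_
    rw [mul_comm (vv k), Real.exp_nat_mul]; ring
  have hk0 : k0 ∈ S := by simp [hS]
  have m2 := moment S (fun k => (p k : ℝ)) (fun k => (q1 k : ℝ)) (fun l hl => m1 l (by omega)) k0 hk0
  have hS1 : S.filter (fun k => (q1 k : ℝ) = (q1 k0 : ℝ)) = {k0} := by
    ext k
    simp only [mem_filter, mem_singleton]
    constructor
    · rintro ⟨hk, hq⟩
      apply hinjS k hk k0 hk0
      have hq' : q1 k = q1 k0 := by exact_mod_cast hq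
      unfold q1 at hq'
      have a1 := k.1.2; have a2 := k0.1.2; have a3 := o.hLn
      ext
      by_contra hne
      rcases Nat.lt_or_gt_of_ne hne with hlt | hlt
      · have h5 : (b.n:ℤ) * ((k.2.2:ℕ) + 1) ≤ b.n * (k0.2.2:ℕ) :=
          mul_le_mul_of_nonneg_left (by exact_mod_cast hlt) (by positivity)
        rw [mul_add] at h5
        omega
      · have h5 : (b.n:ℤ) * ((k0.2.2:ℕ) + 1) ≤ b.n * (k.2.2:ℕ) :=
          mul_le_mul_of_nonneg_left (by exact_mod_cast hlt) (by positivity)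
        rw [mul_add] at h5
        omega
    · rintro rfl; exact ⟨hk0, rfl⟩
  rw [hS1] at m2
  simpa using m2

theorem main : 1 ≤ |b.Lam| * 3^b.E := by
  by_contra hl
  push Not at hl
  obtain ⟨p, hp0, hp, h0⟩ := o.siegel
  have h1 := o.iter hl p hp h0 26 le_rfl
  apply hp0
  apply o.finish
  intro μ hμ l hl
  have hs : 0 < b.s := by omega
  apply h1 μ (by omega) 0 (by omega) l
  rw [min_eq_right o.hJ]; exact hl

end OK
end BP

/-- clean form -/
theorem baker (n m t G : ℕ) (x y : ℝ) (MX MY : M6) (ht : 1 ≤ t) (hG : 1 ≤ G) (hx : 0 < x) (hy : 0 < y)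
    (gx : Good MX x (3^G)) (gy : Good MY y (3^G)) (hlog : |Real.log (x/y)| ≤ G)
    (w : ℕ) (hw : 1 ≤ w) (hGt : G * t ≤ w^10) 
    (hn : 64*10^12*G*t*w^2*(n+1) ≤ 3^t) (hm : 64*10^12*G*t*w^2*(m+1) ≤ 3^t)
    (hLn : 64*10^12*G*t*w^2 ≤ n) :
    1 ≤ |n * Real.log ph - m * Real.log al + Real.log (x/y)| * 3^(723*10^57*G^3*t^5*w^9) := by
  have hL3 : ∀ b : BP, b.t = t → b.r = 31 * w → b.L3 = 63555619680000 * t * w^2 := by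
    intro b h1 h2
    unfold BP.L3 BP.h
    rw [h1, h2]; ring
  let b : BP := ⟨n, m, t, G, 31 * w, x, y, MX, MY⟩
  have e3 : b.L3 = 63555619680000 * t * w^2 := hL3 b rfl rfl
  have eL : b.L = G * b.L3 := rfl
  have hbig : ∀ k : ℕ, b.L + k * b.L3 ≤ 64*10^12*G*t*w^2*(k+1) := by
    intro k
    rw [eL, e3]
    calc G * (63555619680000 * t * w^2) + k * (63555619680000 * t * w^2)
        ≤ G * (64*10^12 * t * w^2) + (G * k) * (64*10^12 * t * w^2) := by
          gcongr
          · norm_num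
          · exact Nat.le_mul_of_pos_left _ hG
          · norm_num
      _ = _ := by ring
  have o : b.OK := {
    ht := ht, hG := hG, hr := by change 1 ≤ 31 * w; omega
    hx := hx, hy := hy, gx := gx, gy := gy, hlog := hlog
    hn := (hbig n).trans hn
    hm := (hbig m).trans hm
    hLn := by
      refine le_trans ?_ hLn
      have := hbig 0
      simpa using this
    hJ := by
      have e : b.Nu = G^2 * b.L3^3 := by unfold BP.Nu; rw [eL]; ring
      rw [e, e3]
      change _ ≤ (756 * t) * (31 * w)^26
      calc G^2 * (63555619680000 * t * w^2)^3 = (G*t)^2 * (63555619680000^3 * t * w^6) := by ring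
        _ ≤ (w^10)^2 * (756 * 31^26 * t * w^6) := by
          gcongr
          norm_num
        _ = _ := by ring }
  have key := o.main
  refine key.trans ?_
  have e : b.E ≤ 723*10^57*G^3*t^5*w^9 := by
    have : b.E = 1400 * t * (31*w) * (G * b.L3)^3 * b.L3 := rfl
    rw [this, e3]
    calc 1400 * t * (31*w) * (G * (63555619680000 * t * w^2))^3 * (63555619680000 * t * w^2)
        = (1400 * 31 * 63555619680000^4) * (G^3*t^5*w^9) := by ring
      _ ≤ (723*10^57) * (G^3*t^5*w^9) := Nat.mul_le_mul_right _ (by norm_num)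
      _ = _ := by ring
  have := pow_le_pow_right₀ (by norm_num : (1:ℝ) ≤ 3) e
  exact mul_le_mul_of_nonneg_left this (abs_nonneg _)

end

section
noncomputable def s5 : ℝ := 2 * ph - 1
noncomputable def CC : ℝ := 3 * al^2 - 2 * al - 1
noncomputable def up (d : ℕ) : ℝ := if d = 0 then 1 else 1 - (ph⁻¹)^d
noncomputable def ua (d : ℕ) : ℝ := if d = 0 then 1 else 1 - (al⁻¹)^d

noncomputable def lam (n m i j : ℕ) : ℝ :=
  n * Real.log ph - (m + 1 : ℕ) * Real.log al + Real.log ((CC * up i) / (s5 * ua j))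

theorem s5_b : 2.236 < s5 ∧ s5 < 2.2362 := by
  have h1 := ph_gt; have h2 := ph_lt
  unfold s5; constructor <;> linarith
theorem CC_b : 5.46 < CC ∧ CC < 5.48 := by
  have h1 := al_gt; have h2 := al_lt
  unfold CC; constructor <;> nlinarith
theorem phi_b : 0.618 < ph⁻¹ ∧ ph⁻¹ < 0.6181 := by
  rw [ph_inv]; constructor <;> linarith [ph_gt, ph_lt]
theorem ali_b : 0.543 < al⁻¹ ∧ al⁻¹ < 0.544 := by
  have h1 := al_gt; have h2 := al_lt; have := al_pos
  have e : al * al⁻¹ = 1 := mul_inv_cancel₀ this.ne'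
  constructor <;> nlinarith
theorem up_b (d : ℕ) : 0.38 < up d ∧ up d ≤ 1 := by
  unfold up
  split_ifs with h
  · norm_num
  · have h1 := phi_b
    have h2 : (ph⁻¹)^d ≤ ph⁻¹ := pow_le_of_le_one (by linarith) (by linarith) h
    have h3 : 0 < (ph⁻¹)^d := pow_pos (by linarith) _
    constructor <;> linarith
theorem ua_b (d : ℕ) : 0.45 < ua d ∧ ua d ≤ 1 := by
  unfold ua
  split_ifs with h
  · norm_num
  · have h1 := ali_b
    have h2 : (al⁻¹)^d ≤ al⁻¹ := pow_le_of_le_one (by linarith) (by linarith) h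
    have h3 : 0 < (al⁻¹)^d := pow_pos (by linarith) _
    constructor <;> linarith

theorem trib_rec (n : ℕ) : trib (n+3) = trib (n + 2) + trib (n + 1) + trib n := rfl

theorem trib_G (m : ℕ) : (trib (m+2) : ℝ) + (al-1) * trib (m+1) + al⁻¹ * trib m = al^(m+1) := by
  induction m with
  | zero => simp [trib]
  | succ m ih =>
    rw [pow_succ, ← ih, show m + 1 + 2 = m + 3 by ring, trib_rec]
    push_cast
    have := al_cube
    have e := al_inv
    rw [e] at *
    linear_combination (-(trib m : ℝ)) * al_cube

noncomputable def er (m : ℕ) : ℝ := trib m - al^(m+1) / CC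

theorem er_rec (m : ℕ) : er (m+2) = -(al-1) * er (m+1) - al⁻¹ * er m := by
  have h := trib_G m
  unfold er
  have hC : CC ≠ 0 := by linarith [CC_b.1]
  have : al^(m+2+1) / CC + (al-1)*(al^(m+1+1)/CC) + al⁻¹ * (al^(m+1)/CC) = al^(m+1) := by
    rw [al_inv]
    field_simp
    rw [CC]; ring
  linarith

theorem er_b (m : ℕ) : |er m| ≤ 1 := by
  have hQ : ∀ m, er (m+1)^2 + (al-1)*er (m+1)*er m + al⁻¹ * er m ^2 ≤ 0.3 := by
    intro m
    induction m with
    | zero =>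
      have h1 := CC_b; have h2 := al_gt; have h3 := al_lt; have h4 := ali_b
      have e0 : -0.34 ≤ er 0 ∧ er 0 ≤ 0 := by
        have : er 0 = -(al / CC) := by simp [er, trib]
        rw [this]
        constructor
        · rw [neg_le_neg_iff, div_le_iff₀ (by linarith)]; linarith
        · rw [neg_nonpos]; apply div_nonneg <;> linarith
      have e1 : 0 ≤ er 1 ∧ er 1 ≤ 0.4 := by
        have : er 1 = 1 - al^2 / CC := by simp [er, trib]
        rw [this]
        constructor
        · rw [sub_nonneg, div_le_iff₀ (by linarith)]; nlinarith
        · have : 0.6 ≤ al^2/CC := by rw [le_div_iff₀ (by linarith)]; nlinarith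
          linarith
      have f1 : er 1 ^2 ≤ 0.16 := by nlinarith
      have f2 : er 0 ^2 ≤ 0.12 := by nlinarith
      have f3 : (al-1) * er 1 * er 0 ≤ 0 := mul_nonpos_of_nonneg_of_nonpos (mul_nonneg (by linarith) e1.1) e0.2
      have f4 : al⁻¹ * er 0 ^2 ≤ 0.544 * 0.12 := by gcongr; linarith
      simp only [zero_add]
      linarith
    | succ m ih =>
      have e : er (m+1+1)^2 + (al-1)*er (m+1+1)*er (m+1) + al⁻¹ * er (m+1) ^2 =
          al⁻¹ * (er (m+1)^2 + (al-1)*er (m+1)*er m + al⁻¹ * er m ^2) := by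
        rw [show m+1+1 = m+2 by ring, er_rec m]; ring
      rw [e]
      have h4 := ali_b
      nlinarith
  have h := hQ m
  have h2 := al_gt; have h3 := al_lt; have h4 := ali_b
  have h5 : 0 ≤ (er (m+1) + (al-1)/2*er m)^2 := sq_nonneg _
  have h6 : (al⁻¹ - (al-1)^2/4) * er m^2 ≤ 0.3 := by nlinarith
  have h7 : 0.36 ≤ al⁻¹ - (al-1)^2/4 := by nlinarith
  have h8 : er m ^2 ≤ 1^2 := by nlinarith [sq_nonneg (er m)]
  exact abs_le_of_sq_le_sq h8 (by norm_num)

theorem fib_b (n : ℕ) : |(Nat.fib n : ℝ) - ph^n / s5| ≤ 0.5 := by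
  have h := Real.coe_fib_eq n
  have e : √5 = s5 := by unfold s5 ph Real.goldenRatio; ring
  rw [h, e, show Real.goldenRatio = ph from rfl, sub_div, sub_sub_cancel_left, abs_neg, abs_div]
  have h5 := s5_b
  rw [abs_of_pos (by linarith : 0 < s5), div_le_iff₀ (by linarith), abs_pow]
  have : |Real.goldenConj| ≤ 1 := by
    rw [abs_le]
    constructor <;> linarith [Real.neg_one_lt_goldenConj, Real.goldenConj_neg]
  have := pow_le_one₀ (n := n) (abs_nonneg _) this
  linarith

theorem abs_log_div {P Q e c : ℝ} (hP : 0 < P) (hQ : 0 < Q) (hc : 0 < c) (h : |P - Q| ≤ e) (h1 : c ≤ P) (h2 : c ≤ Q) :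
    |Real.log (P/Q)| ≤ e / c := by
  have he : 0 ≤ e := (abs_nonneg _).trans h
  have h3 := Real.log_le_sub_one_of_pos (div_pos hP hQ)
  have h4 := Real.log_le_sub_one_of_pos (div_pos hQ hP)
  have h5 : Real.log (Q/P) = - Real.log (P/Q) := by rw [← Real.log_inv, inv_div]
  rw [h5] at h4
  rw [abs_le] at h ⊢
  have a1 : Q/P - 1 ≤ e/c := by
    calc Q/P - 1 = (Q-P)/P := by field_simp
      _ ≤ e/P := by gcongr; linarith
      _ ≤ e/c := by gcongr
  have a2 : P/Q - 1 ≤ e/c := by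
    calc P/Q - 1 = (P-Q)/Q := by field_simp
      _ ≤ e/Q := by gcongr; linarith
      _ ≤ e/c := by gcongr
  constructor <;> linarith

theorem lam_eq (n m i j : ℕ) : lam n m i j = Real.log ((ph^n/s5 * up i) / (al^(m+1)/CC * ua j)) := by
  have h1 := s5_b; have h2 := CC_b; have h3 := up_b i; have h4 := ua_b j
  have hs : s5 ≠ 0 := by linarith
  have hC : CC ≠ 0 := by linarith
  have hu : up i ≠ 0 := by linarith
  have hv : ua j ≠ 0 := by linarith
  have ha := al_pos.ne'; have hp := ph_pos.ne'
  unfold lam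
  have e : (ph^n/s5 * up i) / (al^(m+1)/CC * ua j) = (ph^n / al^(m+1)) * ((CC * up i) / (s5 * ua j)) := by
    field_simp
  rw [e, Real.log_mul (by positivity) (by positivity), Real.log_div (pow_ne_zero n hp) (pow_ne_zero (m+1) ha),
    Real.log_pow, Real.log_pow]

theorem ph5 (v : ℕ) {d : ℕ} (h : 5*v ≤ d) : (ph⁻¹)^d ≤ 1/10^v := by
  have h1 := phi_b
  calc (ph⁻¹)^d ≤ (ph⁻¹)^(5*v) := pow_le_pow_of_le_one (by linarith) (by linarith) h
    _ = ((ph⁻¹)^5)^v := pow_mul _ _ _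
    _ ≤ (1/10)^v := by
      apply pow_le_pow_left₀ (pow_nonneg (by linarith) _)
      calc (ph⁻¹)^5 ≤ 0.6181^5 := pow_le_pow_left₀ (by linarith) (by linarith) _
        _ ≤ _ := by norm_num
    _ = _ := by rw [div_pow, one_pow]
theorem al4 (v : ℕ) {d : ℕ} (h : 4*v ≤ d) : (al⁻¹)^d ≤ 1/10^v := by
  have h1 := ali_b
  calc (al⁻¹)^d ≤ (al⁻¹)^(4*v) := pow_le_pow_of_le_one (by linarith) (by linarith) h
    _ = ((al⁻¹)^4)^v := pow_mul _ _ _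
    _ ≤ (1/10)^v := by
      apply pow_le_pow_left₀ (pow_nonneg (by linarith) _)
      calc (al⁻¹)^4 ≤ 0.544^4 := pow_le_pow_left₀ (by linarith) (by linarith) _
        _ ≤ _ := by norm_num
    _ = _ := by rw [div_pow, one_pow]

structure Sol (n m d e : ℕ) : Prop where
  hd : 1 ≤ d
  he : 1 ≤ e
  hn : d + 2 ≤ n
  hm : e + 2 ≤ m
  hn30 : 30 ≤ n
  eq : (Nat.fib n : ℤ) - trib m = Nat.fib (n-d) - trib (m-e)

namespace Sol
variable {n m d e : ℕ} (S : Sol n m d e)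
include S

theorem basic : ∃ P Q ε : ℝ, P = ph^n/s5 ∧ Q = al^(m+1)/CC ∧ |ε| ≤ 3 ∧
    P * up d = Q * ua e + ε ∧ 1.1 ≤ P * (ph⁻¹)^d ∧ 1.1 ≤ Q * (al⁻¹)^e ∧ P ≤ 3 * Q ∧ Q ≤ 3 * P ∧ 100 ≤ P := by
  obtain ⟨n1, rfl⟩ := Nat.exists_eq_add_of_le (by have := S.hn; omega : d ≤ n)
  obtain ⟨m1, rfl⟩ := Nat.exists_eq_add_of_le (by have := S.hm; omega : e ≤ m)
  have hd := S.hd; have he := S.he; have hn := S.hn; have hm := S.hm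
  have heq := S.eq
  rw [Nat.add_sub_cancel_left, Nat.add_sub_cancel_left] at heq
  have heq' : ((Nat.fib (d+n1) : ℝ)) - trib (e+m1) = Nat.fib n1 - trib m1 := by exact_mod_cast heq
  have f1 := fib_b (d+n1); have f2 := fib_b n1
  have g1 := er_b (e+m1); have g2 := er_b m1
  unfold er at g1 g2
  have hs := s5_b; have hC := CC_b; have hp := phi_b; have ha := ali_b
  have p1 := ph_gt; have a1 := al_gt
  have eP : ph^(d+n1)/s5 * (ph⁻¹)^d = ph^n1/s5 := by
    have := ph_pos.ne'
    rw [pow_add, inv_pow]; field_simp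
  have eQ : al^(e+m1+1)/CC * (al⁻¹)^e = al^(m1+1)/CC := by
    have := al_pos.ne'
    rw [add_assoc, pow_add, inv_pow]; field_simp
  have eU : ph^(d+n1)/s5 * up d = ph^(d+n1)/s5 - ph^n1/s5 := by
    rw [up, if_neg (by omega), mul_sub, mul_one, eP]
  have eV : al^(e+m1+1)/CC * ua e = al^(e+m1+1)/CC - al^(m1+1)/CC := by
    rw [ua, if_neg (by omega), mul_sub, mul_one, eQ]
  have hub := up_b d; have hvb := ua_b e
  have h100 : 100 ≤ ph^(d+n1)/s5 := by
    rw [le_div_iff₀ (by linarith)]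
    calc 100 * s5 ≤ 1.6^30 := by norm_num; linarith
      _ ≤ ph^30 := pow_le_pow_left₀ (by norm_num) (by linarith) _
      _ ≤ _ := pow_le_pow_right₀ (by linarith) S.hn30
  have hQ0 : 0 < al^(e+m1+1)/CC := div_pos (pow_pos al_pos _) (by linarith)
  rw [abs_le] at f1 f2 g1 g2
  set P := ph^(d+n1)/s5
  set Q := al^(e+m1+1)/CC
  have hε : |P * up d - Q * ua e| ≤ 3 := by
    rw [eU, eV, abs_le]
    constructor <;> linarith
  have hε' := abs_le.1 hε
  refine ⟨P, Q, P * up d - Q * ua e, rfl, rfl, hε, by ring, ?_, ?_, ?_, ?_, h100⟩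
  · rw [eP, le_div_iff₀ (by linarith)]
    calc 1.1 * s5 ≤ 1.6^2 := by norm_num; linarith
      _ ≤ ph^2 := pow_le_pow_left₀ (by norm_num) (by linarith) _
      _ ≤ _ := pow_le_pow_right₀ (by linarith) (by omega)
  · rw [eQ, le_div_iff₀ (by linarith)]
    calc 1.1 * CC ≤ 1.839^3 := by norm_num; linarith
      _ ≤ al^3 := pow_le_pow_left₀ (by norm_num) (by linarith) _
      _ ≤ _ := pow_le_pow_right₀ (by linarith) (by omega)
  · nlinarith
  · nlinarith

theorem S1 (v : ℕ) (h1 : 5*v ≤ d) (h2 : 4*v ≤ e) : |lam n m 0 0| ≤ 50/10^v := by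
  obtain ⟨P, Q, ε, hP, hQ, hε, heq, b1, b2, c1, c2, c3⟩ := S.basic
  have hu := ph5 v h1; have hv := al4 v h2
  have hd := S.hd; have he := S.he
  rw [lam_eq, ← hP, ← hQ]
  simp only [up, ua, if_true, mul_one]
  rw [up, if_neg (by omega), ua, if_neg (by omega)] at heq
  have hT : (0:ℝ) < 1/10^v := by positivity
  have hε' := abs_le.1 hε
  have q1 : P * (ph⁻¹)^d ≤ P * (1/10^v) := by gcongr
  have q2 : Q * (al⁻¹)^e ≤ Q * (1/10^v) := mul_le_mul_of_nonneg_left hv (by linarith)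
  have q3 : Q * (1/10^v) ≤ 3 * P * (1/10^v) := by gcongr
  have := abs_log_div (P := P) (Q := Q) (e := 6 * P * (1/10^v)) (c := P/3) (by linarith) (by linarith) (by linarith)
    (by rw [abs_le]; constructor <;> nlinarith) (by linarith) (by linarith)
  refine this.trans ?_
  have : 6 * P * (1/10^v) / (P/3) = 18 * (1/10^v) := by
    have : P ≠ 0 := by linarith
    field_simp; norm_num
  rw [this]
  have : (50:ℝ)/10^v = 50 * (1/10^v) := by ring
  linarith

theorem S2a (v : ℕ) (h2 : 4*v ≤ e) : |lam n m d 0| ≤ 50/10^v := by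
  obtain ⟨P, Q, ε, hP, hQ, hε, heq, b1, b2, c1, c2, c3⟩ := S.basic
  have hv := al4 v h2
  have hd := S.hd; have he := S.he
  have hub := up_b d
  rw [lam_eq, ← hP, ← hQ]
  rw [ua, if_pos rfl, mul_one]
  rw [ua, if_neg (by omega)] at heq
  have hT : (0:ℝ) < 1/10^v := by positivity
  have hε' := abs_le.1 hε
  have q2 : Q * (al⁻¹)^e ≤ Q * (1/10^v) := mul_le_mul_of_nonneg_left hv (by linarith)
  have := abs_log_div (P := P * up d) (Q := Q) (e := 4 * Q * (1/10^v)) (c := Q/8) (by nlinarith) (by linarith) (by linarith)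
    (by rw [abs_le]; constructor <;> nlinarith) (by nlinarith) (by linarith)
  refine this.trans ?_
  have : 4 * Q * (1/10^v) / (Q/8) = 32 * (1/10^v) := by
    have : Q ≠ 0 := by linarith
    field_simp; norm_num
  rw [this]
  have : (50:ℝ)/10^v = 50 * (1/10^v) := by ring
  linarith

theorem S2b (v : ℕ) (h2 : 5*v ≤ d) : |lam n m 0 e| ≤ 50/10^v := by
  obtain ⟨P, Q, ε, hP, hQ, hε, heq, b1, b2, c1, c2, c3⟩ := S.basic
  have hv := ph5 v h2
  have hd := S.hd; have he := S.he
  have hub := ua_b e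
  rw [lam_eq, ← hP, ← hQ]
  rw [up, if_pos rfl, mul_one]
  rw [up, if_neg (by omega)] at heq
  have hT : (0:ℝ) < 1/10^v := by positivity
  have hε' := abs_le.1 hε
  have q2 : P * (ph⁻¹)^d ≤ P * (1/10^v) := mul_le_mul_of_nonneg_left hv (by linarith)
  have := abs_log_div (P := P) (Q := Q * ua e) (e := 4 * P * (1/10^v)) (c := P/8) (by linarith) (by nlinarith) (by linarith)
    (by rw [abs_le]; constructor <;> nlinarith) (by linarith) (by nlinarith)
  refine this.trans ?_
  have : 4 * P * (1/10^v) / (P/8) = 32 * (1/10^v) := by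
    have : P ≠ 0 := by linarith
    field_simp; norm_num
  rw [this]
  have : (50:ℝ)/10^v = 50 * (1/10^v) := by ring
  linarith

theorem S3 (v : ℕ) (h2 : 5*v ≤ n) : |lam n m d e| ≤ 50/10^v := by
  obtain ⟨P, Q, ε, hP, hQ, hε, heq, b1, b2, c1, c2, c3⟩ := S.basic
  have hv := ph5 v h2
  have hub := ua_b e; have hub' := up_b d
  rw [lam_eq, ← hP, ← hQ]
  have hε' := abs_le.1 hε
  have := abs_log_div (P := P * up d) (Q := Q * ua e) (e := 3) (c := P/7) (by nlinarith) (by nlinarith) (by linarith)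
    (by rw [abs_le]; constructor <;> nlinarith) (by nlinarith) (by nlinarith)
  refine this.trans ?_
  have e1 : 3 / (P/7) = 21 * s5 * (ph⁻¹)^n := by
    have h1 := s5_b
    have : s5 ≠ 0 := by linarith
    have := ph_pos.ne'
    rw [hP, inv_pow]; field_simp; norm_num
  rw [e1]
  have h1 := s5_b
  have : (50:ℝ)/10^v = 50 * (1/10^v) := by ring
  have : (0:ℝ) < (ph⁻¹)^n := pow_pos (inv_pos.2 ph_pos) _
  nlinarith

theorem mn : m + 1 ≤ n := by
  obtain ⟨P, Q, ε, hP, hQ, hε, heq, b1, b2, c1, c2, c3⟩ := S.basic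
  by_contra hlt
  push Not at hlt
  have h1 := s5_b; have h2 := CC_b; have p1 := ph_gt; have a1 := al_gt; have p2 := ph_lt
  have e1 : al^(n+1) ≤ al^(m+1) := pow_le_pow_right₀ (by linarith) (by omega)
  have hC0 : CC ≠ 0 := by linarith
  have hs0 : s5 ≠ 0 := by linarith
  have e2 : al^(m+1) = CC * Q := by rw [hQ]; field_simp
  have e3 : ph^n = s5 * P := by rw [hP]; field_simp
  have e4 : al^n ≤ 10 * ph^n := by
    rw [pow_succ] at e1
    have : 0 < al^n := pow_pos al_pos _
    rw [e3]
    nlinarith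
  have e5 : (1.13*ph)^n ≤ al^n := pow_le_pow_left₀ (by linarith) (by linarith) _
  rw [mul_pow] at e5
  have e6 : (1.13:ℝ)^30 ≤ 1.13^n := pow_le_pow_right₀ (by norm_num) S.hn30
  have : (10:ℝ) < 1.13^30 := by norm_num
  have : 0 < ph^n := pow_pos ph_pos _
  nlinarith

end Sol

end

section
theorem good_s5 : ∃ M, Good M s5 9 := by
  have h1 := (good_P.smul 2).add ((Good.one).smul (-1))
  refine ⟨?_, ?_⟩
  swap
  · have e : s5 = (2:ℤ) * ph + (-1:ℤ) * 1 := by unfold s5; push_cast; ring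
    rw [e]
    refine h1.mono ?_
    norm_num

theorem good_CC : ∃ M, Good M CC 81 := by
  have h1 := (((good_Q.pow 2).smul 3).add (good_Q.smul (-2))).add ((Good.one).smul (-1))
  refine ⟨?_, ?_⟩
  swap
  · have e : CC = (3:ℤ) * al^2 + (-2:ℤ) * al + (-1:ℤ) * 1 := by unfold CC; push_cast; ring
    rw [e]
    refine h1.mono ?_
    norm_num

theorem good_up (d : ℕ) : ∃ M, Good M (up d) (3^(d+1)) := by
  unfold up
  split_ifs with h
  · exact ⟨1, Good.one.mono (one_le_pow₀ (by norm_num))⟩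
  · have h1 := Good.one.add ((good_P'.pow d).smul (-1))
    refine ⟨?_, ?_⟩
    swap
    · rw [show 1 - ph⁻¹^d = 1 + (-1:ℤ) * ph⁻¹^d by push_cast; ring]
      refine h1.mono ?_
      have : (1:ℝ) ≤ 3^d := one_le_pow₀ (by norm_num)
      rw [pow_succ]; push_cast; norm_num; linarith

theorem good_ua (d : ℕ) : ∃ M, Good M (ua d) (3^(d+1)) := by
  unfold ua
  split_ifs with h
  · exact ⟨1, Good.one.mono (one_le_pow₀ (by norm_num))⟩
  · have h1 := Good.one.add ((good_Q'.pow d).smul (-1))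
    refine ⟨?_, ?_⟩
    swap
    · rw [show 1 - al⁻¹^d = 1 + (-1:ℤ) * al⁻¹^d by push_cast; ring]
      refine h1.mono ?_
      have : (1:ℝ) ≤ 3^d := one_le_pow₀ (by norm_num)
      rw [pow_succ]; push_cast; norm_num; linarith

theorem log_xy (i j : ℕ) : |Real.log ((CC * up i) / (s5 * ua j))| ≤ 5 := by
  have h1 := s5_b; have h2 := CC_b; have h3 := up_b i; have h4 := ua_b j
  have hx : 2 ≤ CC * up i := by nlinarith
  have hx2 : CC * up i ≤ 6 := by nlinarith
  have hy : 1 ≤ s5 * ua j := by nlinarith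
  have hy2 : s5 * ua j ≤ 6 := by nlinarith
  rw [abs_le]
  constructor
  · have := Real.one_sub_inv_le_log_of_pos (x := (CC * up i) / (s5 * ua j)) (by positivity)
    have e : ((CC * up i) / (s5 * ua j))⁻¹ ≤ 6 := by
      rw [inv_div, div_le_iff₀ (by linarith)]; nlinarith
    linarith
  · have := Real.log_le_sub_one_of_pos (x := (CC * up i) / (s5 * ua j)) (by positivity)
    have e : (CC * up i) / (s5 * ua j) ≤ 6 := by
      rw [div_le_iff₀ (by linarith)]; nlinarith
    linarith

theorem pow_cmp (E v : ℕ) (hE : 2 ≤ E) (h : (10:ℝ)^v ≤ 50 * 3^E) : v ≤ E := by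
  by_contra hv
  push Not at hv
  have h1 : (10:ℝ)^(E+1) ≤ 10^v := pow_le_pow_right₀ (by norm_num) hv
  obtain ⟨k, rfl⟩ := Nat.exists_eq_add_of_le hE
  have h2 : (3:ℝ)^k ≤ 10^k := pow_le_pow_left₀ (by norm_num) (by norm_num) _
  have h3 : (0:ℝ) < 10^k := by positivity
  rw [show 2 + k + 1 = k + 3 by ring, pow_add] at h1
  rw [show 2 + k = k + 2 by ring, pow_add] at h
  norm_num at h h1
  linarith

theorem lam_v (n m i j G t w v : ℕ) (hi : i + 5 ≤ G) (hj : j + 5 ≤ G) (ht : 1 ≤ t) (hw : 1 ≤ w)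
    (hGt : G * t ≤ w^10) (hX : 64*10^12*G*t*w^2*(n+1) ≤ 3^t) (hmn : m + 1 ≤ n)
    (hLn : 64*10^12*G*t*w^2 ≤ n) (hv : |lam n m i j| ≤ 50/10^v) :
    v ≤ 723*10^57*G^3*t^5*w^9 := by
  obtain ⟨M1, g1⟩ := good_s5
  obtain ⟨M2, g2⟩ := good_CC
  obtain ⟨M3, g3⟩ := good_up i
  obtain ⟨M4, g4⟩ := good_ua j
  have h1 := s5_b; have h2 := CC_b; have h3 := up_b i; have h4 := ua_b j
  have gx : Good (M2 * M3) (CC * up i) (3^G) := (g2.mul g3).mono (by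
    calc (81:ℝ) * 3^(i+1) = 3^(i+5) := by ring
      _ ≤ _ := pow_le_pow_right₀ (by norm_num) hi)
  have gy : Good (M1 * M4) (s5 * ua j) (3^G) := (g1.mul g4).mono (by
    calc (9:ℝ) * 3^(j+1) = 3^(j+3) := by ring
      _ ≤ _ := pow_le_pow_right₀ (by norm_num) (by omega))
  have hG5 : (5:ℝ) ≤ G := by exact_mod_cast (by omega : 5 ≤ G)
  have hm : 64*10^12*G*t*w^2*((m+1)+1) ≤ 3^t := by
    refine le_trans ?_ hX
    gcongr
  have := baker n (m+1) t G (CC * up i) (s5 * ua j) _ _ ht (by omega) (by nlinarith) (by nlinarith) gx gy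
    ((log_xy i j).trans hG5) w hw hGt hX hm hLn
  have h50 : 2 ≤ 723*10^57*G^3*t^5*w^9 := by
    have a1 : 1 ≤ G^3 := Nat.one_le_pow _ _ (by omega)
    have a2 : 1 ≤ t^5 := Nat.one_le_pow _ _ (by omega)
    have a3 : 1 ≤ w^9 := Nat.one_le_pow _ _ (by omega)
    calc 2 ≤ 723*10^57*1*1*1 := by norm_num
      _ ≤ _ := by gcongr
  generalize 723*10^57*G^3*t^5*w^9 = E at *
  apply pow_cmp E v h50
  have e : |lam n m i j| * 3^E ≤ 50/10^v * 3^E := by gcongr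
  unfold lam at e
  have h5 := this.trans e
  rw [div_mul_eq_mul_div, le_div_iff₀ (by positivity)] at h5
  linarith

end

section
noncomputable def frc {α : Type} (n : ℕ) (f : ℕ → α) : α := Nat.rec (f 0) (fun k _ => f (k+1)) n
theorem frc_eq {α : Type} (n : ℕ) (f : ℕ → α) : frc n f = f n := by cases n <;> rfl

/-- summation loop in continuation-passing style -/
noncomputable def lgs (S z K : ℕ) (c : ℕ → Bool) (f : ℕ) : ℕ → ℕ → Bool :=
  Nat.rec (fun y acc => cond (Nat.beq y 0) (c acc) false)
    (fun f ih y acc => frc (Nat.div (Nat.mul y z) S) fun y' =>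
      frc (Nat.add acc (Nat.div y (Nat.sub K f))) fun acc' => ih y' acc') f

def pw (S z : ℕ) : ℕ → ℕ
  | 0 => z
  | k+1 => pw S z k * z / S

theorem lgs_run (S z K : ℕ) (c : ℕ → Bool) (f : ℕ) (hf : f ≤ K) (acc : ℕ)
    (h : lgs S z K c f (pw S z (K-f)) acc = true) :
    pw S z K = 0 ∧ c (acc + ∑ k ∈ Finset.Ico (K-f) K, pw S z k / (k+1)) = true := by
  induction f generalizing acc with
  | zero =>
    have h : cond (Nat.beq (pw S z K) 0) (c acc) false = true := h
    rw [Nat.sub_zero, Finset.Ico_self, Finset.sum_empty, Nat.add_zero]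
    cases hb : Nat.beq (pw S z K) 0 with
    | false => rw [hb] at h; simp at h
    | true => rw [hb] at h; exact ⟨Nat.eq_of_beq_eq_true hb, h⟩
  | succ f ih =>
    have h : (frc (Nat.div (Nat.mul (pw S z (K-(f+1))) z) S) fun y' =>
      frc (Nat.add acc (Nat.div (pw S z (K-(f+1))) (Nat.sub K f))) fun acc' => lgs S z K c f y' acc') = true := h
    rw [frc_eq, frc_eq] at h
    have e : K - f = K - (f+1) + 1 := by omega
    have e1 : Nat.div (Nat.mul (pw S z (K-(f+1))) z) S = pw S z (K - f) := by rw [e]; rfl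
    rw [e1] at h
    obtain ⟨h1, h2⟩ := ih (by omega) _ h
    refine ⟨h1, ?_⟩
    rw [Finset.sum_eq_sum_Ico_succ_bot (by omega : K - (f+1) < K), ← e, ← add_assoc]
    convert h2 using 3
    show _ = acc + pw S z (K-(f+1)) / (K - f)
    rw [e]

theorem pw_bd (S z : ℕ) (y e0 e1 : ℝ) (hS : 0 < S) (hy0 : 0 < y) (hy : y ≤ 0.6181) (h1 : (z:ℝ) ≤ S * y)
    (h2 : S * y ≤ z + e0) (h0 : 0 ≤ e0) (h01 : e0 ≤ e1)
    (he : 0.6181 * (e0 + e1) + 1 ≤ e1) (k : ℕ) : (pw S z k : ℝ) ≤ S * y^(k+1) ∧ S * y^(k+1) ≤ pw S z k + e1 := by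
  have hS' : (0:ℝ) < S := by exact_mod_cast hS
  induction k with
  | zero => simp only [pw, zero_add, pow_one]; exact ⟨h1, by linarith⟩
  | succ k ih =>
    obtain ⟨i1, i2⟩ := ih
    set Y : ℝ := y^(k+1) with hY
    have hY0 : 0 < Y := pow_pos hy0 _
    have hY1 : Y ≤ y := pow_le_of_le_one hy0.le (by linarith) (by omega)
    have e : S * y^(k+1+1) = S * Y * y := by rw [pow_succ, hY]; ring
    rw [e]
    have f1 : ((pw S z k * z / S : ℕ) : ℝ) ≤ (pw S z k : ℝ) * z / S := by
      have := Nat.cast_div_le (α := ℝ) (m := pw S z k * z) (n := S)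
      push_cast at this; exact this
    have f2 : (pw S z k : ℝ) * z / S ≤ ((pw S z k * z / S : ℕ) : ℝ) + 1 := by
      rw [div_le_iff₀ hS']
      have := Nat.lt_div_mul_add (a := pw S z k * z) hS
      have h' : ((pw S z k * z : ℕ):ℝ) ≤ ((pw S z k * z / S * S + S : ℕ) : ℝ) := by exact_mod_cast this.le
      push_cast at h'; linarith
    have p0 : (0:ℝ) ≤ pw S z k := Nat.cast_nonneg _
    have z0 : (0:ℝ) ≤ z := Nat.cast_nonneg _
    show ((pw S z k * z / S : ℕ) : ℝ) ≤ _ ∧ _ ≤ ((pw S z k * z / S : ℕ) : ℝ) + e1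
    constructor
    · refine f1.trans ?_
      rw [div_le_iff₀ hS']
      calc (pw S z k : ℝ) * z ≤ (S * Y) * (S * y) := by gcongr
        _ = _ := by ring
    · have : S * Y * y ≤ (pw S z k : ℝ) * z / S + (e1 - 1) := by
        rw [← sub_le_iff_le_add, le_div_iff₀ hS']
        have g1 : (S * Y) * (S * y) ≤ (pw S z k + e1) * (S*y) := by gcongr
        have g2 : (pw S z k : ℝ) * (S * y) ≤ pw S z k * (z + e0) := by gcongr
        have g3 : (pw S z k : ℝ) ≤ S * 0.6181 := i1.trans (by gcongr; linarith)
        have g4 : S * y ≤ S * 0.6181 := by gcongr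
        nlinarith [mul_nonneg h0 p0, mul_le_mul_of_nonneg_left g3 h0, mul_le_mul_of_nonneg_left g4 (h0.trans h01), mul_le_mul_of_nonneg_left he hS'.le]
      linarith

theorem lgs_sound (S z K : ℕ) (c : ℕ → Bool) (y : ℝ) (hS : 0 < S) (hy0 : 0 < y) (hy : y ≤ 0.6181)
    (h1 : (z:ℝ) ≤ S * y) (h2 : S * y ≤ z + 10) (h : lgs S z K c K z 0 = true) :
    ∃ r : ℕ, c r = true ∧ |S * (-Real.log (1-y)) - r| ≤ 20 * K + 60 := by
  have h' : lgs S z K c K (pw S z (K-K)) 0 = true := by rw [Nat.sub_self]; exact h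
  obtain ⟨h3, h4⟩ := lgs_run S z K c K le_rfl 0 h'
  rw [Nat.sub_self, zero_add] at h4
  refine ⟨_, h4, ?_⟩
  have hS' : (0:ℝ) < S := by exact_mod_cast hS
  have b := pw_bd S z y 10 19 hS hy0 hy h1 h2 (by norm_num) (by norm_num) (by norm_num)
  have hl := Real.abs_log_sub_add_sum_range_le (x := y) (by rw [abs_of_pos hy0]; linarith) K
  rw [abs_of_pos hy0] at hl
  have hb := (b K).2
  rw [h3] at hb
  have t1 : S * (y^(K+1) / (1-y)) ≤ 50 := by
    rw [← mul_div_assoc, div_le_iff₀ (by linarith)]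
    push_cast at hb; nlinarith
  have t2 : |S * ∑ i ∈ Finset.range K, y^(i+1)/(i+1) - ((∑ k ∈ Finset.Ico 0 K, pw S z k / (k+1) : ℕ):ℝ)| ≤ 20 * K := by
    rw [← Finset.range_eq_Ico, Finset.mul_sum]
    push_cast
    rw [← Finset.sum_sub_distrib]
    refine (Finset.abs_sum_le_sum_abs _ _).trans ?_
    calc _ ≤ ∑ i ∈ Finset.range K, (20:ℝ) := by
          refine Finset.sum_le_sum fun i _ => ?_
          obtain ⟨b1, b2⟩ := b i
          have f1 : ((pw S z i / (i+1) : ℕ) : ℝ) ≤ (pw S z i : ℝ) / (i+1) := by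
            have := Nat.cast_div_le (α := ℝ) (m := pw S z i) (n := i+1)
            push_cast at this; exact this
          have hi : (0:ℝ) < (i:ℝ)+1 := by positivity
          have f2 : (pw S z i : ℝ) / (i+1) ≤ ((pw S z i / (i+1) : ℕ) : ℝ) + 1 := by
            rw [div_le_iff₀ hi]
            have := Nat.lt_div_mul_add (a := pw S z i) (Nat.succ_pos i)
            have h' : ((pw S z i : ℕ):ℝ) ≤ ((pw S z i / (i+1) * (i+1) + (i+1) : ℕ) : ℝ) := by exact_mod_cast this.le
            push_cast at h'; push_cast; linarith
          have g1 : (pw S z i : ℝ) / (i+1) ≤ S * (y^(i+1)/(i+1)) := by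
            rw [← mul_div_assoc]; gcongr
          have g2 : S * (y^(i+1)/(i+1)) ≤ (pw S z i : ℝ) / (i+1) + 19 := by
            rw [← mul_div_assoc, div_add' _ _ _ hi.ne']
            gcongr
            have : (0:ℝ) ≤ i := Nat.cast_nonneg _
            nlinarith
          rw [abs_le]
          constructor <;> linarith
      _ = _ := by simp; ring
  have t3 : |S * ∑ i ∈ Finset.range K, y^(i+1)/(i+1) + S * Real.log (1-y)| ≤ 50 := by
    rw [← mul_add, abs_mul, abs_of_pos hS']
    exact le_trans (by gcongr) t1
  rw [abs_le] at *
  constructor <;> linarith [t2.1, t2.2, t3.1, t3.2]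

end

section
/-- forced computation of `pw S z k` -/
noncomputable def pwc {α : Type} (S z : ℕ) (c : ℕ → α) (k : ℕ) : ℕ → α :=
  Nat.rec (fun y => c y) (fun _ ih y => frc (Nat.div (Nat.mul y z) S) ih) k

noncomputable def itr {α : Type} (g : ℕ → ℕ) (c : ℕ → α) (k : ℕ) : ℕ → α :=
  Nat.rec (fun y => c y) (fun _ ih y => frc (g y) ih) k

noncomputable def gd (b c : Bool) : Bool := Bool.rec false c b

noncomputable def lgd (S z Kb d : ℕ) (c : ℕ → Bool) : Bool :=
  pwc S z (fun y => frc (Nat.add (Nat.div Kb d) 2) fun K => lgs S y K c K y 0) (Nat.pred d) z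

def okp (S z : ℕ) : Bool :=
  and (Nat.ble (z*z + z*S) (S*S)) (Nat.ble (S*S) ((z+4)*(z+4) + (z+4)*S))
def oka (S z : ℕ) : Bool :=
  and (Nat.ble (z*z*z + z*z*S + z*(S*S)) (S*S*S))
    (Nat.ble (S*S*S) ((z+4)*(z+4)*(z+4) + (z+4)*(z+4)*S + (z+4)*(S*S)))

noncomputable def newt (S : ℕ) (c : ℕ → ℕ → Bool) : Bool :=
  itr (fun z => (z*z+S*S)/(2*z+S)) (fun z => itr (fun w => (2*w*w*w+S*w*w+S*S*S)/(3*w*w+2*S*w+S*S))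
    (fun w => frc (z-2) fun z => frc (w-2) fun w => gd (okp S z) (gd (oka S w) (c z w))) 20 S) 20 S

noncomputable def setup (S Kb zp za : ℕ) (c : ℕ → ℕ → ℕ → Bool) : Bool :=
  lgd S zp Kb 3 fun u3 => lgd S zp Kb 4 fun u4 => lgd S zp Kb 6 fun u6 =>
  lgd S za Kb 3 fun v3 => lgd S za Kb 4 fun v4 => lgd S za Kb 5 fun v5 => lgd S za Kb 10 fun v10 =>
  gd (Nat.ble u6 (2*u3)) <| gd (Nat.ble v4 (4*v3)) <|
  frc (2*u3-u6) fun a => frc (4*v3-v4) fun b =>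
  gd (Nat.ble (v10+v3+2*a) (3*b+v5+u4)) <|
  frc ((3*b+v5+u4)-(v10+v3+2*a)) fun r => c a b r

def MM : ℕ := 1152921504606846976

noncomputable def tab (S z Kb q b D : ℕ) (c : List ℕ → Bool) (f : ℕ) : ℕ → List ℕ → Bool :=
  Nat.rec (fun _ L => c L)
    (fun f ih y L => frc (Nat.add (Nat.div Kb (Nat.sub D f)) 2) fun K => lgs S y K (fun r =>
      frc (Nat.div (Nat.mul (Nat.mod (Nat.mul q r) b) MM) b) fun u =>
      frc (Nat.div (Nat.mul y z) S) fun y' => ih y' (u :: L)) K y 0) f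

noncomputable def all1 (s C : ℕ) (L : List ℕ) : Bool :=
  List.rec true (fun v _ ih => gd (Nat.ble (Nat.mod (Nat.add s v) MM) C) ih) L

noncomputable def grid (r T : ℕ) (LU LV : List ℕ) : Bool :=
  frc (MM - 2*T) fun C => List.rec true
    (fun u _ ih => frc (r + 2*MM - u - T) fun s => gd (all1 s C LV) ih) LU

noncomputable def chk (B Kb q X v T D E : ℕ) (axes : Bool) : Bool :=
  frc (2^B) fun S => newt S fun zp za => setup S Kb zp za fun a b r =>
  frc (20*(Kb+2)+60) fun e =>
  frc ((2*q*a+b)/(2*b)) fun p => frc ((q*a-p*b)+(p*b-q*a)) fun Dh =>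
  gd (Nat.ble p q) <| gd (Nat.ble (170*e*MM*q) S) <|
  gd (Nat.ble (4*MM*X*(Dh+8*e*q)+S*8) (S*T)) <| gd (Nat.ble (200*MM*q + 8*10^v) (T*10^v)) <|
  frc ((q*r%b)*MM/b) fun r' =>
  tab S zp Kb q b D (fun LU => tab S za Kb q b E (fun LV =>
    Bool.rec (grid r' T LU LV) (gd (grid r' T LU [0]) (grid r' T [0] LV)) axes) E za [0]) D zp [0]

end

section
theorem gd_true {b c : Bool} (h : gd b c = true) : b = true ∧ c = true := by
  cases b with
  | false => exact absurd h (by simp [gd])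
  | true => exact ⟨rfl, h⟩

theorem pwc_eq {α : Type} (S z : ℕ) (c : ℕ → α) (k j : ℕ) : pwc S z c k (pw S z j) = c (pw S z (j+k)) := by
  induction k generalizing j with
  | zero => rfl
  | succ k ih =>
    show frc (pw S z (j+1)) (pwc S z c k) = _
    rw [frc_eq, ih, show j + 1 + k = j + (k+1) by ring]

theorem itr_ex {α : Type} (g : ℕ → ℕ) (c : ℕ → α) (k y : ℕ) : ∃ y', itr g c k y = c y' := by
  induction k generalizing y with
  | zero => exact ⟨y, rfl⟩
  | succ k ih =>
    obtain ⟨y', h⟩ := ih (g y)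
    exact ⟨y', by show frc (g y) (itr g c k) = _; rw [frc_eq, h]⟩

theorem newt_sound (S : ℕ) (c : ℕ → ℕ → Bool) (h : newt S c = true) :
    ∃ zp za, okp S zp = true ∧ oka S za = true ∧ c zp za = true := by
  unfold newt at h
  obtain ⟨z, hz⟩ := itr_ex (fun z => (z*z+S*S)/(2*z+S)) (fun z => itr (fun w => (2*w*w*w+S*w*w+S*S*S)/(3*w*w+2*S*w+S*S))
    (fun w => frc (z-2) fun z => frc (w-2) fun w => gd (okp S z) (gd (oka S w) (c z w))) 20 S) 20 S
  rw [hz] at h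
  obtain ⟨w, hw⟩ := itr_ex (fun w => (2*w*w*w+S*w*w+S*S*S)/(3*w*w+2*S*w+S*S))
    (fun w => frc (z-2) fun z => frc (w-2) fun w => gd (okp S z) (gd (oka S w) (c z w))) 20 S
  rw [hw, frc_eq, frc_eq] at h
  obtain ⟨h1, h2⟩ := gd_true h
  obtain ⟨h2, h3⟩ := gd_true h2
  exact ⟨_, _, h1, h2, h3⟩

theorem pinv : (ph⁻¹)^2 + ph⁻¹ = 1 := by rw [ph_inv]; nlinarith [ph_sq]
theorem ainv : (al⁻¹)^3 + (al⁻¹)^2 + al⁻¹ = 1 := by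
  have := al_cube; have h := al_pos.ne'
  field_simp; linarith

theorem okp_sound (S z : ℕ) (h : okp S z = true) : (z:ℝ) ≤ S * ph⁻¹ ∧ S * ph⁻¹ ≤ z + 4 := by
  unfold okp at h
  rw [Bool.and_eq_true] at h
  obtain ⟨h1, h2⟩ := h
  have h1 := Nat.le_of_ble_eq_true h1
  have h2 := Nat.le_of_ble_eq_true h2
  have h1 : (z*z + z*S : ℝ) ≤ S*S := by exact_mod_cast h1
  have h2 : (S*S:ℝ) ≤ ((z+4)*(z+4) + (z+4)*S) := by exact_mod_cast h2
  have hx := pinv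
  have hx0 := phi_b.1
  set x := ph⁻¹
  have hz : (0:ℝ) ≤ z := Nat.cast_nonneg _
  have hS : (0:ℝ) ≤ S := Nat.cast_nonneg _
  have e : (S*S:ℝ) = (S*x)*(S*x) + (S*x)*S := by linear_combination (-(S:ℝ)^2) * hx
  have hw : 0 ≤ S * x := by positivity
  constructor
  · by_contra! hc
    rw [e] at h1
    nlinarith
  · by_contra! hc
    rw [e] at h2
    nlinarith

theorem oka_sound (S z : ℕ) (h : oka S z = true) : (z:ℝ) ≤ S * al⁻¹ ∧ S * al⁻¹ ≤ z + 4 := by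
  unfold oka at h
  rw [Bool.and_eq_true] at h
  obtain ⟨h1, h2⟩ := h
  have h1 := Nat.le_of_ble_eq_true h1
  have h2 := Nat.le_of_ble_eq_true h2
  have h1 : (z*z*z + z*z*S + z*(S*S) : ℝ) ≤ S*S*S := by exact_mod_cast h1
  have h2 : (S*S*S:ℝ) ≤ ((z+4)*(z+4)*(z+4) + (z+4)*(z+4)*S + (z+4)*(S*S)) := by exact_mod_cast h2
  have hx := ainv
  have hx0 := ali_b.1
  set x := al⁻¹
  have hz : (0:ℝ) ≤ z := Nat.cast_nonneg _
  have hS : (0:ℝ) ≤ S := Nat.cast_nonneg _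
  have e : (S*S*S:ℝ) = (S*x)*(S*x)*(S*x) + (S*x)*(S*x)*S + (S*x)*(S*S) := by linear_combination (-(S:ℝ)^3) * hx
  have hw : 0 ≤ S * x := by positivity
  rw [e] at h1 h2
  have mono : ∀ a b : ℝ, 0 ≤ a → a < b → a*a*a + a*a*S + a*(S*S) < b*b*b+b*b*S + b*(S*S) := by
    intro a b ha hab
    have b1 : 0 ≤ b := by linarith
    have i1 : a*a*a < b*b*b := by
      have := pow_lt_pow_left₀ hab ha (n := 3) (by norm_num); nlinarith
    have i2 : a*a*S ≤ b*b*S := by gcongr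
    have i3 : a*(S*S) ≤ b*(S*S) := by gcongr
    linarith
  constructor
  · by_contra! hc
    have := mono _ _ hw hc
    linarith
  · by_contra! hc
    have := mono _ _ (by linarith) hc
    linarith

theorem lgd_sound (S z Kb d : ℕ) (c : ℕ → Bool) (y : ℝ) (hd : 1 ≤ d) (hS : 0 < S) (hy0 : 0 < y) (hy : y ≤ 0.6181)
    (hz : (z:ℝ) ≤ S * y ∧ S * y ≤ z + 4) (h : lgd S z Kb d c = true) :
    ∃ r : ℕ, c r = true ∧ |S * (-Real.log (1-y^d)) - r| ≤ 20 * (Kb+2) + 60 := by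
  unfold lgd at h
  have := pwc_eq S z (fun y => frc (Nat.add (Nat.div Kb d) 2) fun K => lgs S y K c K y 0) (Nat.pred d) 0
  rw [show pw S z 0 = z from rfl] at this
  rw [this, zero_add, frc_eq] at h
  obtain ⟨b1, b2⟩ := pw_bd S z y 4 10 hS hy0 hy hz.1 hz.2 (by norm_num) (by norm_num) (by norm_num) (Nat.pred d)
  rw [show Nat.pred d + 1 = d by simp; omega] at b1 b2
  obtain ⟨r, h1, h2⟩ := lgs_sound S _ _ c (y^d) hS (pow_pos hy0 d) ((pow_le_of_le_one hy0.le (by linarith) (by omega)).trans hy) b1 b2 h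
  refine ⟨r, h1, h2.trans ?_⟩
  have : (Nat.add (Nat.div Kb d) 2) ≤ Kb + 2 := Nat.add_le_add_right (Nat.div_le_self _ _) 2
  have : ((Nat.add (Nat.div Kb d) 2 : ℕ):ℝ) ≤ Kb + 2 := by exact_mod_cast this
  linarith

theorem la_eq : Real.log ph = 2 * (-Real.log (1-(ph⁻¹)^3)) - (-Real.log (1-(ph⁻¹)^6)) := by
  have h := phi_b
  have e3 : (ph⁻¹)^3 ≤ ph⁻¹ := pow_le_of_le_one (by linarith) (by linarith) (by norm_num)
  have e : 1-(ph⁻¹)^6 = ph * (1-(ph⁻¹)^3)^2 := by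
    have := ph_pos.ne'; have h2 := pinv
    have h4 : ph * ph⁻¹ = 1 := mul_inv_cancel₀ this
    set x := ph⁻¹
    have h3 : x^3 = 2*x - 1 := by linear_combination (x-1)*h2
    rw [show x^6 = (x^3)^2 by ring, h3]
    have : ph = x + 1 := by simp [x, ph_inv]
    rw [this]; linear_combination (-4 * x + 4) * h2
  rw [e, Real.log_mul ph_pos.ne' (pow_ne_zero _ (by linarith)), Real.log_pow]
  push_cast; ring

theorem lb_eq : Real.log al = 4 * (-Real.log (1-(al⁻¹)^3)) - (-Real.log (1-(al⁻¹)^4)) := by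
  have h := ali_b
  have e3 : (al⁻¹)^3 ≤ al⁻¹ := pow_le_of_le_one (by linarith) (by linarith) (by norm_num)
  have e : 1-(al⁻¹)^4 = al * (1-(al⁻¹)^3)^4 := by
    have := al_pos.ne'; have h2 := ainv
    have h4 : al * al⁻¹ = 1 := mul_inv_cancel₀ this
    set y := al⁻¹
    have h3 : y^4 = 2*y - 1 := by linear_combination (y-1)*h2
    have h5 : (1-y^3)^2 = 1 - y^2 := by
      rw [show 1 - y^3 = y + y^2 by linear_combination -h2]; linear_combination (y+1)*h2
    rw [show (1-y^3)^4 = ((1-y^3)^2)^2 by ring, h5, h3]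
    linear_combination (-2 * (1 - y)) * h4 - al * h3
  rw [e, Real.log_mul al_pos.ne' (pow_ne_zero _ (by linarith)), Real.log_pow]
  push_cast; ring

theorem s5_eq : Real.log s5 = 2 * Real.log ph - (-Real.log (1-(ph⁻¹)^4)) := by
  have h := phi_b
  have e3 : (ph⁻¹)^4 ≤ ph⁻¹ := pow_le_of_le_one (by linarith) (by linarith) (by norm_num)
  have e : s5 = ph^2 * (1-(ph⁻¹)^4) := by
    unfold s5; rw [ph_inv]
    have := ph_sq
    have h4 : (ph-1)^4 = 5 - 3*ph := by linear_combination (ph^2-3*ph+4)*this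
    rw [h4]; linear_combination (-3*ph+1)*this
  rw [e, Real.log_mul (pow_ne_zero _ ph_pos.ne') (by linarith), Real.log_pow]
  push_cast; ring

theorem CC_eq : Real.log CC = 3 * Real.log al + (-Real.log (1-(al⁻¹)^5)) - (-Real.log (1-(al⁻¹)^10))
    - (-Real.log (1-(al⁻¹)^3)) := by
  have h := ali_b
  have e3 : (al⁻¹)^3 ≤ al⁻¹ := pow_le_of_le_one (by linarith) (by linarith) (by norm_num)
  have e5 : (al⁻¹)^5 ≤ al⁻¹ := pow_le_of_le_one (by linarith) (by linarith) (by norm_num)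
  have e10 : (al⁻¹)^10 ≤ al⁻¹ := pow_le_of_le_one (by linarith) (by linarith) (by norm_num)
  have p5 : 0 < (al⁻¹)^5 := pow_pos (by linarith) _
  have e : CC = al^3 * (1+(al⁻¹)^5) * (1-(al⁻¹)^3) := by
    have h1 := al_cube
    have h2 : 1 - (al⁻¹)^3 = al - 1 := by
      have := al_pos.ne'
      field_simp; linear_combination (1 - al) * h1
    have h3 : al^3 * (1+(al⁻¹)^5) = 3*al+1 := by
      have := al_pos.ne'
      field_simp; linear_combination (al^2+al-1) * h1
    rw [h2, h3]; unfold CC; ring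
  have e' : 1 - (al⁻¹)^10 = (1 - (al⁻¹)^5) * (1 + (al⁻¹)^5) := by ring
  rw [e, e', Real.log_mul (mul_ne_zero (pow_ne_zero _ al_pos.ne') (by linarith)) (by linarith),
    Real.log_mul (pow_ne_zero _ al_pos.ne') (by linarith), Real.log_mul (by linarith) (by linarith), Real.log_pow]
  push_cast; ring

theorem setup_sound (S Kb zp za : ℕ) (c : ℕ → ℕ → ℕ → Bool) (hS : 0 < S)
    (hp : (zp:ℝ) ≤ S * ph⁻¹ ∧ S * ph⁻¹ ≤ zp + 4) (ha : (za:ℝ) ≤ S * al⁻¹ ∧ S * al⁻¹ ≤ za + 4)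
    (h : setup S Kb zp za c = true) : ∃ a b r : ℕ, c a b r = true ∧
    |S * Real.log ph - a| ≤ 3 * (20 * (Kb+2) + 60) ∧ |S * Real.log al - b| ≤ 5 * (20 * (Kb+2) + 60) ∧
    |S * Real.log (CC / s5) - r| ≤ 25 * (20 * (Kb+2) + 60) := by
  have p0 : 0 < ph⁻¹ := by linarith [phi_b.1]
  have p1 : ph⁻¹ ≤ 0.6181 := phi_b.2.le
  have a0 : 0 < al⁻¹ := by linarith [ali_b.1]
  have a1 : al⁻¹ ≤ 0.6181 := by linarith [ali_b.2]
  unfold setup at h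
  obtain ⟨u3, h, x1⟩ := lgd_sound S zp Kb 3 _ ph⁻¹ (by norm_num) hS p0 p1 hp h
  obtain ⟨u4, h, x2⟩ := lgd_sound S zp Kb 4 _ ph⁻¹ (by norm_num) hS p0 p1 hp h
  obtain ⟨u6, h, x3⟩ := lgd_sound S zp Kb 6 _ ph⁻¹ (by norm_num) hS p0 p1 hp h
  obtain ⟨v3, h, y1⟩ := lgd_sound S za Kb 3 _ al⁻¹ (by norm_num) hS a0 a1 ha h
  obtain ⟨v4, h, y2⟩ := lgd_sound S za Kb 4 _ al⁻¹ (by norm_num) hS a0 a1 ha h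
  obtain ⟨v5, h, y3⟩ := lgd_sound S za Kb 5 _ al⁻¹ (by norm_num) hS a0 a1 ha h
  obtain ⟨v10, h, y4⟩ := lgd_sound S za Kb 10 _ al⁻¹ (by norm_num) hS a0 a1 ha h
  obtain ⟨c1, h⟩ := gd_true h
  obtain ⟨c2, h⟩ := gd_true h
  have c1 := Nat.le_of_ble_eq_true c1
  have c2 := Nat.le_of_ble_eq_true c2
  rw [frc_eq, frc_eq] at h
  obtain ⟨c3, h⟩ := gd_true h
  have c3 := Nat.le_of_ble_eq_true c3
  rw [frc_eq] at h
  refine ⟨_, _, _, h, ?_⟩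
  have hC := CC_b; have hs := s5_b
  rw [Nat.cast_sub c3, Real.log_div (by linarith) (by linarith), s5_eq, CC_eq, la_eq, lb_eq]
  push_cast [Nat.cast_sub c1, Nat.cast_sub c2]
  generalize (20 * ((Kb:ℝ)+2) + 60) = e at *
  generalize Real.log (1-(ph⁻¹)^3) = l1 at *
  generalize Real.log (1-(ph⁻¹)^4) = l2 at *
  generalize Real.log (1-(ph⁻¹)^6) = l3 at *
  generalize Real.log (1-(al⁻¹)^3) = l4 at *
  generalize Real.log (1-(al⁻¹)^4) = l5 at *
  generalize Real.log (1-(al⁻¹)^5) = l6 at *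
  generalize Real.log (1-(al⁻¹)^10) = l7 at *
  rw [abs_le] at *
  obtain ⟨x11,x12⟩ := x1; obtain ⟨x21,x22⟩ := x2; obtain ⟨x31,x32⟩ := x3; obtain ⟨y11,y12⟩ := y1
  obtain ⟨y21,y22⟩ := y2; obtain ⟨y31,y32⟩ := y3; obtain ⟨y41,y42⟩ := y4
  clear h hp ha
  refine ⟨⟨?_, ?_⟩, ?_⟩
  · linarith
  · linarith
  rw [abs_le, abs_le]
  refine ⟨⟨?_, ?_⟩, ?_, ?_⟩ <;> linarith

end

section
theorem lb_b : 0.6 ≤ Real.log al ∧ Real.log al ≤ 0.84 := by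
  have h1 := al_gt; have h2 := al_lt; have h3 := ali_b
  constructor
  · have e : al = 2 * (al/2) := by ring
    rw [e, Real.log_mul (by norm_num) (by linarith)]
    have := Real.one_sub_inv_le_log_of_pos (x := al/2) (by linarith)
    have e2 : (al/2)⁻¹ = 2 * al⁻¹ := by rw [inv_div]; ring
    rw [e2] at this
    have : (al⁻¹) ≤ 1/1.839 := by rw [inv_eq_one_div]; gcongr
    have := Real.log_two_gt_d9
    norm_num at *
    linarith
  · have := Real.log_le_sub_one_of_pos al_pos
    linarith

def Pq (q : ℕ) (x : ℝ) (u : ℕ) : Prop :=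
  u ≤ MM ∧ ∃ k : ℤ, |(MM:ℝ) * (q * x / Real.log al) - u - MM * k| ≤ 2

theorem Pq_zero (q : ℕ) : Pq q 0 0 := ⟨Nat.zero_le _, 0, by simp⟩

theorem quant (S q b r : ℕ) (e x : ℝ) (hS : 0 < S) (hq : 1 ≤ q) (he1 : 1 ≤ e) (hb : |S * Real.log al - b| ≤ 5 * e)
    (hx0 : 0 ≤ x) (hx1 : x ≤ 2) (hr : |S * x - r| ≤ 25 * e) (hc : 170 * e * MM * q ≤ S) :
    Pq q x ((q * r % b) * MM / b) := by
  obtain ⟨l1, l2⟩ := lb_b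
  have hM : (MM:ℝ) = 1152921504606846976 := by norm_num [MM]
  have hq' : (1:ℝ) ≤ q := by exact_mod_cast hq
  have hS' : (0:ℝ) < S := by exact_mod_cast hS
  set l := Real.log al
  have hMq : (10^18:ℝ) ≤ MM * q := by rw [hM]; linarith
  have hS2 : 170 * 10^18 * e ≤ S := by
    refine le_trans ?_ hc
    nlinarith
  have hbl : (0.599:ℝ) * S ≤ b := by
    have := (abs_le.1 hb).2
    nlinarith
  have hb0 : (0:ℝ) < b := by nlinarith
  have hb0' : 0 < b := by exact_mod_cast hb0
  refine ⟨?_, (q * r / b : ℕ), ?_⟩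
  · apply Nat.div_le_of_le_mul
    exact Nat.mul_le_mul_right _ (Nat.mod_lt _ hb0').le
  · have d1 : ((q * r % b : ℕ):ℝ) + b * (q * r / b : ℕ) = q * r := by exact_mod_cast Nat.mod_add_div (q*r) b
    have d2 : (((q * r % b) * MM / b : ℕ):ℝ) ≤ ((q * r % b : ℕ):ℝ) * MM / b := by
      have := Nat.cast_div_le (α := ℝ) (m := (q * r % b) * MM) (n := b)
      push_cast at this ⊢; exact this
    have d3 : ((q * r % b : ℕ):ℝ) * MM / b ≤ (((q * r % b) * MM / b : ℕ):ℝ) + 1 := by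
      rw [div_le_iff₀ hb0]
      have := (Nat.lt_div_mul_add (a := (q * r % b) * MM) hb0').le
      have h' : (((q * r % b) * MM : ℕ):ℝ) ≤ (((q * r % b) * MM / b * b + b : ℕ) : ℝ) := by exact_mod_cast this
      rw [Nat.cast_mul, Nat.cast_add, Nat.cast_mul _ b] at h'; linarith
    have d4 : ((q * r % b : ℕ):ℝ) * MM / b = MM * (q * r / b) - MM * (q * r / b : ℕ) := by
      have : ((q * r % b : ℕ):ℝ) = q * r - b * (q * r / b : ℕ) := by linarith
      rw [this]; field_simp
    have d5 : |(MM:ℝ) * (q * x / l) - MM * (q * r / b)| ≤ 1 := by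
      have hl : 0 < l := by linarith
      have e1 : (MM:ℝ) * (q * x / l) - MM * (q * r / b) = MM * q * (x * b - r * l) / (l * b) := by
        field_simp
      rw [e1, abs_div, abs_mul, abs_of_pos (show (0:ℝ) < MM * q by linarith), abs_of_pos (by positivity : 0 < l*b),
        div_le_one (by positivity)]
      have e2 : |x * b - r * l| ≤ 35 * e := by
        rw [abs_le] at *
        have : x * b - r * l = l * (S * x - r) - x * (S * l - b) := by ring
        rw [this]
        constructor <;> nlinarith
      calc (MM:ℝ) * q * |x * b - r * l| ≤ MM * q * (35 * e) := by gcongr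
        _ ≤ 0.3 * S := by linarith
        _ ≤ l * b := by nlinarith
    rw [d4] at d2 d3
    rw [abs_le] at d5 ⊢
    rw [Int.cast_natCast]
    constructor <;> linarith

theorem tab_sound (S z Kb q b D : ℕ) (c : List ℕ → Bool) (y : ℝ) (w : ℕ → ℝ) (hS : 0 < S) (hq : 1 ≤ q)
    (hy0 : 0 < y) (hy : y ≤ 0.6181)
    (hz : (z:ℝ) ≤ S * y ∧ S * y ≤ z + 4) (hw : ∀ i, 1 ≤ i → w i = -Real.log (1 - y^i)) (hw2 : ∀ i, 0 ≤ w i ∧ w i ≤ 2)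
    (hb : |S * Real.log al - b| ≤ 5 * (20 * (Kb+2) + 60))
    (hc : 170 * (20 * (Kb+2) + 60) * MM * q ≤ (S:ℝ)) (f : ℕ) (hf : f ≤ D) (L : List ℕ)
    (hL : ∀ i ≤ D - f, ∃ u ∈ L, Pq q (w i) u) (h : tab S z Kb q b D c f (pw S z (D-f)) L = true) :
    ∃ L, c L = true ∧ ∀ i ≤ D, ∃ u ∈ L, Pq q (w i) u := by
  induction f generalizing L with
  | zero => exact ⟨L, h, hL⟩
  | succ f ih =>
    have h : (frc (Nat.add (Nat.div Kb (Nat.sub D f)) 2) fun K => lgs S (pw S z (D-(f+1))) K (fun r =>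
      frc (Nat.div (Nat.mul (Nat.mod (Nat.mul q r) b) MM) b) fun u =>
      frc (Nat.div (Nat.mul (pw S z (D-(f+1))) z) S) fun y' => tab S z Kb q b D c f y' (u :: L)) K (pw S z (D-(f+1))) 0) = true := h
    rw [frc_eq] at h
    have e : D - f = D - (f+1) + 1 := by omega
    obtain ⟨b1, b2⟩ := pw_bd S z y 4 10 hS hy0 hy hz.1 hz.2 (by norm_num) (by norm_num) (by norm_num) (D-(f+1))
    rw [← e] at b1 b2
    obtain ⟨r, h1, h2⟩ := lgs_sound S _ _ _ (y^(D-f)) hS (pow_pos hy0 _) ((pow_le_of_le_one hy0.le (by linarith) (by omega)).trans hy) b1 b2 h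
    rw [frc_eq, frc_eq] at h1
    have e1 : Nat.div (Nat.mul (pw S z (D-(f+1))) z) S = pw S z (D - f) := by rw [e]; rfl
    rw [e1] at h1
    refine ih (by omega) _ ?_ h1
    intro i hi
    rcases Nat.lt_or_ge i (D-f) with hlt | hge
    · obtain ⟨u, hu, hp⟩ := hL i (by omega)
      exact ⟨u, List.mem_cons_of_mem _ hu, hp⟩
    · refine ⟨_, List.mem_cons_self, ?_⟩
      have hi' : i = D - f := by omega
      have : (Nat.add (Nat.div Kb (Nat.sub D f)) 2) ≤ Kb + 2 := Nat.add_le_add_right (Nat.div_le_self _ _) 2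
      have : ((Nat.add (Nat.div Kb (Nat.sub D f)) 2 : ℕ):ℝ) ≤ Kb + 2 := by exact_mod_cast this
      rw [← hi', ← hw i (by omega)] at h2
      exact quant S q b r (20 * (Kb+2) + 60) (w i) hS hq (by linarith [(Nat.cast_nonneg Kb : (0:ℝ) ≤ Kb)]) hb (hw2 i).1 (hw2 i).2
        (h2.trans (by linarith [(Nat.cast_nonneg Kb : (0:ℝ) ≤ Kb)])) hc

theorem all1_sound (s C : ℕ) (L : List ℕ) (h : all1 s C L = true) : ∀ v ∈ L, (s + v) % MM ≤ C := by
  induction L with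
  | nil => simp
  | cons a L ih =>
    have h : gd (Nat.ble (Nat.mod (Nat.add s a) MM) C) (all1 s C L) = true := h
    obtain ⟨h1, h2⟩ := gd_true h
    intro v hv
    rcases List.mem_cons.1 hv with rfl | hv
    · exact Nat.le_of_ble_eq_true h1
    · exact ih h2 v hv

theorem grid_sound (r T : ℕ) (LU LV : List ℕ) (h : grid r T LU LV = true) :
    ∀ u ∈ LU, ∀ v ∈ LV, (r + 2*MM - u - T + v) % MM ≤ MM - 2*T := by
  induction LU with
  | nil => simp
  | cons a L ih =>
    have h : (frc (MM - 2*T) fun C => frc (r + 2*MM - a - T) fun s => gd (all1 s C LV)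
      (List.rec true (fun u _ ih => frc (r + 2*MM - u - T) fun s => gd (all1 s C LV) ih) L)) = true := h
    rw [frc_eq, frc_eq] at h
    obtain ⟨h1, h2⟩ := gd_true h
    intro u hu
    rcases List.mem_cons.1 hu with rfl | hu
    · exact all1_sound _ _ _ h1
    · refine ih ?_ u hu
      unfold grid; rw [frc_eq]; exact h2

noncomputable def rho (i j : ℕ) : ℝ := Real.log ((CC * up i) / (s5 * ua j))

theorem rho_eq (i j : ℕ) : rho i j = Real.log (CC/s5) - (-Real.log (up i)) + (-Real.log (ua j)) := by
  have h1 := s5_b; have h2 := CC_b; have h3 := up_b i; have h4 := ua_b j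
  unfold rho
  rw [Real.log_div (mul_ne_zero (by linarith) (by linarith)) (mul_ne_zero (by linarith) (by linarith)),
    Real.log_mul (by linarith) (by linarith), Real.log_mul (by linarith) (by linarith),
    Real.log_div (by linarith) (by linarith)]
  ring

theorem wU (i : ℕ) : 0 ≤ -Real.log (up i) ∧ -Real.log (up i) ≤ 2 := by
  obtain ⟨h1, h2⟩ := up_b i
  have := Real.one_sub_inv_le_log_of_pos (x := up i) (by linarith)
  have e : (up i)⁻¹ ≤ 1/0.38 := by rw [inv_eq_one_div]; gcongr
  have := Real.log_nonpos (by linarith) h2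
  norm_num at e
  constructor <;> linarith
theorem wV (i : ℕ) : 0 ≤ -Real.log (ua i) ∧ -Real.log (ua i) ≤ 2 := by
  obtain ⟨h1, h2⟩ := ua_b i
  have := Real.one_sub_inv_le_log_of_pos (x := ua i) (by linarith)
  have e : (ua i)⁻¹ ≤ 1/0.45 := by rw [inv_eq_one_div]; gcongr
  have := Real.log_nonpos (by linarith) h2
  norm_num at e
  constructor <;> linarith
theorem wR : 0 ≤ Real.log (CC/s5) ∧ Real.log (CC/s5) ≤ 2 := by
  have h1 := s5_b; have h2 := CC_b
  have e1 : 1 ≤ CC/s5 := by rw [le_div_iff₀ (by linarith)]; linarith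
  have e2 : CC/s5 ≤ 3 := by rw [div_le_iff₀ (by linarith)]; linarith
  have := Real.log_le_sub_one_of_pos (x := CC/s5) (by linarith)
  exact ⟨Real.log_nonneg e1, by linarith⟩

theorem final_pair (q r u v T : ℕ) (x : ℝ) (N : ℤ) (ρ U V : ℝ) (hT : 2*T ≤ MM) (hr : Pq q ρ r) (hu : Pq q U u) (hv : Pq q V v)
    (hg : (r + 2*MM - u - T + v) % MM ≤ MM - 2*T)
    (hx : x = q * (ρ - U + V) / Real.log al) (h : |MM * x + MM * N| ≤ T - 8) : False := by
  obtain ⟨-, k1, h1⟩ := hr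
  obtain ⟨u2, k2, h2⟩ := hu
  obtain ⟨-, k3, h3⟩ := hv
  have e : MM * x = MM * (q * ρ / Real.log al) - MM * (q * U / Real.log al) + MM * (q * V / Real.log al) := by
    rw [hx]; ring
  have hk : |((r:ℝ) - u + v + MM * (k1 - k2 + k3 + N) : ℝ)| ≤ T - 2 := by
    rw [e] at h
    rw [abs_le] at *
    constructor <;> linarith [h1.1, h1.2, h2.1, h2.2, h3.1, h3.2, h.1, h.2]
  set K : ℤ := k1 - k2 + k3 + N with hK
  have hk' : |(r:ℤ) - u + v + MM * K| ≤ T - 2 := by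
    have : ((|(r:ℤ) - u + v + MM * K| : ℤ):ℝ) ≤ ((T - 2 : ℤ):ℝ) := by
      push_cast [hK]; push_cast at hk; exact hk
    exact_mod_cast this
  have hM : MM = 1152921504606846976 := rfl
  rw [abs_le] at hk'
  rw [hM] at hg hT u2 hk'
  clear hk h1 h2 h3 h e hx
  omega

set_option maxHeartbeats 1000000 in
theorem chk_sound (B Kb q X v T D E : ℕ) (ax : Bool) (hq : 1 ≤ q) (hT : 2 * T ≤ MM)
    (h : chk B Kb q X v T D E ax = true) (n m i j : ℕ) (hn : n < X) (hmn : m + 1 ≤ n) (hi : i ≤ D) (hj : j ≤ E)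
    (hax : ax = true → i = 0 ∨ j = 0) : ¬ |lam n m i j| ≤ 50/10^v := by
  intro hl
  unfold chk at h
  rw [frc_eq] at h
  have hS : 0 < 2^B := by positivity
  generalize 2^B = S at *
  obtain ⟨zp, za, o1, o2, h⟩ := newt_sound _ _ h
  have o1 := okp_sound _ _ o1
  have o2 := oka_sound _ _ o2
  obtain ⟨a, b, r, h, ha, hb, hr⟩ := setup_sound _ _ _ _ _ hS o1 o2 h
  rw [frc_eq, frc_eq, frc_eq] at h
  set p := (2*q*a+b)/(2*b)
  set Dh := (q*a-p*b)+(p*b-q*a) with hDh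
  obtain ⟨hp, h⟩ := gd_true h
  obtain ⟨c1, h⟩ := gd_true h
  obtain ⟨c2, h⟩ := gd_true h
  obtain ⟨c3, h⟩ := gd_true h
  rw [frc_eq] at h
  have hp := Nat.le_of_ble_eq_true hp
  have c1 := Nat.le_of_ble_eq_true c1
  have c2 := Nat.le_of_ble_eq_true c2
  have c3 := Nat.le_of_ble_eq_true c3
  have c1' : 170 * (20 * ((Kb:ℝ)+2) + 60) * MM * q ≤ S := by exact_mod_cast c1
  have c2' : 4*(MM:ℝ)*X*(Dh+8*(20*(Kb+2)+60)*q)+S*8 ≤ S*T := by exact_mod_cast c2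
  have c3' : 200*(MM:ℝ)*q + 8*10^v ≤ T*10^v := by exact_mod_cast c3
  have hKb : (0:ℝ) ≤ Kb := Nat.cast_nonneg _
  have hR := quant S q b r (20 * (Kb+2) + 60) _ hS hq (by linarith) hb wR.1 wR.2 hr c1'
  have p0 : 0 < ph⁻¹ := by linarith [phi_b.1]
  have p1 : ph⁻¹ ≤ 0.6181 := phi_b.2.le
  have a0 : 0 < al⁻¹ := by linarith [ali_b.1]
  have a1 : al⁻¹ ≤ 0.6181 := by linarith [ali_b.2]
  have z0U : -Real.log (up 0) = 0 := by simp [up]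
  have z0V : -Real.log (ua 0) = 0 := by simp [ua]
  obtain ⟨LU, h, hU⟩ := tab_sound S zp Kb q b D _ ph⁻¹ (fun i => -Real.log (up i)) hS hq p0 p1 o1
    (fun i hi => by simp only [up]; rw [if_neg (by omega)]) wU hb c1' D le_rfl [0]
    (by intro i hi
        have : i = 0 := by omega
        subst this
        refine ⟨0, by simp, ?_⟩
        simp only [z0U]; exact Pq_zero q) (by rw [Nat.sub_self]; exact h)
  obtain ⟨LV, h, hV⟩ := tab_sound S za Kb q b E _ al⁻¹ (fun i => -Real.log (ua i)) hS hq a0 a1 o2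
    (fun i hi => by simp only [ua]; rw [if_neg (by omega)]) wV hb c1' E le_rfl [0]
    (by intro i hi
        have : i = 0 := by omega
        subst this
        refine ⟨0, by simp, ?_⟩
        simp only [z0V]; exact Pq_zero q) (by rw [Nat.sub_self]; exact h)
  have main : ∃ u v, Pq q (-Real.log (up i)) u ∧ Pq q (-Real.log (ua j)) v ∧
      ((q*r%b)*MM/b + 2*MM - u - T + v) % MM ≤ MM - 2*T := by
    obtain ⟨u, hu, hu'⟩ := hU i hi
    obtain ⟨w, hw, hw'⟩ := hV j hj
    cases ax with
    | false => exact ⟨u, w, hu', hw', grid_sound _ _ _ _ h u hu w hw⟩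
    | true =>
      obtain ⟨g1, g2⟩ := gd_true h
      rcases hax rfl with rfl | rfl
      · exact ⟨0, w, by rw [z0U]; exact Pq_zero q, hw', grid_sound _ _ _ _ g2 0 (by simp) w hw⟩
      · exact ⟨u, 0, hu', by rw [z0V]; exact Pq_zero q, grid_sound _ _ _ _ g1 u hu 0 (by simp)⟩
  obtain ⟨u, w, hu, hw, hg⟩ := main
  clear h hU hV
  have key := fun x N => final_pair q _ u w T x N _ _ _ hT hR hu hw hg
  rw [← rho_eq] at key
  refine key (q * rho i j / Real.log al) (n * p - (m+1) * q) rfl ?_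
  clear key
  have hlam : lam n m i j = n * Real.log ph - (m+1:ℕ) * Real.log al + rho i j := rfl
  obtain ⟨l1, l2⟩ := lb_b
  set l := Real.log al
  set La := Real.log ph
  have hl0 : 0 < l := by linarith
  have hM : (0:ℝ) < MM := by norm_num [MM]
  have hq0 : (0:ℝ) < q := by exact_mod_cast hq
  have hS0 : (0:ℝ) < S := by exact_mod_cast hS
  have e1 : (MM:ℝ) * (q * rho i j / l) + MM * ((n * p - (m+1) * q : ℤ):ℝ)
      = MM * (q * lam n m i j / l) - MM * (n * ((q * La - p * l) / l)) := by
    rw [hlam]; push_cast; field_simp; ring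
  rw [e1]
  have t1 : |(MM:ℝ) * (q * lam n m i j / l)| ≤ (T - 8)/2 := by
    rw [abs_mul, abs_div, abs_mul, abs_of_pos hM, abs_of_pos hq0, abs_of_pos hl0]
    calc (MM:ℝ) * (q * |lam n m i j| / l) ≤ MM * (q * (50/10^v) / 0.5) := by gcongr; linarith
      _ = (100 * MM * q) / 10^v := by ring
      _ ≤ _ := by rw [div_le_iff₀ (by positivity)]; linarith
  have hD : |(q:ℝ) * a - p * b| ≤ Dh := by
    rcases le_total (p*b) (q*a) with hh | hh
    · have : Dh = q*a - p*b := by rw [hDh, Nat.sub_eq_zero_of_le hh, add_zero]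
      rw [this, Nat.cast_sub hh]; push_cast
      rw [abs_of_nonneg]
      have : ((p*b:ℕ):ℝ) ≤ (q*a:ℕ) := by exact_mod_cast hh
      push_cast at this; linarith
    · have : Dh = p*b - q*a := by rw [hDh, Nat.sub_eq_zero_of_le hh, zero_add]
      rw [this, Nat.cast_sub hh]; push_cast
      rw [abs_of_nonpos]
      · linarith
      have : ((q*a:ℕ):ℝ) ≤ (p*b:ℕ) := by exact_mod_cast hh
      push_cast at this; linarith
  have hp' : (p:ℝ) ≤ q := by exact_mod_cast hp
  have hp0 : (0:ℝ) ≤ p := Nat.cast_nonneg _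
  set e : ℝ := 20*(Kb+2)+60 with he
  have he0 : 0 < e := by rw [he]; linarith
  have t2 : S * |q * La - p * l| ≤ Dh + 8 * e * q := by
    rw [show S * |q * La - p * l| = |S * (q * La - p * l)| by rw [abs_mul, abs_of_pos hS0]]
    have e2 : S * (q * La - p * l) = q * (S * La - a) - p * (S * l - b) + (q*a - p*b) := by ring
    rw [e2]
    have i1 : |q * (S * La - a)| ≤ q * (3 * e) := by rw [abs_mul, abs_of_pos hq0]; gcongr
    have i2 : |p * (S * l - b)| ≤ q * (5 * e) := by rw [abs_mul, abs_of_nonneg hp0]; gcongr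
    have := abs_add_le (q * (S * La - a) - p * (S * l - b)) (q*a - p*b)
    have := abs_sub (q * (S * La - a)) (p * (S * l - b))
    linarith
  have t3 : |(MM:ℝ) * (n * ((q * La - p * l) / l))| ≤ (T-8)/2 := by
    rw [abs_mul, abs_mul, abs_div, abs_of_pos hM, abs_of_pos hl0, Nat.abs_cast]
    have hnX : (n:ℝ) ≤ X := by exact_mod_cast hn.le
    have i3 : |q * La - p * l| ≤ (Dh + 8 * e * q)/S := by rw [le_div_iff₀ hS0]; linarith
    calc (MM:ℝ) * (n * (|q * La - p * l| / l)) ≤ MM * (X * (((Dh + 8 * e * q)/S) / 0.5)) := by gcongr; linarith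
      _ = (2 * MM * X * (Dh + 8*e*q)) / S := by ring
      _ ≤ _ := by rw [div_le_iff₀ hS0]; linarith
  have := abs_sub ((MM:ℝ) * (q * lam n m i j / l)) (MM * (n * ((q * La - p * l) / l)))
  linarith

end

section
theorem chk0 : chk 18760 27041 3361972284028155714146861812044404759994792506122855276158103313281665331866239746624623329977537250709110752837338438043101242832885441536516180229439003223710817992808505382657059102294773372512502539243092543125669860579513820507280800621921766099261984165479293924044751862178902465476786488723809599616438704917726858960370241383759673517803403769780918052046940189604659993319689881289058054510732321441234950709276614743952738671596473225808835558424678185561787062770121909842749966304944778335761124265308582128288493757373015424317562275322243752069325994762705364738209821137918578097180405893503981590004478415422777011316735866453212660312985197083715450007011197295433316646478783630077074209346653487268624865069513775614243896047738816469978237128038371410763857915539491388063142364042091734242113560673131660166873922787882252264820803092781784427554382305799622184070363694041206150314932712275412160756940266754198233629270417992411495634500456302929383168985819167511672713940532867065539755354930744797424634875468885900500296581395380684485338116105658184859243874802225971940699514308185832226251353640128080762446853788229673150281523549069108518930444558048088050907658114364995902902910479745668935531417677872494940726412171664828080987444956289475919592656545174151692177068651546796838528843527868234548150952402529424445572972622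9096195768801425037327097728557052705353755794889910507700205426281921117027297818443709450008649109224173521360924650991264519232185997579072755653044074305646972029439655476313985745057844483985239449412417710703277587593769387470472808116211209723165803344961687373338320635837698301564226061527599802196944014269294566897757172180274356806286030956147577845910156779816921794675909506047402011491545126501852081861863681819602569549311019231147001197103987670026318554017529187132243499803333877655506807611108036805284368306256403467081322362233505558943461314602572941288194686841818633906985307338011564962754335315450190133363639905309075577409682387934131132559514576651415629148634666975141605071617617410709718040313866932795727797247586097313161832488773290861750176345583711088370068162727317896436217500615744091462773723791505722611187833714557285751081508335982057944824005096899755801578387588813135399351971571002520235523398158723480517979080851568459451886562343007859833499902640755173932988163147036019122980652967986465329752964575657535447468994731977342720572079702901857114578644467328457163892625971639493786268787585375921908321996052566236078897187516937849478231805901665654567391983609628081322868314160796567649398910988536844949516737051976224474623472688666019829400959013129719460400605727506472348643648689712070529103210004359269216035679107526246257793979287753565846379244155495274004750059386290664571071079753694662744 (10^2817) 2825 27520034973032425 0 0 true = true := by decide +kernel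

end

section
theorem chk1 : chk 3260 4707 200545764026508468455276226852351660216884116147593971577268319580989747353256424601403316226053722810697363941357630622258685077214425039563321598207396584823612667142897946882878098419930088598392351022206932110419325878821001263728409848890481132232643844840238744135108532024535962535004215466223007357018609979229446707243888846124155152654998834120237169620583640944057271882944451637725837134477585317495525116833101872741020523920036796401144417791499163681778442789336 (10^472) 484 15420797491887 2419 1935 true = true := by decide +kernel

end

section
theorem chk2 : chk 720 1047 193050961035726531142366316444101595520951816169996518973956411838349697945662289437622361397508 (2*10^88) 105 44514520901 524 419 false = true := by decide +kernel

end

section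
theorem chk3 : chk 160 240 6308328 525 14 14546014018636 69 55 false = true := by decide +kernel

end

section
theorem bakern (n m i j G t w : ℕ) (hi : i + 5 ≤ G) (hj : j + 5 ≤ G) (ht : 1 ≤ t) (hw : 1 ≤ w)
    (hGt : G * t ≤ w^10) (hX : 64*10^12*G*t*w^2*(n+1) ≤ 3^t) (hmn : m + 1 ≤ n)
    (hLn : 64*10^12*G*t*w^2 ≤ n) (v : ℕ) (hv : 723*10^57*G^3*t^5*w^9 < v) : ¬ |lam n m i j| ≤ 50/10^v := by
  intro h
  have := lam_v n m i j G t w v hi hj ht hw hGt hX hmn hLn h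
  omega

theorem Sol.both {n m d e v : ℕ} (S : Sol n m d e) (hv : 1 ≤ v)
    (h : ∀ i j, i < 5*v → j < 4*v → (i = 0 ∨ j = 0) → ¬ |lam n m i j| ≤ 50/10^v) : d < 5*v ∧ e < 4*v := by
  rcases Nat.lt_or_ge d (5*v) with hd | hd <;> rcases Nat.lt_or_ge e (4*v) with he | he
  · exact ⟨hd, he⟩
  · exact absurd (S.S2a v he) (h d 0 hd (by omega) (Or.inr rfl))
  · exact absurd (S.S2b v hd) (h 0 e (by omega) he (Or.inl rfl))
  · exact absurd (S.S1 v hd he) (h 0 0 (by omega) (by omega) (Or.inl rfl))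

theorem Sol.stage3 {n m d e : ℕ} (S : Sol n m d e) (G t w X : ℕ) (hd : d + 5 ≤ G) (he : e + 5 ≤ G) (ht : 1 ≤ t) (hw : 1 ≤ w)
    (hGt : G * t ≤ w^10) (hX : 64*10^12*G*t*w^2*X ≤ 3^t) (hn : n < X) :
    n < 5 * (723*10^57*G^3*t^5*w^9 + 1) := by
  have hA : 64*10^12*G*t*w^2 ≤ 723*10^57*G^3*t^5*w^9 := by
    have h1 : G ≤ G^3 := Nat.le_self_pow (by norm_num) _
    have h2 : t ≤ t^5 := Nat.le_self_pow (by norm_num) _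
    have h3 : w^2 ≤ w^9 := Nat.pow_le_pow_right hw (by norm_num)
    gcongr <;> norm_num
  by_contra hc
  push Not at hc
  refine bakern n m d e G t w hd he ht hw hGt (le_trans ?_ hX) S.mn (by omega) _ (Nat.lt_succ_self _) (S.S3 _ hc)
  gcongr
  omega

theorem bigA (k : ℕ) (hk3 : 3 ≤ k) : k + 1 ≤ 3^(k-1) := by
  induction k, hk3 using Nat.le_induction with
  | base => norm_num
  | succ k hk ih =>
    have : 3^(k+1-1) = 3 * 3^(k-1) := by
      rw [← pow_succ']; congr 1; omega
    omega

theorem bigB : (10:ℕ)^1184 ≤ 3^2482 := by decide +kernel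

theorem bigC (k τ : ℕ) (hk3 : 3 ≤ k) (hk1 : k^10 < 10*τ) (hτ : 5905 ≤ τ) (P : ℕ) (hP : P ≤ 3^2482) :
    P * (k+1)^1190 ≤ 3^(τ-2) := by
  have a3 : 19683 * k ≤ k^10 := by
    have : 3^9 ≤ k^9 := Nat.pow_le_pow_left hk3 9
    have : 3^9 * k ≤ k^9 * k := Nat.mul_le_mul_right _ this
    calc 19683 * k = 3^9 * k := by norm_num
      _ ≤ k^9 * k := this
      _ = k^10 := by ring
  have a4 : 2482 + (k-1)*1190 ≤ τ - 2 := by omega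
  refine (Nat.mul_le_mul hP (Nat.pow_le_pow_left (bigA k hk3) 1190)).trans ?_
  rw [← pow_mul, ← pow_add]
  exact Nat.pow_le_pow_right (by norm_num) a4

theorem cst1 : (256*10^358 : ℕ) ≤ 10^1184 := by decide +kernel
theorem cst2 : (15*10^58 : ℕ) ≤ 4*10^288 := by decide +kernel
theorem cst3 : (1480704*10^1177 : ℕ) ≤ 15*10^1182 := by decide +kernel
theorem cst4 : (75*10^1182+5 : ℕ) ≤ 10^1184 := by decide +kernel
theorem cst5 : (78084*10^283 : ℕ) ≤ 781*10^285 := by decide +kernel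
theorem cst6 : (5*781*10^285+10 : ℕ) ≤ 4*10^288 := by decide +kernel

set_option exponentiation.threshold 10000 in
set_option maxRecDepth 20000 in
set_option maxHeartbeats 1000000 in
theorem Sol.lvc {n m d e : ℕ} (S : Sol n m d e) (τ w t : ℕ) (hbig : 10^1184 * w^1190 ≤ 3^(τ-2)) (ht : t = 2*τ) (hτ : 5905 ≤ τ)
    (h1 : 3^(τ-2) ≤ n) (h2 : n + 1 ≤ 3^(τ-1)) (hw : 1 ≤ w) (h5t : 5*t ≤ w^10) : False := by
  have ht1 : 1 ≤ t := by omega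
  have ht5 : 3125 * t^5 ≤ w^50 := by
    calc 3125 * t^5 = (5*t)^5 := by ring
      _ ≤ (w^10)^5 := Nat.pow_le_pow_left h5t 5
      _ = w^50 := by ring
  have hA3 : 64*10^12*(4*10^288*w^290)*t*(10^29*w^30)^2 ≤ 3^(τ-2) := by
    refine le_trans ?_ hbig
    have hp : w^360 ≤ w^1190 := Nat.pow_le_pow_right hw (by norm_num)
    calc 64*10^12*(4*10^288*w^290)*t*(10^29*w^30)^2 ≤ 64*10^12*(4*10^288*w^290)*w^10*(10^29*w^30)^2 := by gcongr; omega
      _ = 256*10^358 * w^360 := by ring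
      _ ≤ _ := Nat.mul_le_mul cst1 hp
  have hX : ∀ A, A ≤ 3^(τ-2) → A * (n+1) ≤ 3^t := by
    intro A hA
    calc A * (n+1) ≤ 3^(τ-2) * 3^(τ-1) := Nat.mul_le_mul hA h2
      _ = 3^(τ-2+(τ-1)) := by rw [← pow_add]
      _ ≤ 3^t := Nat.pow_le_pow_right (by norm_num) (by omega)
  have hG : 15*10^58*w^59 ≤ 4*10^288*w^290 :=
    Nat.mul_le_mul cst2 (Nat.pow_le_pow_right hw (by norm_num))
  have hG1 : 5 ≤ 15*10^58*w^59 := by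
    have := Nat.one_le_pow 59 w hw
    omega
  have hw2 : 10^6*w^7 ≤ 10^29*w^30 :=
    Nat.mul_le_mul (by norm_num) (Nat.pow_le_pow_right hw (by norm_num))
  have hw1 : w ≤ 10^6*w^7 := by
    have : w ≤ w^7 := Nat.le_self_pow (by norm_num) _
    omega
  have hA2 : 64*10^12*(15*10^58*w^59)*t*(10^6*w^7)^2 ≤ 3^(τ-2) := le_trans (by gcongr) hA3
  have hA1 : 64*10^12*5*t*w^2 ≤ 3^(τ-2) := le_trans (by gcongr) hA2
  have hp59 := Nat.one_le_pow 59 w hw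
  have hp290 := Nat.one_le_pow 290 w hw
  have hp1190 := Nat.one_le_pow 1190 w hw
  have B1 : 723*10^57*5^3*t^5*w^9 ≤ 2892*10^55*w^59 := by
    calc 723*10^57*5^3*t^5*w^9 = 2892*10^55*w^9*(3125*t^5) := by ring
      _ ≤ 2892*10^55*w^9*w^50 := by gcongr
      _ = _ := by ring
  have B2 : 723*10^57*(15*10^58*w^59)^3*t^5*(10^6*w^7)^9 ≤ 781*10^285*w^290 := by
    calc 723*10^57*(15*10^58*w^59)^3*t^5*(10^6*w^7)^9 = 78084*10^283*w^240*(3125*t^5) := by ring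
      _ ≤ 78084*10^283*w^240*w^50 := by gcongr
      _ = 78084*10^283*w^290 := by ring
      _ ≤ _ := Nat.mul_le_mul_right _ cst5
  have B3 : 723*10^57*(4*10^288*w^290)^3*t^5*(10^29*w^30)^9 ≤ 15*10^1182*w^1190 := by
    calc 723*10^57*(4*10^288*w^290)^3*t^5*(10^29*w^30)^9 = 1480704*10^1177*w^1140*(3125*t^5) := by ring
      _ ≤ 1480704*10^1177*w^1140*w^50 := by gcongr
      _ = 1480704*10^1177*w^1190 := by ring
      _ ≤ _ := Nat.mul_le_mul_right _ cst3
  -- stage 1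
  have s1 : d + 5 ≤ 15*10^58*w^59 ∨ e + 5 ≤ 15*10^58*w^59 := by
    by_contra hcc
    push Not at hcc
    have := bakern n m 0 0 5 t w (by norm_num) (by norm_num) ht1 hw h5t (hX _ hA1) S.mn (hA1.trans h1) (2892*10^55*w^59+1) (by omega)
    exact this (S.S1 _ (by omega) (by omega))
  have hGt2 : (15*10^58*w^59) * t ≤ (10^6*w^7)^10 := by
    calc (15*10^58*w^59) * t = 3*10^58*w^59*(5*t) := by ring
      _ ≤ 3*10^58*w^59*w^10 := by gcongr
      _ = 3*10^58*w^69 := by ring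
      _ ≤ 10^60 * w^70 := Nat.mul_le_mul (by norm_num) (Nat.pow_le_pow_right hw (by norm_num))
      _ = _ := by ring
  have s2 : d + 5 ≤ 4*10^288*w^290 ∧ e + 5 ≤ 4*10^288*w^290 := by
    rcases s1 with hd | he
    · refine ⟨hd.trans hG, ?_⟩
      by_contra hcc
      push Not at hcc
      have := bakern n m d 0 _ t _ hd (by omega) ht1 (hw.trans hw1) hGt2 (hX _ hA2) S.mn (hA2.trans h1) (781*10^285*w^290+1) (by omega)
      exact this (S.S2a _ (by omega))
    · refine ⟨?_, he.trans hG⟩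
      by_contra hcc
      push Not at hcc
      have := bakern n m 0 e _ t _ (by omega) he ht1 (hw.trans hw1) hGt2 (hX _ hA2) S.mn (hA2.trans h1) (781*10^285*w^290+1) (by omega)
      exact this (S.S2b _ (by omega))
  have hGt3 : (4*10^288*w^290) * t ≤ (10^29*w^30)^10 := by
    calc (4*10^288*w^290) * t ≤ 4*10^288*w^290*(5*t) := by gcongr; omega
      _ ≤ 4*10^288*w^290*w^10 := by gcongr
      _ = 4*10^288*w^300 := by ring
      _ ≤ 10^290 * w^300 := Nat.mul_le_mul (by norm_num) le_rfl
      _ = _ := by ring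
  have := bakern n m d e _ t _ s2.1 s2.2 ht1 (hw.trans (hw1.trans hw2)) hGt3 (hX _ hA3) S.mn (hA3.trans h1) (15*10^1182*w^1190+1) (by omega)
  exact this (S.S3 _ (by omega))

end

section
set_option exponentiation.threshold 10000 in
set_option maxRecDepth 20000 in
set_option maxHeartbeats 1000000 in
theorem Sol.lvm {n m d e : ℕ} (S : Sol n m d e) : n < 3^5903 := by
  by_contra hc
  push Not at hc
  have hn0 : n ≠ 0 := by have := S.hn30; omega
  obtain ⟨τ, hτ, h1, h2⟩ : ∃ τ, 5905 ≤ τ ∧ 3^(τ-2) ≤ n ∧ n + 1 ≤ 3^(τ-1) := by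
    refine ⟨Nat.log 3 n + 2, ?_, ?_, ?_⟩
    · have := (Nat.le_log_iff_pow_le (b := 3) (by norm_num) hn0).2 hc
      omega
    · exact Nat.pow_log_le_self 3 hn0
    · exact Nat.lt_pow_succ_log_self (by norm_num) n
  obtain ⟨k, hk3, hk1, hk2⟩ : ∃ k, 3 ≤ k ∧ k^10 < 10*τ ∧ 10*τ ≤ (k+1)^10 := by
    have hex : ∃ w, 10*τ ≤ w^10 := ⟨10*τ, Nat.le_self_pow (by norm_num) _⟩
    have hs := Nat.find_spec hex
    have hm : ∀ u < Nat.find hex, ¬ 10*τ ≤ u^10 := fun u hu => Nat.find_min hex hu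
    generalize Nat.find hex = w at hs hm
    have hw : 4 ≤ w := by
      by_contra hw
      have : w^10 ≤ 3^10 := Nat.pow_le_pow_left (by omega) 10
      norm_num at this
      omega
    obtain ⟨k, rfl⟩ : ∃ k, w = k+1 := ⟨w-1, by omega⟩
    exact ⟨k, by omega, by have := hm k (by omega); omega, hs⟩
  exact S.lvc τ (k+1) (2*τ) (bigC k τ hk3 hk1 hτ _ bigB) rfl hτ h1 h2 (by omega) (by omega)

theorem c0a : 3^5903 ≤ 10^2817 := by decide +kernel

theorem Sol.lv0 {n m d e : ℕ} (S : Sol n m d e) (hn : n < 10^2817) : n < 10^472 := by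
  by_contra hc
  push Not at hc
  have k0 := chk_sound _ _ _ _ _ _ _ _ _ (by decide +kernel) (by decide +kernel) chk0 n m 0 0 hn S.mn le_rfl le_rfl (fun _ => Or.inl rfl)
  have s1 : d < 14125 ∨ e < 11300 := by
    by_contra hcc
    push Not at hcc
    exact k0 (S.S1 2825 (by omega) (by omega))
  have hX : 64*10^12*14135*5960*7^2*(n+1) ≤ 3^5960 :=
    (Nat.mul_le_mul_left _ (show n+1 ≤ 10^2817 from hn)).trans (by decide +kernel)
  have hL : 64*10^12*14135*5960*7^2 ≤ n := le_trans (by decide +kernel) hc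
  have hv : 723*10^57*14135^3*5960^5*7^9 < 63*10^97 := by decide +kernel
  have s2 : d + 5 ≤ 32*10^98 ∧ e + 5 ≤ 32*10^98 := by
    rcases s1 with h | h
    · refine ⟨by omega, ?_⟩
      by_contra hcc
      exact bakern n m d 0 14135 5960 7 (by omega) (by omega) (by norm_num) (by norm_num) (by norm_num) hX S.mn hL _ hv (S.S2a _ (by omega))
    · refine ⟨?_, by omega⟩
      by_contra hcc
      exact bakern n m 0 e 14135 5960 7 (by omega) (by omega) (by norm_num) (by norm_num) (by norm_num) hX S.mn hL _ hv (S.S2b _ (by omega))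
  have := S.stage3 (32*10^98) 6200 (22*10^9) (10^2817) s2.1 s2.2 (by norm_num) (by norm_num) (by decide +kernel) (by decide +kernel) hn
  exact absurd (hc.trans this.le) (by decide +kernel)

theorem Sol.lv1 {n m d e : ℕ} (S : Sol n m d e) (hn : n < 10^472) : n < 2*10^88 := by
  have hb := S.both (v := 484) (by norm_num) (fun i j hi hj hij =>
    chk_sound _ _ _ _ _ _ _ _ _ (by decide +kernel) (by decide +kernel) chk1 n m i j hn S.mn (by omega) (by omega) (fun _ => hij))
  have h1 := S.stage3 2425 1040 5 (10^472) (by omega) (by omega) (by norm_num) (by norm_num) (by decide +kernel) (by decide +kernel) hn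
  have h1' := h1.trans_le (show _ ≤ 2*10^92 by decide +kernel)
  have h2 := S.stage3 2425 240 4 (2*10^92) (by omega) (by omega) (by norm_num) (by norm_num) (by decide +kernel) (by decide +kernel) h1'
  exact h2.trans_le (by decide +kernel)

theorem Sol.lv2 {n m d e : ℕ} (S : Sol n m d e) (hn : n < 2*10^88) : n < 525 := by
  have k := fun i j hi hj => chk_sound _ _ _ _ _ _ _ _ _ (by decide +kernel) (by decide +kernel) chk2 n m i j hn S.mn hi hj (by simp)
  have hb := S.both (v := 105) (by norm_num) (fun i j hi hj _ => k i j (by omega) (by omega))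
  by_contra hc
  exact k d e (by omega) (by omega) (S.S3 105 (by omega))

theorem Sol.lv3 {n m d e : ℕ} (S : Sol n m d e) (hn : n < 525) : n < 70 := by
  have k := fun i j hi hj => chk_sound _ _ _ _ _ _ _ _ _ (by decide +kernel) (by decide +kernel) chk3 n m i j hn S.mn hi hj (by simp)
  have hb := S.both (v := 14) (by norm_num) (fun i j hi hj _ => k i j (by omega) (by omega))
  by_contra hc
  exact k d e (by omega) (by omega) (S.S3 14 (by omega))

theorem Sol.lt70 {n m d e : ℕ} (S : Sol n m d e) : n < 70 :=
  S.lv3 (S.lv2 (S.lv1 (S.lv0 (S.lvm.trans_le c0a))))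

end

section
def lfib : List ℕ := [1, 2, 3, 5, 8, 13, 21, 34, 55, 89, 144, 233, 377, 610, 987, 1597, 2584, 4181, 6765, 10946, 17711, 28657, 46368, 75025, 121393, 196418, 317811, 514229, 832040, 1346269, 2178309, 3524578, 5702887, 9227465, 14930352, 24157817, 39088169, 63245986, 102334155, 165580141, 267914296, 433494437, 701408733, 1134903170, 1836311903, 2971215073, 4807526976, 7778742049, 12586269025, 20365011074, 32951280099, 53316291173, 86267571272, 139583862445, 225851433717, 365435296162, 591286729879, 956722026041, 1548008755920, 2504730781961, 4052739537881, 6557470319842, 10610209857723, 17167680177565, 27777890035288, 44945570212853, 72723460248141, 117669030460994]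

def ltrib : List ℕ := [1, 2, 4, 7, 13, 24, 44, 81, 149, 274, 504, 927, 1705, 3136, 5768, 10609, 19513, 35890, 66012, 121415, 223317, 410744, 755476, 1389537, 2555757, 4700770, 8646064, 15902591, 29249425, 53798080, 98950096, 181997601, 334745777, 615693474, 1132436852, 2082876103, 3831006429, 7046319384, 12960201916, 23837527729, 43844049029, 80641778674, 148323355432, 272809183135, 501774317241, 922906855808, 1697490356184, 3122171529233, 5742568741225, 10562230626642, 19426970897100, 35731770264967, 65720971788709, 120879712950776, 222332455004452, 408933139743937, 752145307699165, 1383410902447554]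

def tP (k : ℕ) : ℕ × ℕ × ℕ := Nat.rec (0, 1, 1) (fun _ p => (p.2.1, p.2.2, p.2.2 + p.2.1 + p.1)) k

theorem tP_eq (k : ℕ) : trib k = ((tP k).1 : ℤ) ∧ trib (k+1) = ((tP k).2.1 : ℤ) ∧ trib (k+2) = ((tP k).2.2 : ℤ) := by
  induction k with
  | zero => exact ⟨rfl, rfl, rfl⟩
  | succ k ih =>
    obtain ⟨h1, h2, h3⟩ := ih
    refine ⟨h2, h3, ?_⟩
    show trib (k+3) = ((((tP k).2.2 + (tP k).2.1 + (tP k).1 : ℕ)) : ℤ)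
    rw [trib_rec, h1, h2, h3]; push_cast; ring

theorem lfib_eq : lfib = (List.range 68).map (fun k => Nat.fib (k+2)) := by decide +kernel
theorem ltrib_eq : ltrib = (List.range 58).map (fun k => (tP k).2.2) := by decide +kernel

theorem mem_lfib (n : ℕ) (h : 2 ≤ n) (h' : n < 70) : Nat.fib n ∈ lfib := by
  rw [lfib_eq, List.mem_map]
  exact ⟨n-2, by simp; omega, by congr 1; omega⟩

theorem mem_ltrib (m : ℕ) (h : 2 ≤ m) (h' : m < 60) : ∃ x ∈ ltrib, trib m = (x:ℤ) := by
  refine ⟨(tP (m-2)).2.2, ?_, ?_⟩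
  · rw [ltrib_eq, List.mem_map]
    exact ⟨m-2, by simp; omega, rfl⟩
  · have := (tP_eq (m-2)).2.2
    rwa [Nat.sub_add_cancel h] at this

def okc (a t : ℕ) : Bool :=
  (Nat.beq a t || Nat.beq a (t+1) || Nat.beq (a+1) t || Nat.beq (a+2) t || Nat.beq (a+3) t || Nat.beq a (t+4)
  || Nat.beq (a+5) t || Nat.beq a (t+6) || Nat.beq a (t+8) || Nat.beq (a+10) t || Nat.beq a (t+11) || Nat.beq (a+11) t
  || Nat.beq (a+22) t || Nat.beq (a+23) t || Nat.beq (a+41) t || Nat.beq (a+60) t || Nat.beq (a+271) t)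

noncomputable def allR (p : ℕ → Bool) (l : List ℕ) : Bool := List.rec true (fun x _ ih => gd (p x) ih) l

theorem allR_sound (p : ℕ → Bool) (l : List ℕ) (h : allR p l = true) : ∀ x ∈ l, p x = true := by
  induction l with
  | nil => simp
  | cons a l ih =>
    have h : gd (p a) (allR p l) = true := h
    obtain ⟨h1, h2⟩ := gd_true h
    intro x hx
    rcases List.mem_cons.1 hx with rfl | hx
    · exact h1
    · exact ih h2 x hx

noncomputable def neqs (w : ℕ) (l : List ℕ) : Bool := List.rec true (fun x _ ih => Bool.rec ih false (Nat.beq x w)) l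

theorem neqs_sound (w : ℕ) (l : List ℕ) (h : neqs w l = true) : w ∉ l := by
  induction l with
  | nil => simp
  | cons a l ih =>
    have h : (Bool.rec (neqs w l) false (Nat.beq a w) : Bool) = true := h
    cases hb : Nat.beq a w with
    | true => rw [hb] at h; cases h
    | false =>
      rw [hb] at h
      have := ih h
      have hne := Nat.ne_of_beq_eq_false hb
      simp only [List.mem_cons, not_or]
      exact ⟨fun h => hne h.symm, this⟩

noncomputable def impB (a b : Bool) : Bool := Bool.rec true b a
theorem impB_true {a b : Bool} (h : impB a b = true) (ha : a = true) : b = true := by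
  subst ha; exact h

noncomputable def fin_check : Bool :=
  allR (fun a => allR (fun t => impB (Nat.ble a (3*t)) (impB (Nat.ble t (3*a)) (or (okc a t)
    (allR (fun b => impB (Nat.ble (b+1) a) (impB (Nat.ble (a+1) (t+b)) (frc (t + b - a) fun w => neqs w ltrib))) lfib)))) ltrib) lfib

theorem fin_check_true : fin_check = true := by decide +kernel

theorem trib_pos (k : ℕ) : 0 ≤ trib k ∧ 0 < trib (k+1) ∧ 0 < trib (k+2) := by
  induction k with
  | zero => exact ⟨by decide, by decide, by decide⟩
  | succ k ih => exact ⟨ih.2.1.le, ih.2.2, by rw [trib_rec]; linarith⟩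

theorem trib_strict : StrictMono (fun k => trib (k+2)) := by
  apply strictMono_nat_of_lt_succ
  intro k
  show trib (k+2) < trib (k+3)
  have := trib_pos k
  rw [trib_rec]; linarith

theorem trib_lt {a b : ℕ} (ha : 2 ≤ a) (h : a < b) : trib a < trib b := by
  have := trib_strict (a := a-2) (b := b-2) (by omega)
  simp only at this
  rwa [Nat.sub_add_cancel ha, Nat.sub_add_cancel (by omega)] at this

theorem key_dir (c : ℤ) (n m n₁ m₁ : ℕ) (h1 : 2 ≤ n) (h2 : 2 ≤ m) (h3 : 2 ≤ n₁) (h4 : 2 ≤ m₁) (h : n₁ < n)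
    (hc1 : c = (Nat.fib n : ℤ) - trib m) (hc2 : c = (Nat.fib n₁ : ℤ) - trib m₁) :
    c ∈ ({0, 1, -1, -2, -3, 4, -5, 6, 8, -10, 11, -11, -22, -23, -41, -60, -271} : Set ℤ) := by
  have hf : Nat.fib n₁ < Nat.fib n := by
    have := Nat.fib_add_two_strictMono (show n₁ - 2 < n - 2 by omega)
    simp only at this
    rwa [Nat.sub_add_cancel h3, Nat.sub_add_cancel h1] at this
  have hf' : (Nat.fib n₁ : ℤ) < Nat.fib n := by exact_mod_cast hf
  have hm : m₁ < m := by
    by_contra hm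
    push Not at hm
    rcases hm.lt_or_eq with hm | hm
    · linarith [trib_lt h2 hm]
    · subst hm; linarith
  have hn70 : n < 70 := by
    by_contra hn
    have S : Sol n m (n - n₁) (m - m₁) := by
      refine ⟨by omega, by omega, by omega, by omega, by omega, ?_⟩
      rw [show n - (n - n₁) = n₁ by omega, show m - (m - m₁) = m₁ by omega, ← hc1, ← hc2]
    exact hn S.lt70
  have hfp : (0:ℤ) ≤ Nat.fib n₁ := by positivity
  -- sizes
  obtain ⟨k, rfl⟩ : ∃ k, m = k + 3 := ⟨m - 3, by omega⟩
  have hle : trib m₁ ≤ trib (k+2) := by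
    rcases (show m₁ ≤ k + 2 by omega).lt_or_eq with h | h
    · exact (trib_lt h4 h).le
    · rw [h]
  have hup : trib (k+1) + trib k ≤ (Nat.fib n : ℤ) := by
    have := trib_rec k
    linarith
  have hm60 : k + 3 < 60 := by
    by_contra hm60
    have e1 : Nat.fib n ≤ Nat.fib 69 := Nat.fib_mono (by omega)
    have e2 : Nat.fib 69 = 117669030460994 := by decide +kernel
    have e3 : trib 58 ≤ trib (k+1) := by
      rcases (show 58 ≤ k + 1 by omega).lt_or_eq with h | h
      · exact (trib_lt (by norm_num) h).le
      · rw [h]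
    have e4 : (117669030460994:ℤ) < trib 58 := by
      rw [(tP_eq 58).1]; decide +kernel
    have e5 := (trib_pos k).1
    have e6 : (Nat.fib n : ℤ) ≤ 117669030460994 := by rw [e2] at e1; exact_mod_cast e1
    linarith
  obtain ⟨t, ht, et⟩ := mem_ltrib _ h2 hm60
  obtain ⟨s, hs, es⟩ := mem_ltrib _ h4 (by omega)
  have ha := mem_lfib n h1 hn70
  have hb := mem_lfib n₁ h3 (by omega)
  have hd2 : trib (k+2) ≤ 2 * (trib (k+1) + trib k) := by
    rcases k with _ | j
    · decide
    · have e := trib_rec j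
      have := trib_pos j
      have : trib j ≤ trib (j+2) := by rw [← sub_nonneg]; rcases j with _ | i
                                       · decide
                                       · have := trib_pos i; rw [show i+1+2 = i+3 from rfl, trib_rec]; linarith
      show trib (j+3) ≤ 2 * (trib (j+2) + trib (j+1))
      linarith
  have ht3 : (t:ℤ) ≤ 3 * Nat.fib n := by
    rw [← et, trib_rec]; linarith
  have hs1 : 0 < trib m₁ := by
    have := (trib_pos (m₁ - 1)).2.1
    rwa [show m₁ - 1 + 1 = m₁ by omega] at this
  have ha3 : (Nat.fib n : ℤ) ≤ 3 * t := by
    obtain ⟨j, rfl⟩ : ∃ j, n = j + 3 := ⟨n - 3, by omega⟩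
    have f1 : Nat.fib n₁ ≤ Nat.fib (j+2) := Nat.fib_mono (by omega)
    have f2 : Nat.fib (j+3) = Nat.fib (j+1) + Nat.fib (j+2) := Nat.fib_add_two
    have f3 : Nat.fib (j+2) = Nat.fib j + Nat.fib (j+1) := Nat.fib_add_two
    have f4 : Nat.fib j ≤ Nat.fib (j+1) := Nat.fib_mono (by omega)
    omega
  have q1 := allR_sound _ _ (allR_sound _ _ fin_check_true _ ha) _ ht
  have q2 := impB_true (impB_true q1 (Nat.ble_eq_true_of_le (by omega))) (Nat.ble_eq_true_of_le (by omega))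
  rw [Bool.or_eq_true] at q2
  rcases q2 with q2 | q2
  · simp only [okc, Bool.or_eq_true, Nat.beq_eq] at q2
    simp only [Set.mem_insert_iff, Set.mem_singleton_iff]
    omega
  · exfalso
    have q3 := impB_true (impB_true (allR_sound _ _ q2 _ hb) (Nat.ble_eq_true_of_le (by omega))) (Nat.ble_eq_true_of_le (by omega))
    rw [frc_eq] at q3
    refine neqs_sound _ _ q3 ?_
    rw [show t + Nat.fib n₁ - Nat.fib n = s by omega]
    exact hs

end

/-- An integer `c` has at least two representations of the form `F n - T m` with
`n, m ≥ 2` iff `c` lies in the given finite set. -/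
theorem fib_sub_trib_two_representations (c : ℤ) :
    (∃ n m n₁ m₁ : ℕ, 2 ≤ n ∧ 2 ≤ m ∧ 2 ≤ n₁ ∧ 2 ≤ m₁ ∧ (n, m) ≠ (n₁, m₁) ∧
      c = (Nat.fib n : ℤ) - trib m ∧ c = (Nat.fib n₁ : ℤ) - trib m₁) ↔
    c ∈ ({0, 1, -1, -2, -3, 4, -5, 6, 8, -10, 11, -11, -22, -23, -41, -60, -271} : Set ℤ) := by
  constructor
  · rintro ⟨n, m, n₁, m₁, h1, h2, h3, h4, hne, hc1, hc2⟩
    rcases lt_trichotomy n n₁ with h | h | h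
    · exact key_dir c n₁ m₁ n m h3 h4 h1 h2 h hc2 hc1
    · exfalso
      subst h
      have : trib m = trib m₁ := by linarith
      rcases lt_trichotomy m m₁ with h | h | h
      · linarith [trib_lt h2 h]
      · exact hne (by rw [h])
      · linarith [trib_lt h4 h]
    · exact key_dir c n m n₁ m₁ h1 h2 h3 h4 h hc1 hc2
  · intro h
    simp only [Set.mem_insert_iff, Set.mem_singleton_iff] at h
    rcases h with rfl | rfl | rfl | rfl | rfl | rfl | rfl | rfl | rfl | rfl | rfl | rfl | rfl | rfl | rfl | rfl | rfl
    · exact ⟨2, 2, 3, 3, by decide +kernel⟩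
    · exact ⟨3, 2, 4, 3, by decide +kernel⟩
    · exact ⟨2, 3, 4, 4, by decide +kernel⟩
    · exact ⟨3, 4, 5, 5, by decide +kernel⟩
    · exact ⟨2, 4, 8, 7, by decide +kernel⟩
    · exact ⟨5, 2, 6, 4, by decide +kernel⟩
    · exact ⟨3, 5, 6, 6, by decide +kernel⟩
    · exact ⟨6, 3, 7, 5, by decide +kernel⟩
    · exact ⟨8, 6, 11, 9, by decide +kernel⟩
    · exact ⟨4, 6, 9, 8, by decide +kernel⟩
    · exact ⟨7, 3, 10, 8, by decide +kernel⟩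
    · exact ⟨3, 6, 7, 7, by decide +kernel⟩
    · exact ⟨3, 7, 26, 21, by decide +kernel⟩
    · exact ⟨2, 7, 8, 8, by decide +kernel⟩
    · exact ⟨4, 8, 13, 11, by decide +kernel⟩
    · exact ⟨8, 9, 11, 10, by decide +kernel⟩
    · exact ⟨4, 11, 13, 12, by decide +kernel⟩
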